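/- Let q be a prime power and n, i, k, ℓ integers with 1 ≤ i < k and 4k ≤ n. Let f(X) = X^{q^i} + Σ_{j=i+1}^{k−1} α_j X^{q^j} + b X^{q^k} ∈ 𝔽_{q^n}[X] with b ≠ 0, and suppose that f has exactly q^{ℓ−i} distinct roots in an algebraic closure of 𝔽_{q^n}. If either gcd(k, n) > 1, or q^{ℓ+i} + q^ℓ − q^{2i} − q^i + (q^i − q)²/4 < (2/9)·(q^k − q)², then there exist nonzero x, y ∈ 𝔽_{q^n} with y/x ∉ 𝔽_q and f(x)·y = f(y)·x; in particular, f is not scattered of index 0. -/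

import Mathlib

/-!
Write `f = ∑ c_j X ^ q ^ j` with `i ≤ j ≤ k`. The pairs `x, y` with `f(x) y = f(y) x` form a plane curve
containing the lines through the origin with slope in `𝔽_q`. Removing these lines leaves the curve
`G = (f(x) y - f(y) x) / (x (x ^ (q - 1) y - y ^ q))` of degree `q ^ k - q`, and the claim is that `G` has
a point over `F = 𝔽_{q^n}` whose slope `y / x` is not in `𝔽_q`. At a point of `G` with slope in `𝔽_q`,
or with `x = 0`, one has `f(x) = 0` (`Scat.ev_curve_of_slope`), so it suffices to find a point of `G` not
lying over a zero of `f`.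

In coordinates `y = x t` the equation of `G` is `∑ c_j b_j(t) x ^ (q ^ j - q)` with
`b_j = (t ^ q ^ j - t) / (t ^ q - t)`. Let `θ ∈ 𝔽_{q^k}` with `θ ∉ 𝔽_{q^i}`. It is a simple zero of the top
coefficient, so exactly one absolutely irreducible component `H` passes through the point of slope `θ` at
infinity, and setting `t = θ` bounds the degree of the cofactor by `q ^ (k - 1) - q`. Hence `H` has more than
half of the degree of `G` (`Scat.exists_big_factor`), is therefore its own Frobenius conjugate, and is
defined over `F` (`Scat.descend`). Its degree is at most `q ^ k - q` and `F` has at least `q ^ (4 k)` elements,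
so the Hasse-Weil bound gives it an `F`-rational point not over a zero of `f`.

The Hasse-Weil lower bound (`Scat.exists_point`) is proved from first principles. Stepanov's method gives
at least `Q ^ r - C √Q ^ r` points over every extension of degree `r`, with an unspecified constant `C`
(`Scat.stepanov`). Let `K` be the function field, `O` and `P` the integral closures of `F[x]` and of the
valuation ring of `F(x)` at infinity. The spaces `L(D)` and `H¹(D)` of a divisor are the intersection and
the cokernel of the sum of two lattices over `O` and `P`; comparing indices yields Riemann's formula
(`Scat.riemann`), and a nonzero functional on `H¹(D)` embeds `L(D)` into the dual of `H¹(0)`, so that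
`H¹(D) = 0` for large degree (`Scat.riemann_large`). Counting effective divisors shows that the zeta function
is a polynomial of degree at most `2 g + 1` divided by `(1 - T) (1 - Q T)`, where `|H¹(0)| ≤ Q ^ g`, and
`g = N (N - 1) / 2` is allowed for a plane curve of degree `N` (`Scat.TT_index`). The lower bounds over all
extensions bound the reciprocal roots of the numerator by `√Q`, which removes the constant `C`
(`Scat.weil_lower`, `Scat.weil_places`).
-/

open scoped Classical
set_option linter.unusedVariables false
set_option linter.style.longLine false

/-! ### Power sums and the zeta function -/

namespace Scat
open Filter Topology

/-- Numbers whose power sums have real part at most `C s ^ r` are bounded by `s`: by simultaneous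
recurrence of the arguments there are arbitrarily large `r` for which every `ω j ^ r` points almost in
the positive direction, so that no cancellation occurs. -/
lemma norm_le_of_powerSum {ι : Type*} [Fintype ι] (ω : ι → ℂ) (s C : ℝ) (hs : 0 < s)
    (h : ∀ r : ℕ, 1 ≤ r → (∑ j, ω j ^ r).re ≤ C * s ^ r) (j₀ : ι) : ‖ω j₀‖ ≤ s := by
  by_contra! hlt
  set u : ι → Circle := fun j => Circle.exp (Complex.arg (ω j)) with hu
  have hω : ∀ j, ω j = (‖ω j‖ : ℂ) * (u j : ℂ) := by
    intro j
    simp [hu, Circle.coe_exp, Complex.norm_mul_exp_arg_mul_I]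
  have hcl := mapClusterPt_one_atTop_pow u
  have hopen : {v : ι → Circle | ∀ j, (1 / 2 : ℝ) < (v j : ℂ).re} ∈ 𝓝 (1 : ι → Circle) := by
    have : {v : ι → Circle | ∀ j, (1 / 2 : ℝ) < (v j : ℂ).re} =
        ⋂ j, {v : ι → Circle | (1 / 2 : ℝ) < (v j : ℂ).re} := by
      ext v; simp
    rw [this]
    refine (isOpen_iInter_of_finite fun j => ?_).mem_nhds ?_
    · exact isOpen_lt continuous_const
        (Complex.continuous_re.comp (continuous_subtype_val.comp (continuous_apply j)))
    · simp only [Set.mem_iInter, Set.mem_ofPred_eq, Pi.one_apply, Circle.coe_one, Complex.one_re]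
      intro _; norm_num
  have hfreq := hcl.frequently hopen
  have hev : ∀ᶠ r : ℕ in atTop, 2 * C < (‖ω j₀‖ / s) ^ r :=
    (tendsto_pow_atTop_atTop_of_one_lt ((one_lt_div hs).2 hlt)).eventually_gt_atTop _
  obtain ⟨r, hr1, hr2, hr3⟩ := (hfreq.and_eventually (hev.and (eventually_ge_atTop 1))).exists
  have h1 := h r hr3
  have h2 : ∀ j, (ω j ^ r).re ≥ ‖ω j‖ ^ r * (1 / 2) := by
    intro j
    conv_lhs => rw [hω j, mul_pow, ← Complex.ofReal_pow, Complex.re_ofReal_mul]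
    have := hr1 j
    simp only [Pi.pow_apply, Circle.coe_pow] at this
    exact mul_le_mul_of_nonneg_left this.le (by positivity)
  have h3 : (∑ j, ω j ^ r).re ≥ ‖ω j₀‖ ^ r * (1 / 2) := by
    rw [Complex.re_sum]
    refine le_trans (h2 j₀) (Finset.single_le_sum (f := fun j => (ω j ^ r).re) ?_ (Finset.mem_univ j₀))
    intro j _
    exact le_trans (by positivity) (h2 j)
  rw [div_pow, lt_div_iff₀ (by positivity)] at hr2
  nlinarith


open PowerSeries in
/-- The series `∑_{r ≥ 1} a^r X^r`. -/
noncomputable def geo (a : ℂ) : PowerSeries ℂ := PowerSeries.mk fun r => if r = 0 then 0 else a ^ r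

open PowerSeries in
lemma geo_mul (a : ℂ) : (1 - C a * X) * geo a = C a * X := by
  ext n
  rcases n with _ | n
  · simp [geo]
  · rw [sub_mul, one_mul, map_sub, mul_assoc, coeff_C_mul, coeff_succ_X_mul, coeff_C_mul]
    rcases n with _ | n
    · simp [geo]
    · simp [geo, coeff_X, pow_succ]; ring

open PowerSeries in
/-- Logarithmic derivative of `∏ (1 - a X)`, free of denominators. -/
lemma log_deriv_prod (s : Multiset ℂ) :
    X * derivative ℂ (s.map fun a => (1 - C a * X : PowerSeries ℂ)).prod =
      - ((s.map fun a => (1 - C a * X : PowerSeries ℂ)).prod * (s.map geo).sum) := by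
  induction s using Multiset.induction_on with
  | empty => simp
  | cons a s ih =>
    simp only [Multiset.map_cons, Multiset.prod_cons, Multiset.sum_cons]
    rw [Derivation.leibniz, smul_eq_mul, smul_eq_mul, mul_add, mul_left_comm, ih]
    have : derivative ℂ (1 - C a * X : PowerSeries ℂ) = - C a := by
      rw [map_sub, Derivation.leibniz]
      simp
    rw [this]
    linear_combination ((s.map fun a => (1 - C a * X : PowerSeries ℂ)).prod) * geo_mul a

/-- Factorisation of the numerator of a zeta function into its reciprocal roots. -/
lemma poly_eq_prod (L : Polynomial ℂ) (h0 : L.coeff 0 = 1) :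
    ∃ s : Multiset ℂ, s.card ≤ L.natDegree ∧
      L = (s.map fun a => (1 - Polynomial.C a * Polynomial.X)).prod := by
  refine ⟨L.roots.map (·⁻¹), by simpa using L.card_roots', ?_⟩
  have hL : L ≠ 0 := by rintro rfl; simp at h0
  have hs := (IsAlgClosed.splits L).eq_prod_roots
  have hr : ∀ a ∈ L.roots, a ≠ 0 := by
    rintro a ha rfl
    rw [Polynomial.mem_roots hL, Polynomial.IsRoot.def, ← Polynomial.coeff_zero_eq_eval_zero, h0] at ha
    exact one_ne_zero ha
  have key : ∀ t : Multiset ℂ, (∀ a ∈ t, a ≠ 0) →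
      (t.map fun a => Polynomial.X - Polynomial.C a).prod =
      Polynomial.C (t.map fun a => -a).prod *
        (t.map fun a => (1 - Polynomial.C a⁻¹ * Polynomial.X)).prod := by
    intro t
    induction t using Multiset.induction_on with
    | empty => simp
    | cons a t ih =>
      intro h
      simp only [Multiset.map_cons, Multiset.prod_cons, Polynomial.C_mul]
      rw [ih fun b hb => h b (Multiset.mem_cons_of_mem hb)]
      have : (Polynomial.X - Polynomial.C a : Polynomial ℂ) =
          Polynomial.C (-a) * (1 - Polynomial.C a⁻¹ * Polynomial.X) := by
        rw [mul_sub, mul_one, ← mul_assoc, ← Polynomial.C_mul, neg_mul,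
          mul_inv_cancel₀ (h a (Multiset.mem_cons_self a t))]
        simp; ring
      rw [this]; ring
  rw [key _ hr, ← mul_assoc, ← Polynomial.C_mul] at hs
  rw [Multiset.map_map]
  have hc : L.leadingCoeff * (L.roots.map fun a => -a).prod = 1 := by
    have := congrArg (Polynomial.coeff · 0) hs
    simp only [h0, Polynomial.coeff_C_mul] at this
    rw [this, Polynomial.coeff_zero_multiset_prod]
    simp
  rw [hc, map_one, one_mul] at hs
  exact hs

open PowerSeries in
/-- The passage from a Stepanov-type bound to the Weil bound. `A n` is the number of effective divisors
of degree `n` and `N r` the number of points over the extension of degree `r`; `hAN` is the logarithmic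
derivative of the zeta function `∑ A n X ^ n`, and `hrec` says that it is a polynomial of degree at
most `m` divided by `(1 - X) (1 - Q X)`. The lower bounds `hSt` for all `r` force the reciprocal roots
of the numerator to have absolute value at most `√Q`, whatever the constant `c`, and this is then used
for `r = 1`. -/
lemma weil_lower (Q : ℕ) (hQ : 1 ≤ Q) (m : ℕ) (A N : ℕ → ℕ) (hA0 : A 0 = 1)
    (hAN : ∀ n, n * A n = ∑ x ∈ Finset.HasAntidiagonal.antidiagonal n, N x.1 * A x.2) (hN0 : N 0 = 0)
    (hrec : ∀ n, m ≤ n + 1 → (A (n + 2) : ℤ) - (Q + 1) * A (n + 1) + Q * A n = 0)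
    (hm : 1 ≤ m)
    (c : ℝ) (hSt : ∀ r, 1 ≤ r → (Q : ℝ) ^ r - c * Real.sqrt Q ^ r ≤ N r) :
    (Q : ℝ) + 1 - m * Real.sqrt Q ≤ N 1 := by
  set Z : ℂ⟦X⟧ := PowerSeries.mk fun n => (A n : ℂ) with hZ
  set T : ℂ⟦X⟧ := PowerSeries.mk fun n => (N n : ℂ) with hT
  have hZT : X * derivative ℂ Z = T * Z := by
    ext n
    rw [coeff_mul (φ := T)]
    rcases n with _ | n
    · simp [hT, hN0]
    · rw [coeff_succ_X_mul, coeff_derivative]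
      have := congrArg (Nat.cast (R := ℂ)) (hAN (n + 1))
      push_cast at this
      simp only [hZ, hT, coeff_mk]
      rw [← this]; ring
  set U : ℂ⟦X⟧ := (({1, (Q : ℂ)} : Multiset ℂ).map fun a => (1 - C a * X : PowerSeries ℂ)).prod with hU
  have hUd := log_deriv_prod {1, (Q : ℂ)}
  rw [← hU] at hUd
  have hU' : U = 1 - C ((Q : ℂ) + 1) * X + C (Q : ℂ) * X * X := by
    simp [hU]; ring
  -- The numerator `Z * U` of the zeta function is a polynomial of degree at most `m`.
  have hco : ∀ n, m < n → coeff n (Z * U) = 0 := by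
    intro n hn
    obtain ⟨n, rfl⟩ : ∃ l, n = l + 2 := ⟨n - 2, by omega⟩
    have h1 : Z * U = Z - C ((Q : ℂ) + 1) * (X * Z) + C (Q : ℂ) * (X * (X * Z)) := by rw [hU']; ring
    rw [h1, map_add, map_sub, coeff_C_mul, coeff_C_mul, coeff_succ_X_mul, coeff_succ_X_mul,
      coeff_succ_X_mul]
    simp only [hZ, coeff_mk]
    exact_mod_cast congrArg (Int.cast (R := ℂ)) (hrec n (by omega))
  set L : Polynomial ℂ := trunc (m + 1) (Z * U) with hL
  have hLZ : (L : ℂ⟦X⟧) = Z * U := by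
    ext n
    rw [Polynomial.coeff_coe, coeff_trunc]
    split_ifs with h
    · rfl
    · rw [hco n (by omega)]
  have hL0 : L.coeff 0 = 1 := by
    rw [← Polynomial.coeff_coe, hLZ, hU']
    simp [hZ, hA0]
  obtain ⟨s, hs1, hs2⟩ := poly_eq_prod L hL0
  have hsm : s.card ≤ m := hs1.trans (Nat.lt_succ_iff.1 (natDegree_trunc_lt _ _))
  have hs3 : Z * U = (s.map fun a => (1 - C a * X : PowerSeries ℂ)).prod := by
    rw [← hLZ, hs2, ← Polynomial.coeToPowerSeries.ringHom_apply, map_multiset_prod, Multiset.map_map]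
    congr 1
    refine Multiset.map_congr rfl fun a _ => ?_
    simp
  have hLd := log_deriv_prod s
  rw [← hs3] at hLd
  have hne : Z * U ≠ 0 := by
    rw [← hLZ]
    intro h
    have := congrArg (coeff 0) h
    rw [Polynomial.coeff_coe, hL0] at this
    simp at this
  have hmain : T = (({1, (Q : ℂ)} : Multiset ℂ).map geo).sum - (s.map geo).sum := by
    apply mul_left_cancel₀ hne
    rw [Derivation.leibniz, smul_eq_mul, smul_eq_mul] at hLd
    linear_combination hLd - Z * hUd - U * hZT
  have hN : ∀ r, 1 ≤ r → (N r : ℂ) = 1 + (Q : ℂ) ^ r - (s.map (· ^ r)).sum := by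
    intro r hr
    have := congrArg (coeff r) hmain
    rw [map_sub, map_multiset_sum, map_multiset_sum, Multiset.map_map, Multiset.map_map] at this
    have hg : ∀ a : ℂ, coeff r (geo a) = a ^ r := by
      intro a; simp [geo, show r ≠ 0 by omega]
    simpa [hg, hT] using this
  obtain ⟨ω, hω⟩ : ∃ ω : Fin s.card → ℂ, s = (Finset.univ : Finset (Fin s.card)).val.map ω := by
    have h : ∀ t : Multiset ℂ, ∃ ω : Fin t.card → ℂ,
        t = (Finset.univ : Finset (Fin t.card)).val.map ω := by
      rintro ⟨l⟩
      exact ⟨l.get, ((Fin.univ_val_map l.get).trans (congrArg _ (List.ofFn_get l))).symm⟩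
    exact h s
  have hsum : ∀ r, (s.map (· ^ r)).sum = ∑ j, ω j ^ r := by
    intro r
    conv_lhs => rw [hω]
    rw [Multiset.map_map]; rfl
  have hsq : 1 ≤ Real.sqrt Q := Real.one_le_sqrt.2 (by exact_mod_cast hQ)
  have hω' := norm_le_of_powerSum ω (Real.sqrt Q) (1 + c) (by linarith) (by
    intro r hr
    have h1 := congrArg Complex.re (hN r hr)
    rw [hsum] at h1
    have h2 := hSt r hr
    have h3 : ((Q : ℂ) ^ r).re = (Q : ℝ) ^ r := by
      rw [← Complex.ofReal_natCast, ← Complex.ofReal_pow, Complex.ofReal_re]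
    simp only [Complex.sub_re, Complex.add_re, Complex.one_re, Complex.natCast_re, h3] at h1
    have h4 : 1 ≤ Real.sqrt Q ^ r := one_le_pow₀ hsq
    linarith)
  have h1 := congrArg Complex.re (hN 1 le_rfl)
  rw [hsum] at h1
  simp only [pow_one, Complex.sub_re, Complex.add_re, Complex.one_re, Complex.natCast_re] at h1
  have h5 : (∑ j, ω j).re ≤ s.card * Real.sqrt Q := by
    rw [Complex.re_sum]
    calc _ ≤ ∑ j : Fin s.card, Real.sqrt Q :=
          Finset.sum_le_sum fun j _ => (Complex.re_le_norm _).trans (hω' j)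
      _ = _ := by simp
  have h6 : (s.card : ℝ) * Real.sqrt Q ≤ m * Real.sqrt Q :=
    mul_le_mul_of_nonneg_right (by exact_mod_cast hsm) (by linarith)
  linarith
end Scat

/-! ### Effective divisors -/

namespace Scat

/-- Degree of the effective divisor `D`, the place `v` having degree `d v`. -/
noncomputable def edeg {ι : Type*} (d : ι → ℕ) (D : ι →₀ ℕ) : ℕ := D.sum fun v m => m * d v

lemma edeg_add {ι : Type*} (d : ι → ℕ) (D E : ι →₀ ℕ) : edeg d (D + E) = edeg d D + edeg d E := by
  unfold edeg
  exact Finsupp.sum_add_index' (by simp) (by intros; ring)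

lemma edeg_single {ι : Type*} (d : ι → ℕ) (v : ι) (m : ℕ) :
    edeg d (Finsupp.single v m) = m * d v := by
  unfold edeg
  simp

lemma le_edeg {ι : Type*} (d : ι → ℕ) (D : ι →₀ ℕ) (v : ι) : D v * d v ≤ edeg d D := by
  have : D = Finsupp.single v (D v) + (D - Finsupp.single v (D v)) := by
    ext w
    by_cases h : w = v
    · subst h; simp
    · simp [Finsupp.single_apply, Ne.symm h]
  conv_rhs => rw [this, edeg_add, edeg_single]
  omega

lemma finite_edeg {ι : Type*} (d : ι → ℕ) (hd : ∀ v, 1 ≤ d v) (hfin : ∀ n, {v | d v ≤ n}.Finite)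
    (n : ℕ) : {D : ι →₀ ℕ | edeg d D = n}.Finite := by
  refine Set.Finite.subset (Finset.finite_toSet
    (Finset.finsupp (hfin n).toFinset fun _ => Finset.range (n + 1))) ?_
  intro D hD
  simp only [Set.mem_ofPred_eq] at hD
  rw [Finset.mem_coe, Finset.mem_finsupp_iff]
  have hle : ∀ v, D v ≤ n ∧ (D v ≠ 0 → d v ≤ n) := by
    intro v
    have h1 := le_edeg d D v
    have h2 := hd v
    rw [hD] at h1
    exact ⟨by nlinarith, fun h => by have : 1 ≤ D v := by omega
                                     nlinarith⟩
  refine ⟨fun v hv => ?_, fun v _ => ?_⟩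
  · simpa using (hle v).2 (by simpa using hv)
  · simpa [Nat.lt_succ_iff] using (hle v).1

/-- Number of effective divisors of degree `n`. -/
noncomputable def effCount {ι : Type*} (d : ι → ℕ) (n : ℕ) : ℕ :=
  Nat.card {D : ι →₀ ℕ // edeg d D = n}

/-- Number of points over the extension of degree `r` of the constant field: a place `v` with
`d v ∣ r` carries `d v` of them. The value at `r = 0` is set to `0`, so that this is the sequence of
coefficients of the logarithmic derivative of the zeta function. -/
noncomputable def ptCount {ι : Type*} (d : ι → ℕ) (r : ℕ) : ℕ :=
  if r = 0 then 0 else ∑ᶠ v ∈ {v | d v ∣ r}, d v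

/-- The degree of `D`, written as a sum over the pairs `(v, j)` with `1 ≤ j ≤ D v`. -/
lemma edeg_eq_sum {ι : Type*} (d : ι → ℕ) (n : ℕ) (V : Finset ι)
    (hV : ∀ v, d v ≤ n → v ∈ V) (D : ι →₀ ℕ) (hd : ∀ v, 1 ≤ d v) (hD : edeg d D = n) :
    n = ∑ v ∈ V, ∑ j ∈ Finset.Icc 1 n, if j ≤ D v then d v else 0 := by
  conv_lhs => rw [← hD]
  unfold edeg
  rw [Finsupp.sum_of_support_subset (s := V) _ _ _ (by simp)]
  · refine Finset.sum_congr rfl fun v _ => ?_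
    have h1 := le_edeg d D v
    have h2 := hd v
    rw [hD] at h1
    have : D v ≤ n := by nlinarith
    rw [← Finset.sum_filter]
    have h3 : (Finset.Icc 1 n).filter (fun j => j ≤ D v) = Finset.Icc 1 (D v) := by
      ext j; simp; omega
    rw [h3]; simp
  · intro v hv
    have h1 := le_edeg d D v
    rw [hD] at h1
    have : 1 ≤ D v := by
      have : D v ≠ 0 := by simpa using hv
      omega
    exact hV v (by nlinarith)

/-- Subtracting `j v` identifies the divisors `D` of degree `n` with `j ≤ D v` and the effective
divisors of degree `n - j d v`. -/
lemma card_ge {ι : Type*} (d : ι → ℕ) (n : ℕ) (hn : {D : ι →₀ ℕ | edeg d D = n}.Finite)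
    (v : ι) (j : ℕ) (hm : {D : ι →₀ ℕ | edeg d D = n - j * d v}.Finite) :
    (hn.toFinset.filter fun D => j ≤ D v).card =
      if j * d v ≤ n then effCount d (n - j * d v) else 0 := by
  split_ifs with h
  · have hA : effCount d (n - j * d v) = hm.toFinset.card := Nat.card_eq_card_finite_toFinset hm
    rw [hA]
    have hsplit : ∀ D : ι →₀ ℕ, j ≤ D v → D - Finsupp.single v j + Finsupp.single v j = D := by
      intro D hD
      ext w
      by_cases hw : w = v
      · subst hw; simp [hD]
      · simp [Finsupp.single_apply, Ne.symm hw]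
    refine Finset.card_nbij' (fun D => D - Finsupp.single v j) (fun D => D + Finsupp.single v j)
      ?_ ?_ ?_ ?_
    · intro D hD
      simp only [Finset.coe_filter, Set.Finite.mem_toFinset, Set.mem_ofPred_eq] at hD
      have h1 := edeg_add d (D - Finsupp.single v j) (Finsupp.single v j)
      rw [hsplit D hD.2, edeg_single, hD.1] at h1
      simp only [Finset.mem_coe, Set.Finite.mem_toFinset, Set.mem_ofPred_eq]
      omega
    · intro D hD
      simp only [Finset.mem_coe, Set.Finite.mem_toFinset, Set.mem_ofPred_eq] at hD
      simp only [Finset.coe_filter, Set.Finite.mem_toFinset, Set.mem_ofPred_eq, edeg_add,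
        edeg_single, hD]
      exact ⟨by omega, by simp⟩
    · intro D hD
      simp only [Finset.coe_filter, Set.Finite.mem_toFinset, Set.mem_ofPred_eq] at hD
      exact hsplit D hD.2
    · intro D hD
      simp
  · rw [Finset.card_eq_zero, Finset.filter_eq_empty_iff]
    intro D hD hj
    have h1 := le_edeg d D v
    simp only [Set.Finite.mem_toFinset, Set.mem_ofPred_eq] at hD
    rw [hD] at h1
    exact h ((Nat.mul_le_mul_right _ hj).trans h1)

/-- The identity `X Z' = (∑ N_r X ^ r) Z` for the zeta function `Z = ∑ A_n X ^ n`, in coefficients: the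
degrees of all effective divisors of degree `n` are summed over the pairs `(v, j)` with `j ≤ D v`. -/
lemma zeta_deriv {ι : Type*} (d : ι → ℕ) (hd : ∀ v, 1 ≤ d v) (hfin : ∀ n, {v | d v ≤ n}.Finite)
    (n : ℕ) : n * effCount d n =
      ∑ x ∈ Finset.HasAntidiagonal.antidiagonal n, ptCount d x.1 * effCount d x.2 := by
  have hn := finite_edeg d hd hfin n
  set V := (hfin n).toFinset with hVdef
  have hV : ∀ v, d v ≤ n → v ∈ V := fun v hv => by simpa [hVdef] using hv
  have hA : effCount d n = hn.toFinset.card := by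
    unfold effCount
    exact Nat.card_eq_card_finite_toFinset hn
  have h1 : n * effCount d n = ∑ v ∈ V, ∑ j ∈ Finset.Icc 1 n,
      if j * d v ≤ n then d v * effCount d (n - j * d v) else 0 := by
    calc n * effCount d n = ∑ D ∈ hn.toFinset, n := by rw [hA]; simp [mul_comm]
      _ = ∑ D ∈ hn.toFinset, ∑ v ∈ V, ∑ j ∈ Finset.Icc 1 n, if j ≤ D v then d v else 0 := by
        refine Finset.sum_congr rfl fun D hD => ?_
        exact edeg_eq_sum d n V hV D hd (by simpa using hD)
      _ = ∑ v ∈ V, ∑ j ∈ Finset.Icc 1 n, ∑ D ∈ hn.toFinset, if j ≤ D v then d v else 0 := by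
        rw [Finset.sum_comm]
        refine Finset.sum_congr rfl fun v _ => ?_
        rw [Finset.sum_comm]
      _ = _ := by
        refine Finset.sum_congr rfl fun v _ => Finset.sum_congr rfl fun j _ => ?_
        rw [← Finset.sum_filter, Finset.sum_const, card_ge d n hn v j (finite_edeg d hd hfin _), smul_eq_mul]
        split_ifs <;> ring
  have h2 : ∀ r ∈ Finset.Icc 1 n, ptCount d r = ∑ v ∈ V, if d v ∣ r then d v else 0 := by
    intro r hr
    simp only [Finset.mem_Icc] at hr
    unfold ptCount
    rw [if_neg (by omega), ← Finset.sum_filter]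
    rw [finsum_mem_eq_finite_toFinset_sum (s := {v | d v ∣ r}) _
      ((hfin n).subset fun v hv => (Nat.le_of_dvd (by omega) hv).trans hr.2)]
    refine Finset.sum_congr ?_ fun _ _ => rfl
    ext v
    simp only [Set.Finite.mem_toFinset, Set.mem_ofPred_eq, Finset.mem_filter]
    exact ⟨fun h => ⟨hV v ((Nat.le_of_dvd (by omega) h).trans hr.2), h⟩, fun h => h.2⟩
  have h3 : ∑ x ∈ Finset.HasAntidiagonal.antidiagonal n, ptCount d x.1 * effCount d x.2 =
      ∑ r ∈ Finset.Icc 1 n, ptCount d r * effCount d (n - r) := by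
    rw [Finset.Nat.sum_antidiagonal_eq_sum_range_succ (fun a b => ptCount d a * effCount d b),
      Finset.sum_range_succ']
    have : ptCount d 0 = 0 := by simp [ptCount]
    rw [this, zero_mul, add_zero, Finset.range_eq_Ico, Finset.sum_Ico_add' (fun r => ptCount d r * effCount d (n - r)) 0 n 1]
    rfl
  rw [h1, h3]
  have h4 : ∑ r ∈ Finset.Icc 1 n, ptCount d r * effCount d (n - r) =
      ∑ v ∈ V, ∑ r ∈ Finset.Icc 1 n, if d v ∣ r then d v * effCount d (n - r) else 0 := by
    rw [Finset.sum_comm]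
    refine Finset.sum_congr rfl fun r hr => ?_
    rw [h2 r hr, Finset.sum_mul]
    refine Finset.sum_congr rfl fun v _ => ?_
    split_ifs <;> simp
  rw [h4]
  refine Finset.sum_congr rfl fun v _ => ?_
  rw [← Finset.sum_filter, ← Finset.sum_filter]
  have hdv := hd v
  refine Finset.sum_bij (fun j _ => j * d v) ?_ ?_ ?_ ?_
  · intro j hj
    simp only [Finset.mem_filter, Finset.mem_Icc] at hj ⊢
    exact ⟨⟨by nlinarith, hj.2⟩, Dvd.intro_left j rfl⟩
  · intro a _ b _ h
    exact Nat.eq_of_mul_eq_mul_right hdv h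
  · intro r hr
    simp only [Finset.mem_filter, Finset.mem_Icc] at hr
    obtain ⟨c, hc⟩ := hr.2
    have : 1 ≤ c := by
      rcases Nat.eq_zero_or_pos c with h | h
      · subst h; simp at hc; omega
      · exact h
    refine ⟨c, ?_, by rw [hc, mul_comm]⟩
    simp only [Finset.mem_filter, Finset.mem_Icc]
    refine ⟨⟨this, by nlinarith⟩, by nlinarith⟩
  · intro j _; rfl
end Scat

/-! ### Riemann's theorem -/

namespace Scat
open WithZero

/-- The snake lemma for `A ≤ A'` against `B`, in terms of indices. -/
lemma index_step {G : Type*} [AddCommGroup G] {A A' B : AddSubgroup G} (h : A ≤ A') :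
    A.relIndex A' = (A ⊓ B).relIndex (A' ⊓ B) * (A ⊔ B).relIndex (A' ⊔ B) := by
  have h1 : A ≤ A ⊔ (A' ⊓ B) := le_sup_left
  have h2 : A ⊔ (A' ⊓ B) ≤ A' := sup_le h inf_le_left
  rw [← AddSubgroup.relIndex_mul_relIndex _ _ _ h1 h2]
  congr 1
  · rw [AddSubgroup.relIndex_sup_left, ← AddSubgroup.inf_relIndex_right, ← inf_assoc,
      inf_eq_left.2 h]
  · have h3 : A ⊔ (A' ⊓ B) = (A ⊔ B) ⊓ A' := by
      rw [sup_inf_assoc_of_le _ h, inf_comm]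
    rw [h3, AddSubgroup.inf_relIndex_right]
    have h4 : A' ⊔ B = A' ⊔ (A ⊔ B) := by
      rw [← sup_assoc, sup_eq_left.2 h]
    rw [h4, AddSubgroup.relIndex_sup_right]

section
variable {K : Type*} [Field K] {ι : Type*}

/-- The group of elements of `K` with poles bounded by `D` at the places in `s`. The set of all places
is covered by `s` and `sᶜ`, which play the roles of two affine charts. -/
def lat (val : ι → Valuation K ℤᵐ⁰) (s : Set ι) (D : ι →₀ ℤ) : AddSubgroup K where
  carrier := {f | ∀ v ∈ s, val v f ≤ exp (D v)}
  zero_mem' := by intro v _; simp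
  add_mem' := by
    intro a b ha hb v hv
    exact (val v).map_add_le (ha v hv) (hb v hv)
  neg_mem' := by
    intro a ha v hv
    rw [Valuation.map_neg]; exact ha v hv

lemma mem_lat {val : ι → Valuation K ℤᵐ⁰} {s : Set ι} {D : ι →₀ ℤ} {f : K} :
    f ∈ lat val s D ↔ ∀ v ∈ s, val v f ≤ exp (D v) := Iff.rfl

variable (val : ι → Valuation K ℤᵐ⁰) (s : Set ι)

/-- The cardinality of the Riemann-Roch space `L(D)`, with junk value `0` if it is infinite. -/
noncomputable def ell (D : ι →₀ ℤ) : ℕ := Nat.card (lat val s D ⊓ lat val sᶜ D : AddSubgroup K)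

/-- The cardinality of `H¹(D)`, the cokernel of `lat s D × lat sᶜ D → K`, with junk value `0` if it is
infinite. -/
noncomputable def hh (D : ι →₀ ℤ) : ℕ := (lat val s D ⊔ lat val sᶜ D).index

/-- Degree of the divisor `D`, the place `v` having degree `d v`. -/
noncomputable def ddeg (d : ι → ℕ) : (ι →₀ ℤ) →+ ℤ :=
  Finsupp.liftAddHom fun v => AddMonoidHom.mulRight (d v : ℤ)

lemma ddeg_single (d : ι → ℕ) (v : ι) (m : ℤ) : ddeg d (Finsupp.single v m) = m * d v := by
  simp [ddeg]

/-- The properties of a function field with `Q` constants from which Riemann's theorem follows: there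
are finitely many places of each degree, an element has finitely many zeros and poles, allowing one
more pole at `v` enlarges the lattice of its chart by the index `Q ^ d v`, and `L(0)` and `H¹(0)` are
finite. -/
structure RR (d : ι → ℕ) (Q : ℕ) : Prop where
  two_le : 2 ≤ Q
  dpos : ∀ v, 1 ≤ d v
  dfin : ∀ n, {v | d v ≤ n}.Finite
  fin : ∀ f : K, f ≠ 0 → {v | val v f ≠ 1}.Finite
  step : ∀ v ∈ s, ∀ D, (lat val s D).relIndex (lat val s (D + Finsupp.single v 1)) = Q ^ d v
  step' : ∀ v ∈ sᶜ, ∀ D, (lat val sᶜ D).relIndex (lat val sᶜ (D + Finsupp.single v 1)) = Q ^ d v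
  ell0 : ell val s 0 ≠ 0
  hh0 : hh val s 0 ≠ 0

variable {val s}

lemma lat_mono {D E : ι →₀ ℤ} (h : D ≤ E) (t : Set ι) : lat val t D ≤ lat val t E := by
  intro f hf v hv
  exact (hf v hv).trans (exp_le_exp.2 (h v))

lemma lat_congr {D E : ι →₀ ℤ} {t : Set ι} (h : ∀ v ∈ t, D v = E v) : lat val t D = lat val t E := by
  ext f
  simp only [mem_lat]
  exact forall₂_congr fun v hv => by rw [h v hv]

/-- Cardinality form of `index_step`, including the transfer of finiteness. -/
lemma ell_hh_step_aux {G : Type*} [AddCommGroup G] {A A' B : AddSubgroup G} (h : A ≤ A') {r : ℕ}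
    (hr : r ≠ 0) (hA : A.relIndex A' = r) :
    (Nat.card (A ⊓ B : AddSubgroup G) ≠ 0 ∧ (A ⊔ B).index ≠ 0 ↔
      Nat.card (A' ⊓ B : AddSubgroup G) ≠ 0 ∧ (A' ⊔ B).index ≠ 0) ∧
    Nat.card (A' ⊓ B : AddSubgroup G) * (A ⊔ B).index =
      r * (Nat.card (A ⊓ B : AddSubgroup G) * (A' ⊔ B).index) := by
  have h1 := index_step (B := B) h
  rw [hA] at h1
  have h2 : (A ⊓ B).relIndex (A' ⊓ B) ≠ 0 := by
    intro h0; rw [h0, zero_mul] at h1; exact hr h1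
  have h3 : (A ⊔ B).relIndex (A' ⊔ B) ≠ 0 := by
    intro h0; rw [h0, mul_zero] at h1; exact hr h1
  have h4 := AddSubgroup.relIndex_mul_index (sup_le_sup_right h B)
  have h5 : Nat.card (A ⊓ B : AddSubgroup G) * (A ⊓ B).relIndex (A' ⊓ B) =
      Nat.card (A' ⊓ B : AddSubgroup G) := by
    have := AddSubgroup.relIndex_mul_relIndex ⊥ (A ⊓ B) (A' ⊓ B) bot_le (inf_le_inf_right B h)
    rwa [AddSubgroup.relIndex_bot_left, AddSubgroup.relIndex_bot_left] at this
  refine ⟨?_, ?_⟩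
  · rw [← h4, ← h5]
    simp [h2, h3]
  · rw [← h4, ← h5, h1]; ring

/-- Adding a place `v` to `D` multiplies `|L(D)| / |H¹(D)|` by `Q ^ d v`. -/
lemma ell_hh_step {d : ι → ℕ} {Q : ℕ} (H : RR val s d Q) (v : ι) (D : ι →₀ ℤ) :
    (ell val s D ≠ 0 ∧ hh val s D ≠ 0 ↔
      ell val s (D + Finsupp.single v 1) ≠ 0 ∧ hh val s (D + Finsupp.single v 1) ≠ 0) ∧
    ell val s (D + Finsupp.single v 1) * hh val s D =
      Q ^ d v * (ell val s D * hh val s (D + Finsupp.single v 1)) := by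
  have hQ : Q ^ d v ≠ 0 := pow_ne_zero _ (by have := H.two_le; omega)
  have hle : D ≤ D + Finsupp.single v 1 := by
    rw [le_add_iff_nonneg_right]; simp
  unfold ell hh
  by_cases hv : v ∈ s
  · have h1 : lat val sᶜ (D + Finsupp.single v 1) = lat val sᶜ D := by
      refine lat_congr fun w hw => ?_
      have : v ≠ w := by rintro rfl; exact hw hv
      simp [Finsupp.single_apply, this]
    rw [h1]
    exact ell_hh_step_aux (lat_mono hle s) hQ (H.step v hv D)
  · have h1 : lat val s (D + Finsupp.single v 1) = lat val s D := by
      refine lat_congr fun w hw => ?_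
      have : v ≠ w := by rintro rfl; exact hv hw
      simp [Finsupp.single_apply, this]
    rw [h1, inf_comm (lat val s D), sup_comm (lat val s D), inf_comm (lat val s D),
      sup_comm (lat val s D)]
    exact ell_hh_step_aux (lat_mono hle sᶜ) hQ (H.step' v hv D)

/-- Riemann's formula: `|L(D)|` and `|H¹(D)|` are finite, and their quotient is `Q ^ deg D` times its
value at `D = 0`. -/
lemma riemann {d : ι → ℕ} {Q : ℕ} (H : RR val s d Q) (D : ι →₀ ℤ) :
    ell val s D ≠ 0 ∧ hh val s D ≠ 0 ∧
      (ell val s D : ℚ) / hh val s D =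
        (Q : ℚ) ^ (ddeg d D) * ((ell val s 0 : ℚ) / hh val s 0) := by
  have hQ0 : (Q : ℚ) ≠ 0 := by have := H.two_le; positivity
  have step : ∀ (v : ι) (D : ι →₀ ℤ), (ell val s D ≠ 0 ∧ hh val s D ≠ 0 ∧
      (ell val s D : ℚ) / hh val s D =
        (Q : ℚ) ^ (ddeg d D) * ((ell val s 0 : ℚ) / hh val s 0)) ↔
      (ell val s (D + Finsupp.single v 1) ≠ 0 ∧ hh val s (D + Finsupp.single v 1) ≠ 0 ∧
      (ell val s (D + Finsupp.single v 1) : ℚ) / hh val s (D + Finsupp.single v 1) =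
        (Q : ℚ) ^ (ddeg d (D + Finsupp.single v 1)) * ((ell val s 0 : ℚ) / hh val s 0)) := by
    intro v D
    obtain ⟨h1, h2⟩ := ell_hh_step H v D
    rw [← and_assoc, ← and_assoc, ← h1]
    refine and_congr_right fun h3 => ?_
    have h4 := h1.1 h3
    have e1 : (hh val s D : ℚ) ≠ 0 := by exact_mod_cast h3.2
    have e2 : (hh val s (D + Finsupp.single v 1) : ℚ) ≠ 0 := by exact_mod_cast h4.2
    have h5 : (ell val s (D + Finsupp.single v 1) : ℚ) / hh val s (D + Finsupp.single v 1) =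
        Q ^ d v * ((ell val s D : ℚ) / hh val s D) := by
      rw [← mul_div_assoc, div_eq_div_iff e2 e1]
      have := congrArg (Nat.cast (R := ℚ)) h2
      push_cast at this
      linarith
    rw [h5, map_add, ddeg_single, one_mul, zpow_add₀ hQ0, zpow_natCast, mul_comm _ ((Q : ℚ) ^ d v),
      mul_assoc]
    exact (mul_right_inj' (pow_ne_zero _ hQ0)).symm
  have step2 : ∀ (v : ι) (m : ℤ) (D : ι →₀ ℤ), (ell val s D ≠ 0 ∧ hh val s D ≠ 0 ∧
      (ell val s D : ℚ) / hh val s D =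
        (Q : ℚ) ^ (ddeg d D) * ((ell val s 0 : ℚ) / hh val s 0)) →
      (ell val s (Finsupp.single v m + D) ≠ 0 ∧ hh val s (Finsupp.single v m + D) ≠ 0 ∧
      (ell val s (Finsupp.single v m + D) : ℚ) / hh val s (Finsupp.single v m + D) =
        (Q : ℚ) ^ (ddeg d (Finsupp.single v m + D)) * ((ell val s 0 : ℚ) / hh val s 0)) := by
    intro v m D hD
    induction m using Int.induction_on with
    | zero => simpa using hD
    | succ n ih =>
      rw [step v] at ih
      have e : Finsupp.single v ((n : ℤ) + 1) + D = Finsupp.single v (n : ℤ) + D + Finsupp.single v 1 := by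
        rw [Finsupp.single_add]; abel
      rw [e]; exact ih
    | pred n ih =>
      have e : Finsupp.single v (-(n : ℤ)) + D =
          Finsupp.single v (-(n : ℤ) - 1) + D + Finsupp.single v 1 := by
        rw [Finsupp.single_sub]; abel
      rw [e, ← step v] at ih
      exact ih
  induction D using Finsupp.induction with
  | zero => exact ⟨H.ell0, H.hh0, by simp⟩
  | single_add v m f _ _ ih => exact step2 v m f ih

/-- Half of Serre duality: if `H¹(D) ≠ 0`, multiplication into a nonzero functional on `H¹(D)` embeds
`L(D)` into the dual of `H¹(0)`. The functionals are linear over the prime field. -/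
lemma ell_le_of_hh {d : ι → ℕ} {Q : ℕ} (H : RR val s d Q) (p : ℕ) [Fact p.Prime]
    [Module (ZMod p) K] (D : ι →₀ ℤ) (hD : hh val s D ≠ 1) : ell val s D ≤ hh val s 0 := by
  set S := AddSubgroup.toZModSubmodule p (lat val s D ⊔ lat val sᶜ D) with hS
  set S0 := AddSubgroup.toZModSubmodule p (lat val s 0 ⊔ lat val sᶜ 0) with hS0
  have hlt : S < ⊤ := by
    rw [lt_top_iff_ne_top]
    intro h
    apply hD
    unfold hh
    rw [AddSubgroup.index_eq_one, eq_top_iff]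
    intro x _
    have : x ∈ S := by rw [h]; trivial
    exact this
  obtain ⟨lam, hlam, hker⟩ := Submodule.exists_le_ker_of_lt_top S hlt
  have hcard : Nat.card (K ⧸ S0) = hh val s 0 := rfl
  have : Finite (K ⧸ S0) := Nat.finite_of_card_ne_zero (by rw [hcard]; exact H.hh0)
  have : Module.Finite (ZMod p) (K ⧸ S0) := Module.Finite.of_finite
  have hdual : Nat.card (Module.Dual (ZMod p) (K ⧸ S0)) = hh val s 0 := by
    rw [← hcard, Module.natCard_eq_pow_finrank (K := ZMod p), Subspace.dual_finrank_eq,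
      ← Module.natCard_eq_pow_finrank (K := ZMod p)]
  have hmem : ∀ f ∈ (lat val s D ⊓ lat val sᶜ D : AddSubgroup K), ∀ x ∈ S0, lam (f * x) = 0 := by
    intro f hf x hx
    have hx' : x ∈ lat val s 0 ⊔ lat val sᶜ 0 := hx
    obtain ⟨a, ha, b, hb, rfl⟩ := AddSubgroup.mem_sup.1 hx'
    have : f * (a + b) ∈ S := by
      have : f * (a + b) ∈ lat val s D ⊔ lat val sᶜ D := by
        rw [mul_add]
        refine AddSubgroup.mem_sup.2 ⟨f * a, ?_, f * b, ?_, rfl⟩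
        · intro v hv
          rw [map_mul]
          have h1 := hf.1 v hv
          have h2 := ha v hv
          simp only [Finsupp.coe_zero, Pi.zero_apply, exp_zero] at h2
          exact (mul_le_mul' h1 h2).trans (mul_one _).le
        · intro v hv
          rw [map_mul]
          have h1 := hf.2 v hv
          have h2 := hb v hv
          simp only [Finsupp.coe_zero, Pi.zero_apply, exp_zero] at h2
          exact (mul_le_mul' h1 h2).trans (mul_one _).le
      exact this
    exact hker this
  let φ : (lat val s D ⊓ lat val sᶜ D : AddSubgroup K) → Module.Dual (ZMod p) (K ⧸ S0) := fun f =>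
    S0.liftQ (lam.comp (AddMonoidHom.toZModLinearMap p (AddMonoidHom.mulLeft (f : K))))
      (fun x hx => hmem f f.2 x hx)
  have hinj : Function.Injective φ := by
    intro f g hfg
    by_contra hne
    have hne' : (f : K) - g ≠ 0 := by
      intro h; exact hne (Subtype.ext (sub_eq_zero.1 h))
    apply hlam
    ext x
    have h1 := LinearMap.congr_fun hfg (Submodule.Quotient.mk (((f : K) - g)⁻¹ * x))
    have h2 : lam ((f : K) * (((f : K) - g)⁻¹ * x)) = lam ((g : K) * (((f : K) - g)⁻¹ * x)) := h1
    have h3 : x = (f : K) * (((f : K) - g)⁻¹ * x) - (g : K) * (((f : K) - g)⁻¹ * x) := by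
      field_simp
    rw [LinearMap.zero_apply]
    conv_lhs => rw [h3]
    rw [map_sub, h2, sub_self]
  have : Finite (Module.Dual (ZMod p) (K ⧸ S0)) :=
    Nat.finite_of_card_ne_zero (by rw [hdual]; exact H.hh0)
  rw [← hdual]
  exact Nat.card_le_card_of_injective φ hinj

/-- Exact value of `|L(D)|` for divisors of degree at least `2 g`, where `|H¹(0)| ≤ Q ^ g`: for these
`H¹(D) = 0`, since otherwise `ell_le_of_hh` contradicts Riemann's formula. -/
lemma riemann_large {d : ι → ℕ} {Q : ℕ} (H : RR val s d Q) (p : ℕ) [Fact p.Prime]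
    [Module (ZMod p) K] (hQ : ell val s 0 = Q) (g : ℕ) (hg : hh val s 0 ≤ Q ^ g)
    (D : ι →₀ ℤ) (hD : (2 * g : ℕ) ≤ ddeg d D) :
    (ell val s D : ℚ) = (Q : ℚ) ^ (ddeg d D + 1) / hh val s 0 := by
  obtain ⟨h1, h2, h3⟩ := riemann H D
  have hQ2 : (2 : ℚ) ≤ Q := by exact_mod_cast H.two_le
  have hG : (0 : ℚ) < hh val s 0 := by exact_mod_cast Nat.pos_of_ne_zero H.hh0
  have hh1 : hh val s D = 1 := by
    by_contra hne
    have h4 : (ell val s D : ℚ) ≤ hh val s 0 := by exact_mod_cast ell_le_of_hh H p D hne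
    have h5 : (2 : ℚ) ≤ hh val s D := by
      have : 2 ≤ hh val s D := by omega
      exact_mod_cast this
    rw [div_eq_iff (by positivity), hQ, mul_assoc, ← mul_div_right_comm, ← mul_div_assoc,
      eq_div_iff hG.ne'] at h3
    have h6 : (Q : ℚ) ^ (2 * g) ≤ (Q : ℚ) ^ (ddeg d D) := by
      rw [← zpow_natCast]
      exact zpow_le_zpow_right₀ (by linarith) hD
    have h7 : (hh val s 0 : ℚ) * hh val s 0 ≤ (Q : ℚ) ^ (2 * g) := by
      rw [two_mul, pow_add]
      have : (hh val s 0 : ℚ) ≤ (Q : ℚ) ^ g := by exact_mod_cast hg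
      exact mul_le_mul this this hG.le (by positivity)
    have h8 : (ell val s D : ℚ) * hh val s 0 ≤ hh val s 0 * hh val s 0 :=
      mul_le_mul_of_nonneg_right h4 hG.le
    have h9 : (0 : ℚ) < (Q : ℚ) ^ (ddeg d D) := by positivity
    have h10 : (4 : ℚ) ≤ Q * hh val s D := by nlinarith
    nlinarith
  rw [hh1, Nat.cast_one, div_one] at h3
  rw [h3, hQ, zpow_add_one₀ (by positivity)]
  ring

/-- The divisor of poles minus zeros of `f`, i.e. minus the usual principal divisor. -/
noncomputable def pd {d : ι → ℕ} {Q : ℕ} (H : RR val s d Q) : Additive Kˣ →+ (ι →₀ ℤ) where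
  toFun f := Finsupp.ofSupportFinite (fun v => log (val v (f.toMul : K))) (by
    refine (H.fin (f.toMul : K) (Units.ne_zero _)).subset ?_
    intro v hv h
    simp [h] at hv)
  map_zero' := by
    ext v
    simp [Finsupp.ofSupportFinite_coe]
  map_add' f g := by
    ext v
    simp only [toMul_add, Units.val_mul, map_mul, Finsupp.ofSupportFinite_coe, Finsupp.coe_add,
      Pi.add_apply]
    exact log_mul (by simp) (by simp)

lemma pd_apply {d : ι → ℕ} {Q : ℕ} (H : RR val s d Q) (f : Kˣ) (v : ι) :
    exp (pd H (Additive.ofMul f) v) = val v f := by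
  have : pd H (Additive.ofMul f) v = log (val v (f : K)) := rfl
  rw [this, exp_log]
  simp

lemma mem_lat_mul {d : ι → ℕ} {Q : ℕ} (H : RR val s d Q) (f : Kˣ) (t : Set ι) (D : ι →₀ ℤ) (x : K) :
    (f : K) * x ∈ lat val t (pd H (Additive.ofMul f) + D) ↔ x ∈ lat val t D := by
  simp only [mem_lat]
  refine forall₂_congr fun v _ => ?_
  rw [map_mul, Finsupp.add_apply, exp_add, pd_apply]
  exact mul_le_mul_iff_of_pos_left (by simp [zero_lt_iff])

lemma lat_map_mul {d : ι → ℕ} {Q : ℕ} (H : RR val s d Q) (f : Kˣ) (t : Set ι) (D : ι →₀ ℤ) :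
    (lat val t D).map (AddMonoidHom.mulLeft (f : K)) =
      lat val t (pd H (Additive.ofMul f) + D) := by
  ext x
  simp only [AddSubgroup.mem_map, AddMonoidHom.coe_mulLeft]
  constructor
  · rintro ⟨y, hy, rfl⟩
    exact (mem_lat_mul H f t D y).2 hy
  · intro hx
    refine ⟨(f : K)⁻¹ * x, ?_, by simp⟩
    rw [← mem_lat_mul H f]; simpa using hx

/-- Principal divisors have degree zero: multiplication by `f` maps `L(0)` and `H¹(0)` isomorphically
onto `L(D)` and `H¹(D)` for the divisor `D` of `f`. -/
lemma ddeg_pd {d : ι → ℕ} {Q : ℕ} (H : RR val s d Q) (f : Kˣ) :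
    ddeg d (pd H (Additive.ofMul f)) = 0 := by
  have hinj : Function.Injective (AddMonoidHom.mulLeft (f : K)) := mul_right_injective₀ f.ne_zero
  have hbij : Function.Surjective (AddMonoidHom.mulLeft (f : K)) := fun x =>
    ⟨(f : K)⁻¹ * x, by simp⟩
  have h1 : ell val s (pd H (Additive.ofMul f) + 0) = ell val s 0 := by
    unfold ell
    rw [← lat_map_mul, ← lat_map_mul, ← AddSubgroup.map_inf_eq _ _ _ hinj]
    exact (Nat.card_congr ((lat val s 0 ⊓ lat val sᶜ 0).equivMapOfInjective _ hinj).toEquiv).symm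
  have h2 : hh val s (pd H (Additive.ofMul f) + 0) = hh val s 0 := by
    unfold hh
    rw [← lat_map_mul, ← lat_map_mul, ← AddSubgroup.map_sup,
      AddSubgroup.index_map_eq _ hbij]
    rw [(AddMonoidHom.ker_eq_bot_iff _).2 hinj]
    exact bot_le
  obtain ⟨_, _, h3⟩ := riemann H (pd H (Additive.ofMul f) + 0)
  rw [h1, h2, add_zero] at h3
  have h4 : (ell val s 0 : ℚ) / hh val s 0 ≠ 0 := by
    have := H.ell0
    have := H.hh0
    positivity
  have h5 : (Q : ℚ) ^ (ddeg d (pd H (Additive.ofMul f))) = 1 := by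
    apply mul_right_cancel₀ h4
    rw [← h3, one_mul]
  have hQ2 : (1 : ℚ) < Q := by exact_mod_cast H.two_le
  exact (zpow_eq_one_iff_right₀ (by linarith) hQ2.ne').1 h5

end
end Scat

/-! ### Linear systems and divisor classes -/

namespace Scat
open WithZero

section
variable {K : Type*} [Field K] {ι : Type*} {val : ι → Valuation K ℤᵐ⁰} {s : Set ι}
  {d : ι → ℕ} {Q : ℕ}

lemma pd_le_iff (H : RR val s d Q) (f : Kˣ) (D : ι →₀ ℤ) :
    pd H (Additive.ofMul f) ≤ D ↔ (f : K) ∈ (lat val s D ⊓ lat val sᶜ D : AddSubgroup K) := by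
  rw [AddSubgroup.mem_inf, mem_lat, mem_lat, Finsupp.le_def]
  constructor
  · intro h
    exact ⟨fun v _ => by rw [← pd_apply H]; exact exp_le_exp.2 (h v),
      fun v _ => by rw [← pd_apply H]; exact exp_le_exp.2 (h v)⟩
  · rintro ⟨h1, h2⟩ v
    rw [← exp_le_exp, pd_apply H]
    by_cases hv : v ∈ s
    exacts [h1 v hv, h2 v hv]

/-- The nonzero elements of `L(D)`. -/
abbrev UL (H : RR val s d Q) (D : ι →₀ ℤ) := {f : Kˣ // pd H (Additive.ofMul f) ≤ D}

lemma card_UL (H : RR val s d Q) (D : ι →₀ ℤ) :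
    Finite (UL H D) ∧ Nat.card (UL H D) + 1 = ell val s D := by
  have h0 := (riemann H D).1
  set L := (lat val s D ⊓ lat val sᶜ D : AddSubgroup K) with hL
  have hfin : Finite L := Nat.finite_of_card_ne_zero h0
  let e : UL H D ≃ {x : L // x ≠ 0} :=
    { toFun := fun f => ⟨⟨(f.1 : K), (pd_le_iff H _ _).1 f.2⟩, fun h => f.1.ne_zero (congrArg Subtype.val h)⟩
      invFun := fun x => ⟨Units.mk0 (x.1 : K) (fun h => x.2 (Subtype.ext h)),
        (pd_le_iff H _ _).2 x.1.2⟩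
      left_inv := fun f => by ext; rfl
      right_inv := fun x => by ext; rfl }
  refine ⟨Finite.of_equiv _ e.symm, ?_⟩
  rw [Nat.card_congr e]
  have := Fintype.ofFinite L
  have h1 : Nat.card {x : L // x ≠ 0} = Nat.card L - 1 := by
    rw [Nat.card_eq_fintype_card, Nat.card_eq_fintype_card, Fintype.card_subtype_compl,
      Fintype.card_subtype_eq]
  rw [h1]
  change Nat.card L - 1 + 1 = Nat.card L
  have : Nat.card L ≠ 0 := h0
  omega

lemma pd_eq_zero_of_le (H : RR val s d Q) (u : Kˣ) (hu : pd H (Additive.ofMul u) ≤ 0) :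
    pd H (Additive.ofMul u) = 0 := by
  have h1 := ddeg_pd H u
  by_contra hne
  have : ∃ v, pd H (Additive.ofMul u) v < 0 := by
    by_contra! hcon
    exact hne (le_antisymm hu hcon)
  obtain ⟨v, hv⟩ := this
  have h2 : ddeg d (pd H (Additive.ofMul u)) < 0 := by
    have : ddeg d (pd H (Additive.ofMul u)) =
      ∑ w ∈ (pd H (Additive.ofMul u)).support, pd H (Additive.ofMul u) w * d w := by
      simp [ddeg, Finsupp.liftAddHom_apply, Finsupp.sum]
    rw [this]
    refine Finset.sum_neg' (fun w _ => ?_) ⟨v, ?_, ?_⟩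
    · exact mul_nonpos_of_nonpos_of_nonneg (hu w) (by positivity)
    · simpa using hv.ne
    · exact mul_neg_of_neg_of_pos hv (by exact_mod_cast H.dpos v)
  omega

/-- The effective divisors linearly equivalent to `D`. -/
abbrev Lin (H : RR val s d Q) (D : ι →₀ ℤ) :=
  {E : ι →₀ ℤ // 0 ≤ E ∧ D - E ∈ (pd H).range}

/-- The complete linear system of `D` is the projective space of `L(D)` over `L(0)`. -/
lemma card_Lin (H : RR val s d Q) (D : ι →₀ ℤ) :
    Finite (Lin H D) ∧
      Nat.card (Lin H D) * (ell val s 0 - 1) + 1 = ell val s D := by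
  have hch : ∀ E : Lin H D, ∃ f : Kˣ, pd H (Additive.ofMul f) = D - E.1 := fun E => E.2.2
  choose t ht using hch
  have key : ∀ f g : Kˣ, pd H (Additive.ofMul (f * g)) =
      pd H (Additive.ofMul f) + pd H (Additive.ofMul g) := fun f g => (pd H).map_add _ _
  have keyi : ∀ f : Kˣ, pd H (Additive.ofMul f⁻¹) = - pd H (Additive.ofMul f) :=
    fun f => (pd H).map_neg _
  let e : UL H D ≃ Lin H D × UL H 0 :=
    { toFun := fun f =>
        let E : Lin H D := ⟨D - pd H (Additive.ofMul f.1), sub_nonneg.2 f.2, by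
          rw [sub_sub_cancel]; exact ⟨_, rfl⟩⟩
        ⟨E, ⟨f.1 * (t E)⁻¹, by rw [key, keyi, ht]; simp [E]⟩⟩
      invFun := fun x => ⟨x.2.1 * t x.1, by
        rw [key, ht]
        have h1 := x.2.2
        have h2 := x.1.2.1
        calc _ ≤ 0 + (D - 0) := add_le_add h1 (sub_le_sub_left h2 D)
          _ = D := by simp⟩
      left_inv := fun f => by ext; simp
      right_inv := fun x => by
        obtain ⟨E, u⟩ := x
        have hE : (⟨D - pd H (Additive.ofMul (u.1 * t E)), sub_nonneg.2 (by
            rw [key, ht, pd_eq_zero_of_le H _ u.2, zero_add]; exact sub_le_self _ E.2.1), by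
            rw [sub_sub_cancel]; exact ⟨_, rfl⟩⟩ : Lin H D) = E := by
          apply Subtype.ext
          simp only
          rw [key, ht, pd_eq_zero_of_le H _ u.2]; simp
        simp only [Prod.mk.injEq]
        refine ⟨hE, ?_⟩
        apply Subtype.ext
        simp only
        rw [hE]; simp }
  obtain ⟨hf, hc⟩ := card_UL H D
  obtain ⟨hf0, hc0⟩ := card_UL H 0
  have hf' : Finite (Lin H D × UL H 0) := Finite.of_equiv _ e
  have hne : Nonempty (UL H 0) := ⟨⟨1, by
    have : pd H (Additive.ofMul (1 : Kˣ)) = 0 := (pd H).map_zero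
    rw [this]⟩⟩
  refine ⟨Finite.prod_left (UL H 0), ?_⟩
  rw [← hc, Nat.card_congr e, Nat.card_prod, ← hc0, Nat.add_sub_cancel]

/-- The degree of a divisor class. -/
noncomputable def cldeg (H : RR val s d Q) : (ι →₀ ℤ) ⧸ (pd H).range →+ ℤ :=
  QuotientAddGroup.lift _ (ddeg d) (by
    rintro _ ⟨f, rfl⟩
    exact ddeg_pd H f.toMul)

lemma ddeg_mapRange (d : ι → ℕ) (D : ι →₀ ℕ) :
    ddeg d (D.mapRange (fun m : ℕ => (m : ℤ)) rfl) = (edeg d D : ℤ) := by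
  induction D using Finsupp.induction_linear with
  | zero => simp [edeg]
  | add f g hf hg =>
    rw [Finsupp.mapRange_add (by simp), map_add, hf, hg, edeg_add]; simp
  | single v m => rw [Finsupp.mapRange_single, ddeg_single, edeg_single]; simp

/-- Effective divisors with coefficients in `ℕ` and those with coefficients in `ℤ`. -/
noncomputable def effEquiv (d : ι → ℕ) (n : ℕ) :
    {D : ι →₀ ℕ // edeg d D = n} ≃ {E : ι →₀ ℤ // 0 ≤ E ∧ ddeg d E = n} where
  toFun D := ⟨D.1.mapRange (fun m : ℕ => (m : ℤ)) rfl, fun v => by simp, by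
    rw [ddeg_mapRange, D.2]⟩
  invFun E := ⟨E.1.mapRange Int.toNat rfl, by
    have h1 := ddeg_mapRange d (E.1.mapRange Int.toNat rfl)
    have h2 : (E.1.mapRange Int.toNat rfl).mapRange (fun m : ℕ => (m : ℤ)) rfl = E.1 := by
      ext v
      simp only [Finsupp.mapRange_apply]
      exact Int.toNat_of_nonneg (E.2.1 v)
    rw [h2, E.2.2] at h1
    exact_mod_cast h1.symm⟩
  left_inv D := by
    apply Subtype.ext; ext v; simp
  right_inv E := by
    apply Subtype.ext; ext v
    simp only [Finsupp.mapRange_apply]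
    exact Int.toNat_of_nonneg (E.2.1 v)

/-- The number of effective divisors of degree `n ≥ 2 g` is `h (Q ^ (n + 1) / |H¹(0)| - 1) / (Q - 1)`,
where `h` is the number of divisor classes of degree `0`. A divisor of degree one is needed to identify
the classes of degree `n` with those of degree `0`. -/
lemma effCount_large (H : RR val s d Q) (p : ℕ) [Fact p.Prime]
    [Module (ZMod p) K] (hQ : ell val s 0 = Q) (g : ℕ) (hg : hh val s 0 ≤ Q ^ g)
    (D₁ : ι →₀ ℤ) (hD₁ : ddeg d D₁ = 1) :
    ∃ h : ℕ, ∀ n, 2 * g ≤ n → ((Q : ℚ) - 1) * effCount d n =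
      h * ((Q : ℚ) ^ (n + 1) / hh val s 0 - 1) := by
  refine ⟨Nat.card (cldeg H).ker, fun n hn => ?_⟩
  have hmk : ∀ D, cldeg H (QuotientAddGroup.mk D) = ddeg d D := fun D => rfl
  have hQ2 := H.two_le
  -- All classes of degree `n` have complete linear systems of the same size.
  have hlin : ∀ D, ddeg d D = n → ((Q : ℚ) - 1) * Nat.card (Lin H D) =
      (Q : ℚ) ^ (n + 1) / hh val s 0 - 1 := by
    intro D hD
    have h1 := riemann_large H p hQ g hg D (by rw [hD]; exact_mod_cast hn)
    have h2 := (card_Lin H D).2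
    rw [hD] at h1
    rw [hQ] at h2
    have h3 : ((Nat.card (Lin H D) * (Q - 1) + 1 : ℕ) : ℚ) = ell val s D := by rw [h2]
    rw [h1] at h3
    push_cast [Nat.cast_sub (show 1 ≤ Q by omega)] at h3
    have : ((n : ℤ) + 1) = ((n + 1 : ℕ) : ℤ) := by push_cast; ring
    rw [this, zpow_natCast] at h3
    linarith
  have hdeg : ddeg d (n • D₁) = n := by rw [map_nsmul, hD₁]; simp
  have hcardeq : ∀ D, ddeg d D = n → Nat.card (Lin H D) = Nat.card (Lin H (n • D₁)) := by
    intro D hD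
    have h1 := (hlin D hD).trans (hlin _ hdeg).symm
    have : ((Q : ℚ) - 1) ≠ 0 := by
      have : (2 : ℚ) ≤ Q := by exact_mod_cast hQ2
      linarith
    exact_mod_cast mul_left_cancel₀ this h1
  let Cn := {c : (ι →₀ ℤ) ⧸ (pd H).range // cldeg H c = n}
  have hmem : ∀ D E : ι →₀ ℤ, D - E ∈ (pd H).range ↔
      (QuotientAddGroup.mk E : (ι →₀ ℤ) ⧸ (pd H).range) = QuotientAddGroup.mk D := by
    intro D E
    rw [QuotientAddGroup.eq, neg_add_eq_sub]
  let e1 : {E : ι →₀ ℤ // 0 ≤ E ∧ ddeg d E = n} ≃ Σ c : Cn, Lin H (Quotient.out c.1) :=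
    { toFun := fun E => ⟨⟨QuotientAddGroup.mk E.1, by rw [hmk]; exact E.2.2⟩, ⟨E.1, E.2.1, by
        rw [hmem]; exact (QuotientAddGroup.out_eq' _).symm⟩⟩
      invFun := fun x => ⟨x.2.1, x.2.2.1, by
        have h1 := (hmem _ _).1 x.2.2.2
        rw [← hmk, h1]
        have : (QuotientAddGroup.mk (Quotient.out x.1.1) : (ι →₀ ℤ) ⧸ (pd H).range) = x.1.1 :=
          QuotientAddGroup.out_eq' _
        rw [this]
        exact x.1.2⟩
      left_inv := fun E => rfl
      right_inv := fun x => by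
        obtain ⟨⟨c, hc⟩, E, hE0, hE⟩ := x
        have h1 := (hmem _ _).1 hE
        have : (QuotientAddGroup.mk (Quotient.out c) : (ι →₀ ℤ) ⧸ (pd H).range) = c :=
          QuotientAddGroup.out_eq' _
        simp only at h1
        rw [this] at h1
        subst h1
        rfl }
  have hfib : ∀ c : Cn, Nonempty (Lin H (Quotient.out c.1) ≃ Fin (Nat.card (Lin H (n • D₁)))) := by
    intro c
    have := (card_Lin H (Quotient.out c.1)).1
    rw [← hcardeq (Quotient.out c.1) (by
      rw [← hmk]
      have : (QuotientAddGroup.mk (Quotient.out c.1) : (ι →₀ ℤ) ⧸ (pd H).range) = c.1 :=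
        QuotientAddGroup.out_eq' _
      rw [this]; exact c.2)]
    exact ⟨Finite.equivFin _⟩
  have e2 : (Σ c : Cn, Lin H (Quotient.out c.1)) ≃ Cn × Fin (Nat.card (Lin H (n • D₁))) :=
    (Equiv.sigmaCongrRight fun c => (hfib c).some).trans (Equiv.sigmaEquivProd _ _)
  let e3 : Cn ≃ (cldeg H).ker :=
    { toFun := fun c => ⟨c.1 - QuotientAddGroup.mk (n • D₁), by
        rw [AddMonoidHom.mem_ker, map_sub, hmk, hdeg, c.2, sub_self]⟩
      invFun := fun c => ⟨c.1 + QuotientAddGroup.mk (n • D₁), by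
        have := c.2
        rw [AddMonoidHom.mem_ker] at this
        rw [map_add, hmk, hdeg, this, zero_add]⟩
      left_inv := fun c => by simp
      right_inv := fun c => by simp }
  have hc : effCount d n = Nat.card (cldeg H).ker * Nat.card (Lin H (n • D₁)) := by
    unfold effCount
    rw [Nat.card_congr (effEquiv d n), Nat.card_congr e1, Nat.card_congr e2, Nat.card_prod,
      Nat.card_congr e3, Nat.card_fin]
  rw [hc, Nat.cast_mul, ← hlin _ hdeg]
  ring

end
end Scat

/-! ### Constants and rational places -/

namespace Scat
open WithZero

section
variable {K : Type*} [Field K] {ι : Type*} {val : ι → Valuation K ℤᵐ⁰} {s : Set ι}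
  {d : ι → ℕ} {Q : ℕ}

/-- The field of constants, with underlying set `L(0)`. -/
noncomputable def constField (H : RR val s d Q) : Subfield K where
  carrier := {f | ∀ v, val v f ≤ 1}
  zero_mem' := fun v => by simp
  one_mem' := fun v => by simp
  add_mem' := fun ha hb v => (val v).map_add_le (ha v) (hb v)
  mul_mem' := fun ha hb v => by rw [map_mul]; exact mul_le_one' (ha v) (hb v)
  neg_mem' := fun ha v => by rw [Valuation.map_neg]; exact ha v
  inv_mem' := fun a ha v => by
    by_cases h0 : a = 0
    · simp [h0]
    have h1 := pd_eq_zero_of_le H (Units.mk0 a h0) (fun w => by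
      rw [← exp_le_exp, pd_apply]; exact ha w)
    have h2 := pd_apply H (Units.mk0 a h0) v
    rw [h1] at h2
    have h3 : val v a = 1 := h2.symm
    rw [map_inv₀, h3, inv_one]

lemma card_constField (H : RR val s d Q) : Nat.card (constField H) = ell val s 0 := by
  unfold ell
  have : ((constField H : Set K)) = ((lat val s 0 ⊓ lat val sᶜ 0 : AddSubgroup K) : Set K) := by
    ext f
    simp only [SetLike.mem_coe, AddSubgroup.mem_inf, mem_lat]
    constructor
    · intro h
      exact ⟨fun v _ => h v, fun v _ => h v⟩
    · rintro ⟨h1, h2⟩ v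
      by_cases hv : v ∈ s
      exacts [h1 v hv, h2 v hv]
  exact Nat.card_congr (Equiv.setCongr this)

/-- `lat val t D` as a vector space over the field of constants. -/
def latMod (H : RR val s d Q) (t : Set ι) (D : ι →₀ ℤ) : Submodule (constField H) K :=
  { lat val t D with
    smul_mem' := fun c x hx v hv => by
      change val v ((c : K) * x) ≤ _
      rw [map_mul]
      exact (mul_le_mul' (c.2 v) (hx v hv)).trans (one_mul _).le }

/-- The residue field at `v` is a vector space over the field of constants. -/
lemma const_pow (H : RR val s d Q) (v : ι) : ∃ m, Q ^ d v = ell val s 0 ^ m := by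
  have hQ : Q ^ d v ≠ 0 := pow_ne_zero _ (by have := H.two_le; omega)
  have key : ∀ t : Set ι, (lat val t 0).relIndex (lat val t (0 + Finsupp.single v 1)) ≠ 0 → ∃ m,
      (lat val t 0).relIndex (lat val t (0 + Finsupp.single v 1)) = ell val s 0 ^ m := by
    intro t h0
    let A := (latMod H t 0).comap (latMod H t (0 + Finsupp.single v 1)).subtype
    refine ⟨Module.finrank (constField H) (latMod H t (0 + Finsupp.single v 1) ⧸ A), ?_⟩
    rw [← card_constField H]
    have hf : Finite (constField H) :=
      Nat.finite_of_card_ne_zero (by rw [card_constField]; exact H.ell0)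
    have : Finite (latMod H t (0 + Finsupp.single v 1) ⧸ A) := Nat.finite_of_card_ne_zero h0
    have : Module.Finite (constField H) (latMod H t (0 + Finsupp.single v 1) ⧸ A) :=
      Module.Finite.of_finite
    rw [← Module.natCard_eq_pow_finrank (K := constField H)]
    rfl
  by_cases hv : v ∈ s
  · rw [← H.step v hv 0]; refine key s ?_
    rwa [H.step v hv 0]
  · rw [← H.step' v hv 0]; refine key sᶜ ?_
    rwa [H.step' v hv 0]

/-- If two places have coprime degrees, the field of constants is no larger than `F`. -/
lemma ell0_eq (H : RR val s d Q) {F : Type*} [Field F] [Algebra F K] [Finite F]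
    (hF : Nat.card F = Q) (hc : ∀ v (c : F), val v (algebraMap F K c) ≤ 1)
    (v w : ι) (hvw : Nat.Coprime (d v) (d w)) : ell val s 0 = Q := by
  have hQ2 := H.two_le
  have hfin : Finite (constField H) :=
    Nat.finite_of_card_ne_zero (by rw [card_constField]; exact H.ell0)
  have hle : Q ≤ ell val s 0 := by
    rw [← hF, ← card_constField H]
    refine Nat.card_le_card_of_injective (fun c => (⟨algebraMap F K c, fun v => hc v c⟩ : constField H)) ?_
    intro a b hab
    exact (algebraMap F K).injective (congrArg Subtype.val hab)
  have hdvd : ∀ v, ell val s 0 - 1 ∣ Q ^ d v - 1 := by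
    intro v
    obtain ⟨m, hm⟩ := const_pow H v
    rw [hm]
    simpa using Nat.sub_dvd_pow_sub_pow (ell val s 0) 1 m
  have h1 := Nat.dvd_gcd (hdvd v) (hdvd w)
  rw [Nat.pow_sub_one_gcd_pow_sub_one, hvw, pow_one] at h1
  have := Nat.le_of_dvd (by omega) h1
  omega

lemma effCount_zero (hd : ∀ v, 1 ≤ d v) : effCount d 0 = 1 := by
  unfold effCount
  rw [Nat.card_eq_one_iff_unique]
  refine ⟨⟨?_⟩, ⟨⟨0, by simp [edeg]⟩⟩⟩
  have key : ∀ D : {D : ι →₀ ℕ // edeg d D = 0}, D.1 = 0 := by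
    intro D
    ext v
    have := le_edeg d D.1 v
    rw [D.2] at this
    have h1 := hd v
    simp only [Finsupp.coe_zero, Pi.zero_apply]
    nlinarith
  intro a b
  exact Subtype.ext ((key a).trans (key b).symm)

lemma ptCount_exists {d : ι → ℕ} {r : ℕ} (hr : r ≠ 0) (h : ptCount d r ≠ 0) : ∃ v, d v ∣ r := by
  by_contra! hcon
  apply h
  unfold ptCount
  rw [if_neg hr]
  apply finsum_mem_eq_zero_of_forall_eq_zero
  intro v hv
  exact absurd hv (hcon v)

/-- Weil's lower bound for the number of rational places, with `2 g + 1` in place of `2 g`, given a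
Stepanov-type lower bound over all extensions. The latter also provides two places of coprime degrees,
hence a divisor of degree one, and shows that there are no further constants. -/
theorem weil_places (H : RR val s d Q) (p : ℕ) [Fact p.Prime] [Module (ZMod p) K]
    {F : Type*} [Field F] [Algebra F K] [Finite F]
    (hF : Nat.card F = Q) (hc : ∀ v (c : F), val v (algebraMap F K c) ≤ 1)
    (g : ℕ) (hg : hh val s 0 ≤ Q ^ g) (C : ℝ)
    (hSt : ∀ r, 1 ≤ r → (Q : ℝ) ^ r - C * √(Q : ℝ) ^ r ≤ ptCount d r) :
    (Q : ℝ) + 1 - (2 * g + 1 : ℕ) * √(Q : ℝ) ≤ ptCount d 1 := by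
  have hQ2 := H.two_le
  have hQ2r : (2 : ℝ) ≤ Q := by exact_mod_cast hQ2
  -- for every large `r` there are places of degree dividing `r`
  have hbig : ∃ r0 : ℕ, ∀ r, r0 ≤ r → 1 ≤ r → ptCount d r ≠ 0 := by
    have hs : 1 < √(Q : ℝ) := by
      rw [Real.lt_sqrt (by norm_num)]; linarith
    obtain ⟨r0, hr0⟩ := pow_unbounded_of_one_lt C hs
    refine ⟨r0, fun r hr h1 h0 => ?_⟩
    have h2 := hSt r h1
    rw [h0] at h2
    have h3 : C < √(Q : ℝ) ^ r := hr0.trans_le (pow_le_pow_right₀ hs.le hr)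
    have h4 : (Q : ℝ) ^ r = √(Q : ℝ) ^ r * √(Q : ℝ) ^ r := by
      rw [← mul_pow, Real.mul_self_sqrt (by linarith)]
    rw [h4] at h2
    have h5 : 0 < √(Q : ℝ) ^ r := by positivity
    push_cast at h2
    nlinarith
  obtain ⟨r0, hr0⟩ := hbig
  obtain ⟨r1, hr1, hp1⟩ := Nat.exists_infinite_primes r0
  obtain ⟨r2, hr2, hp2⟩ := Nat.exists_infinite_primes (r1 + 1)
  obtain ⟨v, hv⟩ := ptCount_exists hp1.ne_zero (hr0 r1 hr1 hp1.one_le)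
  obtain ⟨w, hw⟩ := ptCount_exists hp2.ne_zero (hr0 r2 (by omega) hp2.one_le)
  have hvw : Nat.Coprime (d v) (d w) :=
    Nat.Coprime.of_dvd hv hw ((Nat.coprime_primes hp1 hp2).2 (by omega))
  have hell := ell0_eq H hF hc v w hvw
  have hD₁ : ddeg d (Finsupp.single v (Nat.gcdA (d v) (d w)) +
      Finsupp.single w (Nat.gcdB (d v) (d w))) = 1 := by
    rw [map_add, ddeg_single, ddeg_single]
    have := Nat.gcd_eq_gcd_ab (d v) (d w)
    rw [hvw] at this
    push_cast at this
    linarith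
  obtain ⟨h, hh⟩ := effCount_large H p hell g hg _ hD₁
  refine weil_lower Q (by omega) (2 * g + 1) (effCount d) (ptCount d) (effCount_zero H.dpos)
    (fun n => zeta_deriv d H.dpos H.dfin n) (by simp [ptCount]) ?_ (by omega) C hSt
  intro n hn
  have e0 := hh n (by omega)
  have e1 := hh (n + 1) (by omega)
  have e2 := hh (n + 2) (by omega)
  have hQ1 : ((Q : ℚ) - 1) ≠ 0 := by
    have : (2 : ℚ) ≤ Q := by exact_mod_cast hQ2
    linarith
  have : ((effCount d (n + 2) : ℤ) - (Q + 1) * effCount d (n + 1) + Q * effCount d n : ℚ) = 0 := by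
    apply mul_left_cancel₀ hQ1
    push_cast
    linear_combination e2 - (Q + 1) * e1 + Q * e0
  exact_mod_cast this

end
end Scat

/-! ### Places of a pair of Dedekind domains -/

namespace Scat
open WithZero IsDedekindDomain

section
variable {O K : Type*} [CommRing O] [IsDedekindDomain O] [Field K] [Algebra O K] [IsFractionRing O K]

variable (K) in
/-- The fractional ideal of elements with poles bounded by `D`. -/
def latD (D : HeightOneSpectrum O → ℤ) : AddSubgroup K where
  carrier := {f | ∀ v, HeightOneSpectrum.valuation K v f ≤ exp (D v)}
  zero_mem' := by intro v; simp
  add_mem' := by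
    intro a b ha hb v
    exact (v.valuation K).map_add_le (ha v) (hb v)
  neg_mem' := by
    intro a ha v
    rw [Valuation.map_neg]; exact ha v

variable (K) in
lemma finite_valuation_ne_one (f : K) (hf : f ≠ 0) :
    {v : HeightOneSpectrum O | v.valuation K f ≠ 1}.Finite := by
  have h1 := HeightOneSpectrum.Support.finite O f
  have h2 := HeightOneSpectrum.Support.finite O f⁻¹
  refine (h1.union h2).subset fun v hv => ?_
  rcases lt_or_gt_of_ne hv with h | h
  · right
    change 1 < v.valuation K f⁻¹
    rw [map_inv₀]
    exact (one_lt_inv₀ (by rw [zero_lt_iff]; simpa using hf)).2 h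
  · left; exact h

/-- An element with a prescribed pole order at `v` and poles bounded by `D` elsewhere. -/
lemma exists_pole (v : HeightOneSpectrum O) (D : HeightOneSpectrum O → ℤ)
    (hD : {w | D w ≠ 0}.Finite) : ∃ a : K, v.valuation K a = exp (D v) ∧
      ∀ w, w.valuation K a ≤ exp (D w) := by
  obtain ⟨π, hπ⟩ := v.valuation_exists_uniformizer K
  have hπ0 : π ≠ 0 := by
    rintro rfl; rw [map_zero] at hπ; exact exp_ne_zero hπ.symm
  set a0 : K := π ^ (-(D v)) with ha0
  have hva0 : v.valuation K a0 = exp (D v) := by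
    rw [ha0, map_zpow₀, hπ, ← exp_zsmul]; simp
  have ha00 : a0 ≠ 0 := zpow_ne_zero _ hπ0
  have hT := (hD.union (finite_valuation_ne_one (O := O) K a0 ha00)).union (Set.finite_singleton v)
  let T := hT.toFinset
  let M : HeightOneSpectrum O → ℕ := fun w =>
    if w = v then 1 else (log (w.valuation K a0) - D w).toNat
  obtain ⟨y, hy⟩ := IsDedekindDomain.exists_forall_sub_mem_ideal (s := T)
    (fun w : HeightOneSpectrum O => w.asIdeal) M (fun w _ => w.prime)
    (fun w _ w' _ hne h => hne (HeightOneSpectrum.ext h)) (fun w => if w.1 = v then 1 else 0)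
  have hyv : v.valuation K (algebraMap O K y) = 1 := by
    have h1 := hy v (by simp [T])
    simp only [M, if_true, pow_one] at h1
    rw [HeightOneSpectrum.valuation_eq_one_iff_notMem]
    intro h2
    have h3 : (1 : O) ∈ v.asIdeal := by
      have := v.asIdeal.sub_mem h2 h1
      simpa using this
    exact v.isPrime.ne_top ((Ideal.eq_top_iff_one _).2 h3)
  refine ⟨a0 * algebraMap O K y, by rw [map_mul, hva0, hyv, mul_one], fun w => ?_⟩
  by_cases hwv : w = v
  · subst hwv
    rw [map_mul, hva0, hyv, mul_one]
  by_cases hw : w ∈ T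
  · have h1 := hy w hw
    simp only [hwv, if_false, sub_zero] at h1
    rw [← HeightOneSpectrum.intValuation_le_pow_iff_mem] at h1
    rw [map_mul, HeightOneSpectrum.valuation_of_algebraMap]
    refine (mul_le_mul' le_rfl h1).trans ?_
    have h2 : w.valuation K a0 = exp (log (w.valuation K a0)) := (exp_log (by simpa using ha00)).symm
    rw [h2, ← exp_add, exp_le_exp]
    simp only [M, hwv, if_false]
    have := Int.self_le_toNat (log (w.valuation K a0) - D w)
    rw [h2] at this
    simp only [log_exp] at this
    omega
  · have h1 : D w = 0 ∧ w.valuation K a0 = 1 := by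
      simp only [T, Set.Finite.mem_toFinset, Set.mem_union, not_or] at hw
      obtain ⟨⟨h1, h2⟩, _⟩ := hw
      exact ⟨not_not.1 h1, not_not.1 h2⟩
    rw [map_mul, h1.1, h1.2, one_mul, exp_zero]
    exact HeightOneSpectrum.valuation_le_one _ _

/-- Allowing one more pole at `v` enlarges the fractional ideal by the residue field of `v`. -/
lemma latD_step (v : HeightOneSpectrum O) (D : HeightOneSpectrum O → ℤ)
    (hD : {w | D w ≠ 0}.Finite) (D' : HeightOneSpectrum O → ℤ) (hv : D' v = D v + 1)
    (hw : ∀ w, w ≠ v → D' w = D w) :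
    (latD K D).relIndex (latD K D') = Nat.card (O ⧸ v.asIdeal) := by
  have hD' : {w | D' w ≠ 0}.Finite := by
    refine (hD.union (Set.finite_singleton v)).subset fun w h => ?_
    by_cases hwv : w = v
    · right; exact hwv
    · left
      change D w ≠ 0
      rw [← hw w hwv]; exact h
  obtain ⟨a, ha, ha'⟩ := exists_pole (K := K) v D' hD'
  have ha0 : a ≠ 0 := by
    rintro rfl; rw [map_zero] at ha; exact exp_ne_zero ha.symm
  have hmem : ∀ r : O, algebraMap O K r * a ∈ latD K D' := by
    intro r w
    rw [map_mul]
    exact (mul_le_mul' (HeightOneSpectrum.valuation_le_one w r) (ha' w)).trans (one_mul _).le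
  let φ : O →+ latD K D' :=
    { toFun := fun r => ⟨algebraMap O K r * a, hmem r⟩
      map_zero' := by ext; simp
      map_add' := by intro x y; ext; simp [add_mul] }
  let A := (latD K D).addSubgroupOf (latD K D')
  let ψ : O →+ (latD K D' ⧸ A) := (QuotientAddGroup.mk' A).comp φ
  -- membership in the smaller lattice is a condition at `v` only
  have hiff : ∀ x ∈ latD K D', x ∈ latD K D ↔ v.valuation K x ≤ exp (D v) := by
    intro x hx
    refine ⟨fun h => h v, fun h w => ?_⟩
    by_cases hwv : w = v
    · rw [hwv]; exact h
    · rw [← hw w hwv]; exact hx w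
  have hlt : ∀ x : K, x * a ∈ latD K D' → (x * a ∈ latD K D ↔ v.valuation K x < 1) := by
    intro x hx
    rw [hiff _ hx, map_mul, ha, hv, exp_add]
    have h1 : (exp (D v) : ℤᵐ⁰) * exp 1 = exp 1 * exp (D v) := mul_comm _ _
    rw [h1, ← mul_assoc]
    constructor
    · intro h
      have h2 : v.valuation K x * exp 1 ≤ 1 := by
        by_contra! hcon
        have : (1 : ℤᵐ⁰) * exp (D v) < v.valuation K x * exp 1 * exp (D v) :=
          (mul_lt_mul_iff_of_pos_right (by simp)).2 hcon
        rw [one_mul] at this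
        exact absurd h (not_le.2 this)
      by_contra! hcon
      have : (exp 1 : ℤᵐ⁰) ≤ v.valuation K x * exp 1 := by
        calc (exp 1 : ℤᵐ⁰) = 1 * exp 1 := (one_mul _).symm
          _ ≤ _ := mul_le_mul' hcon le_rfl
      have h3 := this.trans h2
      rw [← exp_zero, exp_le_exp] at h3
      omega
    · intro h
      by_cases hx0 : x = 0
      · simp [hx0]
      have hne : v.valuation K x ≠ 0 := by simpa using hx0
      rw [← exp_log hne] at h ⊢
      rw [← exp_zero, exp_lt_exp] at h
      rw [← exp_add, ← exp_add, exp_le_exp]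
      omega
  have hker : ψ.ker = v.asIdeal.toAddSubgroup := by
    ext r
    rw [AddMonoidHom.mem_ker]
    change (QuotientAddGroup.mk (φ r) : latD K D' ⧸ A) = 0 ↔ r ∈ v.asIdeal
    rw [QuotientAddGroup.eq_zero_iff, AddSubgroup.mem_addSubgroupOf]
    change algebraMap O K r * a ∈ latD K D ↔ _
    rw [hlt _ (hmem r), HeightOneSpectrum.valuation_lt_one_iff_mem]
  have hsurj : Function.Surjective ψ := by
    intro x
    obtain ⟨b, rfl⟩ := QuotientAddGroup.mk_surjective x
    have hb : v.valuation K ((b : K) / a) ≤ 1 := by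
      have h1 := b.2 v
      rw [map_div₀, ha]
      exact (div_le_one₀ (by simp)).2 h1
    obtain ⟨r, hr⟩ := v.exists_valuation_sub_lt_of_integer hb 1
    refine ⟨r, ?_⟩
    change (QuotientAddGroup.mk (φ r) : latD K D' ⧸ A) = QuotientAddGroup.mk b
    rw [← sub_eq_zero, ← QuotientAddGroup.mk_sub, QuotientAddGroup.eq_zero_iff,
      AddSubgroup.mem_addSubgroupOf]
    change algebraMap O K r * a - b ∈ latD K D
    have h2 : algebraMap O K r * a - b = (algebraMap O K r - (b : K) / a) * a := by
      field_simp
    have h3 : (algebraMap O K r - (b : K) / a) * a ∈ latD K D' := by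
      rw [← h2]; exact (latD K D').sub_mem (hmem r) b.2
    rw [h2, hlt _ h3]
    exact hr
  have e := QuotientAddGroup.quotientKerEquivOfSurjective ψ hsurj
  have h1 : (latD K D).relIndex (latD K D') = Nat.card (latD K D' ⧸ A) := rfl
  rw [h1, ← Nat.card_congr e.toEquiv, hker]
  rfl

lemma latD_zero : (latD K (fun _ : HeightOneSpectrum O => (0 : ℤ)) : Set K) =
    Set.range (algebraMap O K) := by
  ext x
  constructor
  · intro h
    obtain ⟨y, hy⟩ := HeightOneSpectrum.mem_integers_of_valuation_le_one (R := O) K x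
      (fun v => by simpa using h v)
    exact ⟨y, hy⟩
  · rintro ⟨y, rfl⟩ v
    simpa using HeightOneSpectrum.valuation_le_one (K := K) v y

variable (O P : Type*) [CommRing O] [IsDedekindDomain O] [Algebra O K] [IsFractionRing O K]
  [CommRing P] [IsDedekindDomain P] [Algebra P K] [IsFractionRing P K]

/-- The places of a curve covered by two charts with coordinate rings `O` and `P`. In the application
`P` is semilocal, with the places at infinity. -/
abbrev Place := HeightOneSpectrum O ⊕ HeightOneSpectrum P

variable (K) in
/-- The valuation attached to a place. -/
noncomputable def plVal : Place O P → Valuation K ℤᵐ⁰ :=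
  Sum.elim (fun v => v.valuation K) (fun v => v.valuation K)

/-- The degree of a place over the field `F`. -/
noncomputable def plDeg (F : Type*) [Field F] [Algebra F O] [Algebra F P] : Place O P → ℕ :=
  Sum.elim (fun v => Module.finrank F (O ⧸ v.asIdeal)) (fun v => Module.finrank F (P ⧸ v.asIdeal))

lemma lat_inl (D : Place O P →₀ ℤ) : lat (plVal K O P) (Set.range Sum.inl) D =
    latD K (fun v : HeightOneSpectrum O => D (Sum.inl v)) := by
  ext f
  constructor
  · intro h v
    exact h (Sum.inl v) ⟨v, rfl⟩
  · rintro h _ ⟨v, rfl⟩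
    exact h v

lemma lat_inr (D : Place O P →₀ ℤ) : lat (plVal K O P) (Set.range Sum.inl)ᶜ D =
    latD K (fun v : HeightOneSpectrum P => D (Sum.inr v)) := by
  ext f
  constructor
  · intro h v
    exact h (Sum.inr v) (by simp)
  · rintro h (v | v) hv
    · exact absurd ⟨v, rfl⟩ hv
    · exact h v

/-- `H¹(0)` is `K / (O + P)`. -/
lemma hh_eq : hh (plVal K O P) (Set.range Sum.inl) 0 =
    ((algebraMap O K).range.toAddSubgroup ⊔ (algebraMap P K).range.toAddSubgroup).index := by
  unfold hh
  rw [lat_inl, lat_inr]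
  have h1 : latD K (fun _ : HeightOneSpectrum O => (0 : ℤ)) = (algebraMap O K).range.toAddSubgroup :=
    SetLike.coe_injective (by rw [latD_zero]; rfl)
  have h2 : latD K (fun _ : HeightOneSpectrum P => (0 : ℤ)) = (algebraMap P K).range.toAddSubgroup :=
    SetLike.coe_injective (by rw [latD_zero]; rfl)
  congr 2

theorem RR_of_dedekind (F : Type*) [Field F] [Finite F] [Algebra F O] [Algebra F P]
    (hO : ∀ v : HeightOneSpectrum O, Module.Finite F (O ⧸ v.asIdeal))
    (hP : ∀ v : HeightOneSpectrum P, Module.Finite F (P ⧸ v.asIdeal))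
    (hOfin : ∀ n, {v : HeightOneSpectrum O | Module.finrank F (O ⧸ v.asIdeal) ≤ n}.Finite)
    (hPfin : Finite (HeightOneSpectrum P))
    (hell : (Set.range (algebraMap O K) ∩ Set.range (algebraMap P K)).Finite)
    (hhh : ((algebraMap O K).range.toAddSubgroup ⊔ (algebraMap P K).range.toAddSubgroup).index ≠ 0) :
    RR (plVal K O P) (Set.range Sum.inl) (plDeg O P F) (Nat.card F) where
  two_le := Finite.one_lt_card
  dpos := by
    rintro (v | v)
    · have := hO v
      have := v.isMaximal
      have : Nontrivial (O ⧸ v.asIdeal) := Ideal.Quotient.nontrivial_iff.2 v.isPrime.ne_top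
      exact Module.finrank_pos
    · have := hP v
      have := v.isMaximal
      have : Nontrivial (P ⧸ v.asIdeal) := Ideal.Quotient.nontrivial_iff.2 v.isPrime.ne_top
      exact Module.finrank_pos
  dfin := by
    intro n
    refine (((hOfin n).image Sum.inl).union ((Set.toFinite Set.univ).image Sum.inr)).subset ?_
    rintro (v | v) hv
    · left; exact ⟨v, hv, rfl⟩
    · right; exact ⟨v, trivial, rfl⟩
  fin := by
    intro f hf
    refine (((finite_valuation_ne_one (O := O) K f hf).image Sum.inl).union
      ((finite_valuation_ne_one (O := P) K f hf).image Sum.inr)).subset ?_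
    rintro (v | v) hv
    · left; exact ⟨v, hv, rfl⟩
    · right; exact ⟨v, hv, rfl⟩
  step := by
    rintro _ ⟨v, rfl⟩ D
    rw [lat_inl, lat_inl, latD_step v _ _ _ (by simp) (by
      intro w hw
      simp [Ne.symm hw])]
    · have := hO v
      exact Module.natCard_eq_pow_finrank (K := F)
    · exact D.hasFiniteSupport.preimage Sum.inl_injective.injOn
  step' := by
    rintro (v | v) hv D
    · exact absurd ⟨v, rfl⟩ hv
    rw [lat_inr, lat_inr, latD_step v _ _ _ (by simp) (by
      intro w hw
      simp [Ne.symm hw])]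
    · have := hP v
      exact Module.natCard_eq_pow_finrank (K := F)
    · exact D.hasFiniteSupport.preimage Sum.inr_injective.injOn
  ell0 := by
    unfold ell
    rw [lat_inl, lat_inr]
    have : Finite (latD K (fun _ : HeightOneSpectrum O => (0 : ℤ)) ⊓
        latD K (fun _ : HeightOneSpectrum P => (0 : ℤ)) : AddSubgroup K) := by
      have h : ((latD K (fun _ : HeightOneSpectrum O => (0 : ℤ)) ⊓
        latD K (fun _ : HeightOneSpectrum P => (0 : ℤ)) : AddSubgroup K) : Set K) =
        (Set.range (algebraMap O K) ∩ Set.range (algebraMap P K)) := by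
        rw [AddSubgroup.coe_inf, latD_zero, latD_zero]
      exact (Set.finite_coe_iff.2 (h ▸ hell))
    exact Nat.card_pos.ne'
  hh0 := by
    rwa [hh_eq]

/-- `weil_places` for a function field presented by the coordinate rings `O` and `P` of two charts. -/
theorem weil_dedekind (F : Type*) [Field F] [Finite F] [Algebra F O] [Algebra F P] [Algebra F K]
    [IsScalarTower F O K] [IsScalarTower F P K]
    (hO : ∀ v : HeightOneSpectrum O, Module.Finite F (O ⧸ v.asIdeal))
    (hP : ∀ v : HeightOneSpectrum P, Module.Finite F (P ⧸ v.asIdeal))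
    (hOfin : ∀ n, {v : HeightOneSpectrum O | Module.finrank F (O ⧸ v.asIdeal) ≤ n}.Finite)
    (hPfin : Finite (HeightOneSpectrum P))
    (hell : (Set.range (algebraMap O K) ∩ Set.range (algebraMap P K)).Finite)
    (hhh : ((algebraMap O K).range.toAddSubgroup ⊔ (algebraMap P K).range.toAddSubgroup).index ≠ 0)
    (g : ℕ) (hg : ((algebraMap O K).range.toAddSubgroup ⊔
      (algebraMap P K).range.toAddSubgroup).index ≤ Nat.card F ^ g) (C : ℝ)
    (hSt : ∀ r, 1 ≤ r → (Nat.card F : ℝ) ^ r - C * √(Nat.card F : ℝ) ^ r ≤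
      ptCount (plDeg O P F) r) :
    (Nat.card F : ℝ) + 1 - (2 * g + 1 : ℕ) * √(Nat.card F : ℝ) ≤
      {v | plDeg O P F v = 1}.ncard := by
  obtain ⟨p, hp⟩ := CharP.exists F
  have hpp : Fact p.Prime := ⟨CharP.char_is_prime F p⟩
  have : CharP K p := charP_of_injective_algebraMap (algebraMap F K).injective p
  let _ : Algebra (ZMod p) K := ZMod.algebra K p
  have H := RR_of_dedekind (K := K) O P F hO hP hOfin hPfin hell hhh
  have h1 := weil_places H p rfl (F := F) (by
    rintro (v | v) c
    · change v.valuation K _ ≤ 1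
      rw [IsScalarTower.algebraMap_apply F O K]
      exact HeightOneSpectrum.valuation_le_one v _
    · change v.valuation K _ ≤ 1
      rw [IsScalarTower.algebraMap_apply F P K]
      exact HeightOneSpectrum.valuation_le_one v _) g (by rwa [hh_eq]) C hSt
  refine h1.trans (le_of_eq ?_)
  congr 1
  unfold ptCount
  simp only [if_neg one_ne_zero, Nat.dvd_one]
  rw [← finsum_one]
  exact finsum_mem_congr rfl fun v hv => hv

end
end Scat

/-! ### The place at infinity of the rational function field -/

namespace Scat
open WithZero IsDedekindDomain Polynomial

section RatFuncInfty
variable (F : Type*) [Field F]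

/-- The valuation ring of `F(X)` at the place `X = ∞`, as an `F`-subalgebra. -/
noncomputable def AInf : Subalgebra F (RatFunc F) where
  carrier := {l | RatFunc.inftyValuation F l ≤ 1}
  mul_mem' := fun {a b} ha hb => by
    show RatFunc.inftyValuation F (a * b) ≤ 1
    rw [map_mul]; exact mul_le_one' ha hb
  add_mem' := fun {a b} ha hb => by
    show RatFunc.inftyValuation F (a + b) ≤ 1
    exact (Valuation.map_add _ _ _).trans (max_le ha hb)
  algebraMap_mem' := fun c => by
    show RatFunc.inftyValuation F _ ≤ 1
    by_cases h : c = 0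
    · simp [h]
    · rw [Valuation.IsTrivialOn.eq_one c h]

variable {F}

lemma mem_AInf {l : RatFunc F} : l ∈ AInf F ↔ RatFunc.inftyValuation F l ≤ 1 := by
  show l ∈ {l | RatFunc.inftyValuation F l ≤ 1} ↔ _
  rw [Set.mem_ofPred_eq]

instance : IsFractionRing (AInf F) (RatFunc F) := by
  refine IsFractionRing.of_field _ _ fun z => ?_
  rcases le_total (RatFunc.inftyValuation F z) 1 with h | h
  · exact ⟨⟨z, mem_AInf.2 h⟩, 1, by simp⟩
  · refine ⟨1, ⟨z⁻¹, ?_⟩, ?_⟩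
    · rw [mem_AInf, map_inv₀]; exact inv_le_one_of_one_le₀ h
    · simp

instance : IsIntegrallyClosed (AInf F) := by
  have : ValuationRing (AInf F) := by
    rw [ValuationRing.iff_isInteger_or_isInteger _ (RatFunc F)]
    intro z
    rcases le_total (RatFunc.inftyValuation F z) 1 with h | h
    · exact Or.inl ⟨⟨z, mem_AInf.2 h⟩, rfl⟩
    · refine Or.inr ⟨⟨z⁻¹, ?_⟩, rfl⟩
      rw [mem_AInf, map_inv₀]; exact inv_le_one_of_one_le₀ h
  infer_instance

lemma vpoly (p : F[X]) : RatFunc.inftyValuation F (algebraMap F[X] (RatFunc F) p)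
    = if p = 0 then 0 else exp (p.natDegree : ℤ) := by
  split_ifs with h
  · simp [h]
  · exact RatFunc.inftyValuation.polynomial F h

/-- Every rational function is a polynomial plus a function vanishing at infinity. -/
lemma inf_split (l : RatFunc F) : ∃ (p : F[X]) (l' : RatFunc F),
    l = algebraMap _ _ p + l' ∧ RatFunc.inftyValuation F l' ≤ exp (-1) := by
  have hd := RatFunc.monic_denom l
  refine ⟨l.num /ₘ l.denom, l - algebraMap _ _ (l.num /ₘ l.denom), by ring, ?_⟩
  have hd0 : algebraMap F[X] (RatFunc F) l.denom ≠ 0 := by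
    simpa using hd.ne_zero
  have : l - algebraMap _ _ (l.num /ₘ l.denom) =
      algebraMap _ _ (l.num %ₘ l.denom) / algebraMap _ _ l.denom := by
    rw [eq_div_iff hd0]
    have h0 : l * algebraMap _ _ l.denom = algebraMap F[X] (RatFunc F) l.num := by
      exact (eq_div_iff hd0).1 (RatFunc.num_div_denom l).symm
    have h2 := modByMonic_add_div l.num l.denom
    have h3 := congrArg (algebraMap F[X] (RatFunc F)) h2
    rw [map_add, map_mul] at h3
    rw [sub_mul, h0, ← h3]; ring
  rw [this, map_div₀, vpoly, vpoly, if_neg hd.ne_zero]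
  split_ifs with h
  · simp
  · rw [← exp_sub, exp_le_exp]
    have := natDegree_modByMonic_lt l.num hd (by
      intro h1; rw [h1] at h; simp at h)
    omega

/-- The residue field at infinity is `F`. -/
lemma inf_residue (l : RatFunc F) (m : ℤ) (h : RatFunc.inftyValuation F l ≤ exp (-m)) :
    ∃ c : F, RatFunc.inftyValuation F (l - RatFunc.C c * RatFunc.X ^ (-m)) ≤ exp (-(m + 1)) := by
  obtain ⟨p, l', h1, h2⟩ := inf_split (l * RatFunc.X ^ m)
  have hX : (RatFunc.X : RatFunc F) ^ m ≠ 0 := zpow_ne_zero _ RatFunc.X_ne_zero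
  have hvX (j : ℤ) : RatFunc.inftyValuation F (RatFunc.X ^ j) = exp j :=
    RatFunc.inftyValuation.X_zpow F j
  have hp : RatFunc.inftyValuation F (algebraMap _ _ p) ≤ 1 := by
    have e : algebraMap F[X] (RatFunc F) p = l * RatFunc.X ^ m - l' := by rw [h1]; ring
    rw [e]
    refine (Valuation.map_sub _ _ _).trans (max_le ?_ ?_)
    · rw [map_mul, hvX]
      calc _ ≤ exp (-m) * exp m := mul_le_mul_left h _
        _ = 1 := by rw [← exp_add]; simp
    · refine h2.trans ?_
      rw [← exp_zero, exp_le_exp]; omega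
  rw [vpoly] at hp
  have hp2 : p.natDegree = 0 := by
    split_ifs at hp with h3
    · simp [h3]
    · rw [← exp_zero, exp_le_exp] at hp; omega
  refine ⟨p.coeff 0, ?_⟩
  have e : l - RatFunc.C (p.coeff 0) * RatFunc.X ^ (-m) = l' * RatFunc.X ^ (-m) := by
    have h4 : algebraMap F[X] (RatFunc F) p = RatFunc.C (p.coeff 0) := by
      rw [eq_C_of_natDegree_eq_zero hp2]; simp
    rw [h4] at h1
    have : l = (RatFunc.C (p.coeff 0) + l') * RatFunc.X ^ (-m) := by
      rw [← h1, zpow_neg, mul_assoc, mul_inv_cancel₀ hX, mul_one]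
    rw [this]; ring
  rw [e, map_mul, hvX]
  calc _ ≤ exp (-1) * exp (-m) := mul_le_mul_left h2 _
    _ = _ := by rw [← exp_add]; congr 1; ring

/-- Truncated expansion at infinity. -/
lemma inf_expand (l : RatFunc F) (m : ℤ) (h : RatFunc.inftyValuation F l ≤ exp (-m)) (j : ℕ) :
    ∃ c : ℕ → F, RatFunc.inftyValuation F
      (l - ∑ a ∈ Finset.range j, RatFunc.C (c a) * RatFunc.X ^ (-(m + a))) ≤ exp (-(m + j)) := by
  induction j with
  | zero => exact ⟨0, by simpa using h⟩
  | succ j ih =>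
    obtain ⟨c, hc⟩ := ih
    obtain ⟨d, hd⟩ := inf_residue _ _ hc
    refine ⟨Function.update c j d, ?_⟩
    rw [Finset.sum_range_succ]
    have e : ∑ a ∈ Finset.range j, RatFunc.C (Function.update c j d a) * (RatFunc.X : RatFunc F) ^ (-(m + a))
        = ∑ a ∈ Finset.range j, RatFunc.C (c a) * (RatFunc.X : RatFunc F) ^ (-(m + a)) := by
      refine Finset.sum_congr rfl fun a ha => ?_
      rw [Function.update_of_ne (by rintro rfl; simp at ha)]
    rw [e, Function.update_self, ← sub_sub]
    convert hd using 2
    push_cast; ring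

lemma inf_inter (p : F[X]) (h : algebraMap _ (RatFunc F) p ∈ AInf F) : p ∈ Set.range (C : F → F[X]) := by
  rw [mem_AInf, vpoly] at h
  refine ⟨p.coeff 0, ?_⟩
  rw [eq_comm]
  refine eq_C_of_natDegree_eq_zero ?_
  split_ifs at h with h3
  · simp [h3]
  · rw [← exp_zero, exp_le_exp] at h; omega

lemma Xneg_mem (m : ℕ) : (RatFunc.X : RatFunc F) ^ (-(m : ℤ)) ∈ AInf F := by
  rw [mem_AInf, RatFunc.inftyValuation.X_zpow, ← exp_zero, exp_le_exp]; omega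

variable [Finite F]

instance : Ring.HasFiniteQuotients (AInf F) where
  finiteQuotient {I} hI := by
    obtain ⟨a, ha, ha0⟩ := Submodule.exists_mem_ne_zero_of_ne_bot hI
    have hv0 : RatFunc.inftyValuation F (a : RatFunc F) ≠ 0 := by
      rw [Valuation.ne_zero_iff]; simpa using ha0
    have hv := a.2
    rw [mem_AInf, ← exp_log hv0, ← exp_zero, exp_le_exp] at hv
    obtain ⟨j, hj⟩ : ∃ j : ℕ, log (RatFunc.inftyValuation F (a : RatFunc F)) = -j :=
      ⟨_, by rw [Int.ofNat_natAbs_of_nonpos hv]; ring⟩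
    let φ : (Fin j → F) → AInf F ⧸ I := fun c =>
      Ideal.Quotient.mk I (∑ i : Fin j, algebraMap F (AInf F) (c i) * ⟨_, Xneg_mem (i : ℕ)⟩)
    refine Finite.of_surjective φ fun z => ?_
    obtain ⟨z, rfl⟩ := Ideal.Quotient.mk_surjective z
    obtain ⟨c, hc⟩ := inf_expand (z : RatFunc F) 0 (by simpa using mem_AInf.1 z.2) j
    refine ⟨fun i => c i, ?_⟩
    rw [eq_comm, Ideal.Quotient.eq]
    set w : AInf F := z - ∑ i : Fin j, algebraMap F (AInf F) (c i) * ⟨_, Xneg_mem (i : ℕ)⟩ with hw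
    have hwv : RatFunc.inftyValuation F (w : RatFunc F) ≤ RatFunc.inftyValuation F (a : RatFunc F) := by
      rw [← exp_log hv0, hj]
      convert hc using 2
      · rw [hw, ← Fin.sum_univ_eq_sum_range (fun a => RatFunc.C (c a) * (RatFunc.X : RatFunc F) ^ (-(0 + (a:ℤ))))]
        push_cast
        congr 1
        refine Finset.sum_congr rfl fun i _ => ?_
        simp [RatFunc.algebraMap_eq_C]
      · ring
    have ha0' : (a : RatFunc F) ≠ 0 := by simpa using ha0
    have hu : (w : RatFunc F) / a ∈ AInf F := by
      rw [mem_AInf, map_div₀]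
      exact div_le_one_of_le₀ hwv zero_le
    have : w = ⟨_, hu⟩ * a := by
      apply Subtype.ext
      simp [div_mul_cancel₀ _ ha0']
    rw [this]
    exact I.mul_mem_left _ ha

instance : Ring.HasFiniteQuotients F[X] where
  finiteQuotient {I} hI := by
    obtain ⟨a, rfl⟩ := IsPrincipalIdealRing.principal I
    have ha : a ≠ 0 := by rintro rfl; simp at hI
    have : Module.Finite F (AdjoinRoot a) := (AdjoinRoot.powerBasis ha).finite
    exact Module.finite_of_finite F (M := AdjoinRoot a)

instance : IsDedekindDomain (AInf F) where

end RatFuncInfty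
end Scat

/-! ### Function fields over finite fields -/

namespace Scat
open WithZero IsDedekindDomain Polynomial

set_option linter.unusedSectionVars false

section FunctionField
variable (F : Type*) [Field F] (K : Type*) [Field K]
  [Algebra F K] [Algebra F[X] K] [Algebra (RatFunc F) K] [IsScalarTower F F[X] K]
  [IsScalarTower F[X] (RatFunc F) K] [IsScalarTower F (RatFunc F) K]

instance towerAInf : IsScalarTower (AInf F) (RatFunc F) K :=
  IsScalarTower.of_algebraMap_eq fun _ => rfl
instance towerFAInf : IsScalarTower F (AInf F) K :=
  IsScalarTower.of_algebraMap_eq fun c => by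
    rw [IsScalarTower.algebraMap_apply F (RatFunc F) K,
      IsScalarTower.algebraMap_apply (AInf F) (RatFunc F) K]; rfl

/-- The ring of functions in `K` regular away from infinity. -/
noncomputable abbrev OO := integralClosure F[X] K
/-- The ring of functions in `K` regular at infinity. -/
noncomputable abbrev PP := integralClosure (AInf F) K

instance towerOO : IsScalarTower F (OO F K) K := inferInstance
instance towerPP : IsScalarTower F (PP F K) K := inferInstance

instance : IsDomain (PP F K) := Subalgebra.isDomain _

lemma algebraMap_PP_injective : Function.Injective (algebraMap (AInf F) (PP F K)) := by
  intro a b h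
  have h2 : algebraMap (AInf F) K a = algebraMap (AInf F) K b := congrArg Subtype.val h
  rw [IsScalarTower.algebraMap_apply (AInf F) (RatFunc F) K,
    IsScalarTower.algebraMap_apply (AInf F) (RatFunc F) K] at h2
  exact Subtype.ext ((algebraMap (RatFunc F) K).injective h2)

variable [FiniteDimensional (RatFunc F) K]

instance : IsFractionRing (OO F K) K :=
  integralClosure.isFractionRing_of_finite_extension (RatFunc F) K
instance : IsFractionRing (PP F K) K :=
  integralClosure.isFractionRing_of_finite_extension (RatFunc F) K

/-- A function regular at all places is algebraic over `F`, and there are finitely many of these: the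
coefficients of its minimal polynomial are polynomials without a pole at infinity. -/
lemma hell_finite [Finite F] :
    (Set.range (algebraMap (OO F K) K) ∩ Set.range (algebraMap (PP F K) K)).Finite := by
  have hfin : (degreeLT F (Module.finrank (RatFunc F) K + 1) : Set F[X]).Finite := by
    have : Finite (degreeLT F (Module.finrank (RatFunc F) K + 1)) :=
      Finite.of_equiv _ (degreeLTEquiv F _).symm.toEquiv
    exact Set.toFinite _
  refine ((hfin.subset (Set.sdiff_subset (t := {0}))).biUnion
    (t := fun r => {z : K | aeval z r = 0}) fun r hr => ?_).subset ?_
  · have hr0 : r.map (algebraMap F K) ≠ 0 := by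
      rw [Ne, Polynomial.map_eq_zero]; exact hr.2
    refine ((r.map (algebraMap F K)).roots.toFinset.finite_toSet).subset fun z hz => ?_
    simp only [Finset.mem_coe, Multiset.mem_toFinset]
    rw [mem_roots hr0, IsRoot.def, eval_map_algebraMap]
    exact hz
  · rintro z ⟨⟨a, rfl⟩, ⟨b, hb⟩⟩
    have hO : IsIntegral F[X] (a : K) := a.2
    have hP : IsIntegral (AInf F) (a : K) := by
      have := b.2
      rw [show (a : K) = b from hb.symm]; exact this
    have eO := minpoly.isIntegrallyClosed_eq_field_fractions' (RatFunc F) hO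
    have eP := minpoly.isIntegrallyClosed_eq_field_fractions' (RatFunc F) hP
    have hL : IsIntegral (RatFunc F) (a : K) := hO.tower_top
    have hc : ∀ m, ∃ c : F, (minpoly (RatFunc F) (a : K)).coeff m = algebraMap F (RatFunc F) c := by
      intro m
      have h1 : (minpoly (RatFunc F) (a : K)).coeff m =
        algebraMap _ _ ((minpoly F[X] (a : K)).coeff m) := by rw [eO, coeff_map]
      have h2 : (minpoly (RatFunc F) (a : K)).coeff m ∈ AInf F := by
        have : (minpoly (RatFunc F) (a : K)).coeff m =
          ((minpoly (AInf F) (a : K)).coeff m : RatFunc F) := by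
          rw [show (minpoly (RatFunc F) (a : K)) = _ from eP, coeff_map]; rfl
        rw [this]; exact Subtype.prop _
      rw [h1] at h2
      obtain ⟨c, hc⟩ := inf_inter _ h2
      exact ⟨c, by rw [h1, ← hc]; simp [RatFunc.algebraMap_eq_C]⟩
    have hl : minpoly (RatFunc F) (a : K) ∈ lifts (algebraMap F (RatFunc F)) := by
      rw [lifts_iff_coeff_lifts]
      intro m
      obtain ⟨c, hc⟩ := hc m
      exact ⟨c, hc.symm⟩
    obtain ⟨r, hr⟩ := hl
    rw [coe_mapRingHom] at hr
    have hr0 : r ≠ 0 := by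
      rintro rfl
      rw [Polynomial.map_zero] at hr
      exact minpoly.ne_zero hL hr.symm
    simp only [Set.mem_iUnion]
    refine ⟨r, ⟨?_, hr0⟩, ?_⟩
    · rw [SetLike.mem_coe, mem_degreeLT, ← natDegree_lt_iff_degree_lt hr0,
        ← natDegree_map (algebraMap F (RatFunc F)), hr]
      exact Nat.lt_succ_of_le (minpoly.natDegree_le _)
    · show aeval (a : K) r = 0
      rw [← aeval_map_algebraMap (RatFunc F), hr, minpoly.aeval]

variable [Algebra.IsSeparable (RatFunc F) K] [Finite F]

instance : IsDedekindDomain (OO F K) := integralClosure.isDedekindDomain F[X] (RatFunc F) K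
instance : IsDedekindDomain (PP F K) :=
  IsIntegralClosure.isDedekindDomain (AInf F) (RatFunc F) K (PP F K)
instance : Module.Finite F[X] (OO F K) := IsIntegralClosure.finite F[X] (RatFunc F) K _
instance : Module.Finite (AInf F) (PP F K) :=
  IsIntegralClosure.finite (AInf F) (RatFunc F) K (PP F K)
instance : Ring.HasFiniteQuotients (OO F K) := .of_module_finite F[X] _
instance : Ring.HasFiniteQuotients (PP F K) := .of_module_finite (AInf F) _

lemma OO_finite (v : HeightOneSpectrum (OO F K)) : Module.Finite F (OO F K ⧸ v.asIdeal) := by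
  have : Finite (OO F K ⧸ v.asIdeal) := Ring.HasFiniteQuotients.finiteQuotient v.ne_bot
  exact Module.Finite.of_finite

lemma PP_finite (v : HeightOneSpectrum (PP F K)) : Module.Finite F (PP F K ⧸ v.asIdeal) := by
  have : Finite (PP F K ⧸ v.asIdeal) := Ring.HasFiniteQuotients.finiteQuotient v.ne_bot
  exact Module.Finite.of_finite

lemma OO_bdd (n : ℕ) :
    {v : HeightOneSpectrum (OO F K) | Module.finrank F (OO F K ⧸ v.asIdeal) ≤ n}.Finite := by
  refine (Ring.HasFiniteQuotients.finite_cardQuot_heightOneSpectrum_le (Nat.card F ^ n)).subset ?_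
  intro v hv
  have := OO_finite F K v
  show v.asIdeal.cardQuot ≤ _
  rw [Submodule.cardQuot_apply, Module.natCard_eq_pow_finrank (K := F)]
  exact Nat.pow_le_pow_right Nat.card_pos hv

lemma PP_places : Finite (HeightOneSpectrum (PP F K)) := by
  let t : AInf F := ⟨_, Xneg_mem 1⟩
  have ht0 : t ≠ 0 := by
    intro h
    have := congrArg (Subtype.val) h
    simp [t, RatFunc.X_ne_zero] at this
  have hinj : Function.Injective (algebraMap (AInf F) (PP F K)) :=
    algebraMap_PP_injective F K
  have hfin := Ring.HasFiniteQuotients.finite_setOfPred_mem (algebraMap (AInf F) (PP F K) t)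
    (fun h => ht0 (hinj (h.trans (map_zero _).symm)))
  have := hfin.to_subtype
  refine Finite.of_injective (β := {I : Ideal (PP F K) | algebraMap (AInf F) (PP F K) t ∈ I})
    (fun v => ⟨v.asIdeal, ?_⟩) fun v w h => HeightOneSpectrum.ext (congrArg Subtype.val h)
  show _ ∈ v.asIdeal
  have hne := Ideal.under_ne_bot (AInf F) v.ne_bot
  obtain ⟨a, ha, ha0⟩ := Submodule.exists_mem_ne_zero_of_ne_bot hne
  have hv0 : RatFunc.inftyValuation F (a : RatFunc F) ≠ 0 := by
    rw [Valuation.ne_zero_iff]; simpa using ha0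
  have hv := mem_AInf.1 a.2
  rw [← exp_log hv0, ← exp_zero, exp_le_exp] at hv
  obtain ⟨j, hj⟩ : ∃ j : ℕ, log (RatFunc.inftyValuation F (a : RatFunc F)) = -j :=
    ⟨_, by rw [Int.ofNat_natAbs_of_nonpos hv]; ring⟩
  have hu : (RatFunc.X : RatFunc F) ^ (-(j : ℤ)) / a ∈ AInf F := by
    rw [mem_AInf, map_div₀, RatFunc.inftyValuation.X_zpow, ← exp_log hv0, hj, ← exp_sub]
    simp
  have ha0' : (a : RatFunc F) ≠ 0 := by simpa using ha0
  have hmem : t ^ j ∈ v.asIdeal.under (AInf F) := by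
    have : t ^ j = ⟨_, hu⟩ * a := by
      apply Subtype.ext
      simp [t, div_mul_cancel₀ _ ha0']
    rw [this]; exact Ideal.mul_mem_left _ _ ha
  have hpr : (v.asIdeal.under (AInf F)).IsPrime := inferInstance
  exact hpr.mem_of_pow_mem _ hmem
end FunctionField
end Scat

/-! ### The genus bound -/

namespace Scat
open WithZero IsDedekindDomain Polynomial
set_option linter.unusedSectionVars false
section FunctionField
variable (F : Type*) [Field F] (K : Type*) [Field K]
  [Algebra F K] [Algebra F[X] K] [Algebra (RatFunc F) K] [IsScalarTower F F[X] K]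
  [IsScalarTower F[X] (RatFunc F) K] [IsScalarTower F (RatFunc F) K]
  [Finite F]

/-- The group `O + P` inside `K`, whose index is the cardinality of `H¹(0)`. -/
noncomputable abbrev TT : AddSubgroup K :=
  (algebraMap (OO F K) K).range.toAddSubgroup ⊔ (algebraMap (PP F K) K).range.toAddSubgroup

variable {F K}
lemma mem_TT_of_O {z : K} (h : IsIntegral F[X] z) : z ∈ TT F K :=
  AddSubgroup.mem_sup_left ⟨⟨z, h⟩, rfl⟩
lemma mem_TT_of_P {z : K} (h : IsIntegral (AInf F) z) : z ∈ TT F K :=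
  AddSubgroup.mem_sup_right ⟨⟨z, h⟩, rfl⟩

lemma algebraMap_integral_AInf {l : RatFunc F} (h : l ∈ AInf F) :
    IsIntegral (AInf F) (algebraMap (RatFunc F) K l) :=
  isIntegral_algebraMap (R := AInf F) (A := K) (x := ⟨l, h⟩)

/-- Every multiple `l y ^ j` is, modulo `O + P`, a combination of the `j` elements
`X ^ (-(a + 1)) y ^ j`. -/
lemma TT_reduce {y : K} (hy : IsIntegral F[X] y)
    (hy' : IsIntegral (AInf F) (algebraMap (RatFunc F) K RatFunc.X⁻¹ * y)) (l : RatFunc F) (j : ℕ) :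
    ∃ c : ℕ → F, algebraMap (RatFunc F) K l * y ^ j -
      ∑ a ∈ Finset.range j,
        algebraMap (RatFunc F) K (RatFunc.C (c a) * RatFunc.X ^ (-(1 + a : ℤ))) * y ^ j ∈ TT F K := by
  obtain ⟨p, l', h1, h2⟩ := inf_split l
  obtain ⟨c, hc⟩ := inf_expand l' 1 h2 j
  refine ⟨c, ?_⟩
  set s := ∑ a ∈ Finset.range j, RatFunc.C (c a) * RatFunc.X ^ (-(1 + a : ℤ)) with hs
  have e : algebraMap (RatFunc F) K l * y ^ j -
      ∑ a ∈ Finset.range j,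
        algebraMap (RatFunc F) K (RatFunc.C (c a) * RatFunc.X ^ (-(1 + a : ℤ))) * y ^ j
      = algebraMap F[X] K p * y ^ j + algebraMap (RatFunc F) K ((l' - s) * RatFunc.X ^ (j : ℤ)) *
        (algebraMap (RatFunc F) K RatFunc.X⁻¹ * y) ^ j := by
    rw [← Finset.sum_mul, ← map_sum, ← hs, h1, IsScalarTower.algebraMap_apply F[X] (RatFunc F) K,
      mul_pow, ← map_pow, ← mul_assoc (algebraMap (RatFunc F) K _), ← map_mul]
    have : (l' - s) * RatFunc.X ^ (j : ℤ) * RatFunc.X⁻¹ ^ j = l' - s := by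
      rw [zpow_natCast, mul_assoc, ← mul_pow, mul_inv_cancel₀ RatFunc.X_ne_zero, one_pow, mul_one]
    rw [this, map_add, map_sub]; ring
  rw [e]
  refine add_mem (mem_TT_of_O (isIntegral_algebraMap.mul (hy.pow j)))
    (mem_TT_of_P ((algebraMap_integral_AInf ?_).mul (hy'.pow j)))
  rw [mem_AInf, map_mul, RatFunc.inftyValuation.X_zpow]
  calc _ ≤ exp (-(1 + (j : ℤ))) * exp (j : ℤ) := mul_le_mul_left hc _
    _ ≤ 1 := by rw [← exp_add, ← exp_zero, exp_le_exp]; omega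

/-- The genus bound `|K / (O + P)| ≤ q ^ (N (N - 1) / 2)` for a plane curve of degree `N`. -/
lemma TT_index {y : K} (hy : IsIntegral F[X] y)
    (hy' : IsIntegral (AInf F) (algebraMap (RatFunc F) K RatFunc.X⁻¹ * y)) (N : ℕ)
    (hspan : ∀ z : K, ∃ l : ℕ → RatFunc F,
      z = ∑ j ∈ Finset.range N, algebraMap (RatFunc F) K (l j) * y ^ j) :
    (TT F K).index ≠ 0 ∧ (TT F K).index ≤ Nat.card F ^ (N * (N - 1) / 2) := by
  let φ : ((Σ j : Fin N, Fin j) → F) → K ⧸ TT F K := fun c =>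
    QuotientAddGroup.mk (∑ j : Fin N, ∑ a : Fin j,
      algebraMap (RatFunc F) K (RatFunc.C (c ⟨j, a⟩) * RatFunc.X ^ (-(1 + (a : ℕ) : ℤ))) * y ^ (j : ℕ))
  have hφ : Function.Surjective φ := by
    intro z
    obtain ⟨z, rfl⟩ := QuotientAddGroup.mk_surjective z
    obtain ⟨l, rfl⟩ := hspan z
    choose c hc using fun j => TT_reduce hy hy' (l j) j
    refine ⟨fun s => c s.1 s.2, ?_⟩
    rw [QuotientAddGroup.eq, neg_add_eq_sub, ← Fin.sum_univ_eq_sum_range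
      (fun j => algebraMap (RatFunc F) K (l j) * y ^ j), ← Finset.sum_sub_distrib]
    refine sum_mem fun j _ => ?_
    have := hc j
    rwa [← Fin.sum_univ_eq_sum_range (fun a => algebraMap (RatFunc F) K
      (RatFunc.C (c j a) * RatFunc.X ^ (-(1 + a : ℤ))) * y ^ (j : ℕ))] at this
  have : Finite (K ⧸ TT F K) := Finite.of_surjective φ hφ
  refine ⟨AddSubgroup.index_ne_zero_of_finite, ?_⟩
  have h1 := Nat.card_le_card_of_surjective φ hφ
  have h2 : Nat.card ((Σ j : Fin N, Fin j) → F) = Nat.card F ^ (N * (N - 1) / 2) := by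
    rw [Nat.card_fun, Nat.card_sigma]
    simp only [Nat.card_fin]
    rw [Fin.sum_univ_eq_sum_range (fun j => j), Finset.sum_range_id]
  rw [h2] at h1
  exact h1

end FunctionField
end Scat

/-! ### Points and homomorphisms -/

namespace Scat
open WithZero IsDedekindDomain Polynomial
set_option linter.unusedSectionVars false

section Points

/-- Evaluation of a bivariate polynomial over `F` at a point with coordinates in `Ω`. -/
noncomputable def ev (F : Type*) {Ω : Type*} [Field F] [Field Ω] [Algebra F Ω] (x0 y0 : Ω) : F[X][X] →+* Ω :=
  eval₂RingHom (eval₂RingHom (algebraMap F Ω) x0) y0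

section
variable {F Ω : Type*} [Field F] [Field Ω] [Algebra F Ω] (x0 y0 : Ω)
@[simp] lemma ev_C (p : F[X]) : ev F x0 y0 (C p) = aeval x0 p := by
  simp [ev, aeval_def]
@[simp] lemma ev_X : ev F x0 y0 (X : F[X][X]) = y0 := by
  simp [ev]

lemma ev_pow [Finite F] (r : ℕ) (hx : x0 ^ Nat.card F ^ r = x0) (hy : y0 ^ Nat.card F ^ r = y0) (g : F[X][X]) :
    ev F x0 y0 g ^ Nat.card F ^ r = ev F x0 y0 g := by
  have := Fintype.ofFinite F
  let fr : Ω →ₐ[F] Ω := FiniteField.frobeniusAlgHom F Ω ^ r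
  have hfr : ∀ z : Ω, fr z = z ^ Nat.card F ^ r := fun z => by
    rw [Nat.card_eq_fintype_card]
    simp only [fr, AlgHom.coe_pow, FiniteField.coe_frobeniusAlgHom, pow_iterate]
  rw [← hfr]
  have h2 : (fr : Ω →+* Ω).comp (ev F x0 y0) = ev F x0 y0 := by
    refine Polynomial.ringHom_ext (fun p => ?_) ?_
    · simp only [RingHom.comp_apply, ev_C]
      show fr (aeval x0 p) = _
      rw [← aeval_algHom_apply, hfr, hx]
    · simp only [RingHom.comp_apply, ev_X]
      exact (hfr _).trans hy
  exact congrArg (fun f => f g) h2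
end

variable {F : Type*} [Field F] {K : Type*} [Field K]
  [Algebra F K] [Algebra F[X] K] [Algebra (RatFunc F) K] [IsScalarTower F F[X] K]
  [IsScalarTower F[X] (RatFunc F) K] [IsScalarTower F (RatFunc F) K]
  {Ω : Type*} [Field Ω] [Algebra F Ω]
  {y : K} {H0 : F[X][X]} (hroot : aeval y H0 = 0) (hmin : ∀ g : F[X][X], aeval y g = 0 → H0 ∣ g)
  {D : F[X]} (hD : ∀ o : K, IsIntegral F[X] o → ∃ g : F[X][X], algebraMap F[X] K D * o = aeval y g)

include hroot hmin hD

/-- A point of the plane curve outside the conductor locus `D = 0` defines a homomorphism on the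
integral closure. -/
lemma exists_hom {x0 y0 : Ω} (h : ev F x0 y0 H0 = 0) (hDx : aeval x0 D ≠ 0) :
    ∃ φ : OO F K →ₐ[F] Ω, ∀ (o : OO F K) (g : F[X][X]),
      algebraMap F[X] K D * o = aeval y g → φ o * aeval x0 D = ev F x0 y0 g := by
  have key : ∀ g : F[X][X], aeval y g = 0 → ev F x0 y0 g = 0 := fun g hg => by
    obtain ⟨u, rfl⟩ := hmin g hg
    rw [map_mul, h, zero_mul]
  have key2 : ∀ g g' : F[X][X], aeval y g = aeval y g' → ev F x0 y0 g = ev F x0 y0 g' := by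
    intro g g' e
    rw [← sub_eq_zero, ← map_sub]
    exact key _ (by rw [map_sub, e, sub_self])
  choose G hG using fun o : OO F K => hD o o.2
  have hC : ∀ p : F[X], aeval y (C p) = algebraMap F[X] K p := fun p => aeval_C _ _
  have hF : ∀ p : F[X], ev F x0 y0 (G (algebraMap F[X] (OO F K) p)) = aeval x0 D * aeval x0 p := by
    intro p
    rw [← ev_C x0 y0 D, ← ev_C x0 y0 p, ← map_mul]
    refine key2 _ _ ?_
    rw [← hG, map_mul, hC, hC]; rfl
  let φ : OO F K →+* Ω :=
    { toFun := fun o => ev F x0 y0 (G o) / aeval x0 D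
      map_one' := by
        have := hF 1
        rw [map_one, map_one, mul_one] at this
        rw [this, div_self hDx]
      map_zero' := by
        have := hF 0
        rw [map_zero, map_zero, mul_zero] at this
        rw [this, zero_div]
      map_add' := fun a b => by
        rw [← add_div, ← map_add]
        congr 1
        refine key2 _ _ ?_
        rw [map_add, ← hG, ← hG, ← hG]; push_cast; ring
      map_mul' := fun a b => by
        rw [div_mul_div_comm, div_eq_div_iff hDx (mul_ne_zero hDx hDx), ← mul_assoc]
        congr 1
        rw [← ev_C x0 y0 D, ← map_mul, ← map_mul]
        refine key2 _ _ ?_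
        rw [map_mul, map_mul, hC, ← hG, ← hG, ← hG]; push_cast; ring }
  refine ⟨{ φ with commutes' := fun c => ?_ }, fun o g hg => ?_⟩
  · show ev F x0 y0 (G (algebraMap F (OO F K) c)) / aeval x0 D = _
    rw [IsScalarTower.algebraMap_apply F F[X] (OO F K), hF, mul_div_cancel_left₀ _ hDx]
    simp
  · show ev F x0 y0 (G o) / aeval x0 D * _ = _
    rw [div_mul_cancel₀ _ hDx]
    exact key2 _ _ (by rw [← hG, hg])

/-- The homomorphism attached to a point with coordinates in the field of `q ^ r` elements takes its
values there. -/
lemma exists_hom' [Finite F] (hy : IsIntegral F[X] y) {x0 y0 : Ω} (h : ev F x0 y0 H0 = 0) (hDx : aeval x0 D ≠ 0)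
    (r : ℕ) (hx0 : x0 ^ Nat.card F ^ r = x0) (hy0 : y0 ^ Nat.card F ^ r = y0) :
    ∃ φ : OO F K →ₐ[F] Ω, φ (algebraMap F[X] (OO F K) X) = x0 ∧ φ ⟨y, hy⟩ = y0 ∧
      (∀ p : F[X], φ (algebraMap F[X] (OO F K) p) = aeval x0 p) ∧
      ∀ o, φ o ^ Nat.card F ^ r = φ o := by
  obtain ⟨φ, hφ⟩ := exists_hom hroot hmin hD h hDx
  have hC : ∀ p : F[X], aeval y (C p) = algebraMap F[X] K p := fun p => aeval_C _ _
  have h1 : ∀ p : F[X], φ (algebraMap F[X] (OO F K) p) = aeval x0 p := fun p => by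
    have := hφ (algebraMap F[X] (OO F K) p) (C (p * D)) (by rw [hC, map_mul, mul_comm]; rfl)
    rw [ev_C, map_mul] at this
    exact mul_right_cancel₀ hDx this
  refine ⟨φ, by rw [h1, aeval_X], ?_, h1, fun o => ?_⟩
  · have := hφ ⟨y, hy⟩ (X * C D) (by rw [map_mul, hC, aeval_X, mul_comm])
    rw [map_mul, ev_C, ev_X] at this
    exact mul_right_cancel₀ hDx this
  · obtain ⟨g, hg⟩ := hD o o.2
    have e := hφ o g hg
    have h3 : aeval x0 D ^ Nat.card F ^ r = aeval x0 D := by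
      rw [← ev_C x0 y0 D]; exact ev_pow _ _ r hx0 hy0 _
    have h4 := ev_pow x0 y0 r hx0 hy0 g
    rw [← e, mul_pow, h3] at h4
    exact mul_right_cancel₀ hDx h4

end Points
end Scat

/-! ### Points and places -/

namespace Scat
open WithZero IsDedekindDomain Polynomial
set_option linter.unusedSectionVars false

section PointCount
variable {F : Type*} [Field F] {K : Type*} [Field K]
  [Algebra F K] [Algebra F[X] K] [Algebra (RatFunc F) K] [IsScalarTower F F[X] K]
  [IsScalarTower F[X] (RatFunc F) K] [IsScalarTower F (RatFunc F) K]
  [FiniteDimensional (RatFunc F) K] [Algebra.IsSeparable (RatFunc F) K] [Finite F]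
  {Ω : Type*} [Field Ω] [Algebra F Ω]
  {y : K} {H0 : F[X][X]} (hroot : aeval y H0 = 0) (hmin : ∀ g : F[X][X], aeval y g = 0 → H0 ∣ g)
  {D : F[X]} (hD : ∀ o : K, IsIntegral F[X] o → ∃ g : F[X][X], algebraMap F[X] K D * o = aeval y g)

/-- Over a finite field, an extension whose elements are all fixed by the `r`-th power of Frobenius
has degree dividing `r`. -/
lemma finrank_dvd_of_frob {E : Type*} [Field E] [Algebra F E] [Finite E] (r : ℕ)
    (h : ∀ z : E, z ^ Nat.card F ^ r = z) : Module.finrank F E ∣ r := by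
  have := Fintype.ofFinite F
  rw [← FiniteField.orderOf_frobeniusAlgHom]
  refine orderOf_dvd_of_pow_eq_one (AlgHom.ext fun z => ?_)
  rw [AlgHom.coe_pow, FiniteField.coe_frobeniusAlgHom, pow_iterate, ← Nat.card_eq_fintype_card]
  exact h z

lemma algebraMap_OO_injective : Function.Injective (algebraMap F[X] (OO F K)) := by
  intro a b h
  have h2 : algebraMap F[X] K a = algebraMap F[X] K b := congrArg Subtype.val h
  rw [IsScalarTower.algebraMap_apply F[X] (RatFunc F) K,
    IsScalarTower.algebraMap_apply F[X] (RatFunc F) K] at h2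
  exact IsFractionRing.injective F[X] (RatFunc F) ((algebraMap (RatFunc F) K).injective h2)

include hroot hmin hD

/-- Distinct points outside the locus `D = 0` give distinct homomorphisms on `O`; the kernel of such a
homomorphism is a place of degree dividing `r`, and it is shared by as many homomorphisms as its
degree. -/
lemma points_le_ptCount (hy : IsIntegral F[X] y) (r : ℕ) (hr : 1 ≤ r) (Z : Finset (Ω × Ω))
    (hZ : ∀ z ∈ Z, ev F z.1 z.2 H0 = 0 ∧ aeval z.1 D ≠ 0 ∧
      z.1 ^ Nat.card F ^ r = z.1 ∧ z.2 ^ Nat.card F ^ r = z.2) :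
    Z.card ≤ ptCount (plDeg (OO F K) (PP F K) F) r := by
  have hex : ∀ z : Z, ∃ φ : OO F K →ₐ[F] Ω, φ (algebraMap F[X] (OO F K) X) = z.1.1 ∧
      φ ⟨y, hy⟩ = z.1.2 ∧ (∀ p : F[X], φ (algebraMap F[X] (OO F K) p) = aeval z.1.1 p) ∧
      ∀ o, φ o ^ Nat.card F ^ r = φ o := fun z => by
    obtain ⟨h1, h2, h3, h4⟩ := hZ z.1 z.2
    exact exists_hom' hroot hmin hD hy h1 h2 r h3 h4
  choose φ hφx hφy hφp hφr using hex
  have hne : ∀ z, RingHom.ker (φ z) ≠ ⊥ := by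
    intro z h
    have hq : 1 < Nat.card F ^ r := Nat.one_lt_pow (by omega) Finite.one_lt_card
    have h0 : (X ^ Nat.card F ^ r - X : F[X]) ≠ 0 := FiniteField.X_pow_card_sub_X_ne_zero _ hq
    have h1 : algebraMap F[X] (OO F K) (X ^ Nat.card F ^ r - X) ∈ RingHom.ker (φ z) := by
      rw [RingHom.mem_ker, hφp]
      simp [(hZ z.1 z.2).2.2.1]
    rw [h, Ideal.mem_bot] at h1
    exact h0 (algebraMap_OO_injective (h1.trans (map_zero _).symm))
  let v : Z → HeightOneSpectrum (OO F K) := fun z =>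
    ⟨RingHom.ker (φ z), RingHom.ker_isPrime _, hne z⟩
  have hv : ∀ z, plDeg (OO F K) (PP F K) F (Sum.inl (v z)) ∣ r := by
    intro z
    show Module.finrank F (OO F K ⧸ (v z).asIdeal) ∣ r
    have := (v z).isMaximal
    let _ := Ideal.Quotient.field (v z).asIdeal
    have : Finite (OO F K ⧸ (v z).asIdeal) := Ring.HasFiniteQuotients.finiteQuotient (v z).ne_bot
    refine finrank_dvd_of_frob r fun w => ?_
    obtain ⟨o, rfl⟩ := Ideal.Quotient.mk_surjective w
    rw [← map_pow, Ideal.Quotient.eq]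
    show _ ∈ RingHom.ker (φ z)
    rw [RingHom.mem_ker, map_sub, map_pow, hφr, sub_self]
  have hfib : ∀ w : HeightOneSpectrum (OO F K),
      (Finset.univ.filter fun z => v z = w).card ≤ plDeg (OO F K) (PP F K) F (Sum.inl w) := by
    intro w
    show _ ≤ Module.finrank F (OO F K ⧸ w.asIdeal)
    have := OO_finite F K w
    have := w.isMaximal
    let _ := Ideal.Quotient.field w.asIdeal
    refine le_trans ?_ (card_algHom_le_finrank F (OO F K ⧸ w.asIdeal) Ω)
    have e : (Finset.univ.filter fun z => v z = w).card = Nat.card {z // v z = w} := by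
      rw [Nat.card_eq_fintype_card, Fintype.card_subtype]
    rw [e]
    have hker : ∀ z : {z // v z = w}, ∀ a ∈ w.asIdeal, φ z.1 a = 0 := by
      rintro ⟨z, rfl⟩ a ha
      exact ha
    refine Nat.card_le_card_of_injective
      (fun z : {z // v z = w} => Ideal.Quotient.liftₐ w.asIdeal (φ z.1) (hker z)) ?_
    intro z z' h
    have h1 : φ z.1 = φ z'.1 := by
      ext o
      have := congrArg (fun f => f (Ideal.Quotient.mk _ o)) h
      exact this
    refine Subtype.ext (Subtype.ext (Prod.ext ?_ ?_))
    · rw [← hφx, ← hφx, h1]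
    · rw [← hφy, ← hφy, h1]
  have hfin : {w | plDeg (OO F K) (PP F K) F w ∣ r}.Finite := by
    have := PP_places F K
    refine (((OO_bdd F K r).image Sum.inl).union (Set.finite_range Sum.inr)).subset ?_
    rintro (w | w) hw
    · exact Or.inl ⟨w, Nat.le_of_dvd hr hw, rfl⟩
    · exact Or.inr ⟨w, rfl⟩
  rw [ptCount, if_neg (by omega), finsum_mem_eq_finite_toFinset_sum _ hfin]
  rw [← Fintype.card_coe, ← Finset.card_univ, Finset.card_eq_sum_card_fiberwise
    (f := fun z => (Sum.inl (v z) : Place (OO F K) (PP F K))) (t := hfin.toFinset)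
    (fun z _ => by simpa using hv z)]
  refine Finset.sum_le_sum fun w _ => ?_
  rcases w with w | w
  · simpa using hfib w
  · simp
end PointCount
end Scat

/-! ### Places over a point of the line -/

namespace Scat
open WithZero IsDedekindDomain Polynomial
set_option linter.unusedSectionVars false
set_option linter.deprecated false

section Fibre
variable {R S L K : Type*} [CommRing R] [IsDedekindDomain R] [CommRing S] [IsDedekindDomain S] [Algebra R S]
  [Field L] [Field K] [Algebra R L] [IsFractionRing R L] [Algebra S K] [IsFractionRing S K]
  [Algebra L K] [Algebra R K] [IsScalarTower R L K] [IsScalarTower R S K] [Module.Finite R S]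
  [NoZeroSMulDivisors R S]

variable (S L K) in
/-- At most `[K : L]` primes lie over a given prime. -/
lemma places_over (p : Ideal R) [p.IsMaximal] (hp : p ≠ ⊥) :
    {v : HeightOneSpectrum S | v.asIdeal.under R = p}.Finite ∧
    {v : HeightOneSpectrum S | v.asIdeal.under R = p}.ncard ≤ Module.finrank L K := by
  have h1 : Set.MapsTo (fun v : HeightOneSpectrum S => v.asIdeal)
    {v : HeightOneSpectrum S | v.asIdeal.under R = p} (IsDedekindDomain.primesOverFinset p S) := by
    intro v hv
    rw [Finset.mem_coe, IsDedekindDomain.mem_primesOverFinset_iff hp]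
    exact ⟨v.isPrime, ⟨hv.symm⟩⟩
  have h2 : Set.InjOn (fun v : HeightOneSpectrum S => v.asIdeal)
    {v : HeightOneSpectrum S | v.asIdeal.under R = p} := fun v _ w _ h => HeightOneSpectrum.ext h
  refine ⟨Set.Finite.of_injOn h1 h2 (Finset.finite_toSet _), ?_⟩
  refine le_trans ?_ (Ideal.card_primesOverFinset_le_finrank S L K hp)
  rw [← Set.ncard_coe_finset]
  exact Set.ncard_le_ncard_of_injOn _ h1 h2 (Finset.finite_toSet _)
end Fibre

section
variable (F : Type*) [Field F] (K : Type*) [Field K]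
  [Algebra F K] [Algebra F[X] K] [Algebra (RatFunc F) K] [IsScalarTower F F[X] K]
  [IsScalarTower F[X] (RatFunc F) K] [IsScalarTower F (RatFunc F) K]
  [FiniteDimensional (RatFunc F) K] [Algebra.IsSeparable (RatFunc F) K] [Finite F]

lemma PP_count : Nat.card (HeightOneSpectrum (PP F K)) ≤ Module.finrank (RatFunc F) K := by
  have hV : IsLocalRing (AInf F) := by
    have : ValuationRing (AInf F) := by
      rw [ValuationRing.iff_isInteger_or_isInteger _ (RatFunc F)]
      intro z
      rcases le_total (RatFunc.inftyValuation F z) 1 with h | h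
      · exact Or.inl ⟨⟨z, mem_AInf.2 h⟩, rfl⟩
      · refine Or.inr ⟨⟨z⁻¹, ?_⟩, rfl⟩
        rw [mem_AInf, map_inv₀]; exact inv_le_one_of_one_le₀ h
    infer_instance
  have hmax : ∀ v : HeightOneSpectrum (PP F K),
      v.asIdeal.under (AInf F) = IsLocalRing.maximalIdeal (AInf F) := fun v =>
    IsLocalRing.eq_maximalIdeal (Ring.DimensionLEOne.maximalOfPrime
      (Ideal.under_ne_bot (AInf F) v.ne_bot) inferInstance)
  rcases isEmpty_or_nonempty (HeightOneSpectrum (PP F K)) with h | ⟨⟨v⟩⟩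
  · simp
  have : NoZeroSMulDivisors (AInf F) (PP F K) := by
    constructor
    intro c x h
    rw [Algebra.smul_def, mul_eq_zero] at h
    exact h.imp_left fun h => algebraMap_PP_injective F K (h.trans (map_zero _).symm)
  have hp : IsLocalRing.maximalIdeal (AInf F) ≠ ⊥ := by
    rw [← hmax v]; exact Ideal.under_ne_bot (AInf F) v.ne_bot
  have h := (places_over (PP F K) (RatFunc F) K (IsLocalRing.maximalIdeal (AInf F)) hp).2
  convert h using 1
  rw [← Set.ncard_univ]
  congr 1
  rw [eq_comm, Set.eq_univ_iff_forall]
  exact hmax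

lemma OO_count (b : F) :
    {v : HeightOneSpectrum (OO F K) | algebraMap F[X] (OO F K) (X - C b) ∈ v.asIdeal}.Finite ∧
    {v : HeightOneSpectrum (OO F K) | algebraMap F[X] (OO F K) (X - C b) ∈ v.asIdeal}.ncard ≤
      Module.finrank (RatFunc F) K := by
  have : NoZeroSMulDivisors F[X] (OO F K) := by
    constructor
    intro c x h
    rw [Algebra.smul_def, mul_eq_zero] at h
    exact h.imp_left fun h => algebraMap_OO_injective (h.trans (map_zero _).symm)
  have hirr : Irreducible (X - C b : F[X]) := irreducible_X_sub_C b
  have hm : (Ideal.span {(X - C b : F[X])}).IsMaximal :=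
    PrincipalIdealRing.isMaximal_of_irreducible hirr
  have h := places_over (OO F K) (RatFunc F) K (Ideal.span {(X - C b : F[X])})
    (by simpa using X_sub_C_ne_zero b)
  have e : {v : HeightOneSpectrum (OO F K) | algebraMap F[X] (OO F K) (X - C b) ∈ v.asIdeal} =
      {v : HeightOneSpectrum (OO F K) | v.asIdeal.under F[X] = Ideal.span {(X - C b : F[X])}} := by
    ext v
    simp only [Set.mem_ofPred_eq]
    constructor
    · intro hv
      refine (hm.eq_of_le ?_ ?_).symm
      · exact Ideal.IsPrime.ne_top inferInstance
      · rw [Ideal.span_singleton_le_iff_mem]; exact hv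
    · intro hv
      show X - C b ∈ v.asIdeal.under F[X]
      rw [hv]; exact Ideal.mem_span_singleton_self _
  rw [e]; exact h

variable {F K}
/-- A place of degree one of the affine part gives a rational point. -/
lemma point_of_place {y : K} {H0 : F[X][X]} (hroot : aeval y H0 = 0) (hy : IsIntegral F[X] y)
    (v : HeightOneSpectrum (OO F K)) (hv : Module.finrank F (OO F K ⧸ v.asIdeal) = 1) :
    ∃ x0 y0 : F, algebraMap F[X] (OO F K) (X - C x0) ∈ v.asIdeal ∧ ev F x0 y0 H0 = 0 := by
  have hbij : Function.Bijective (algebraMap F (OO F K ⧸ v.asIdeal)) := by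
    have := v.isPrime
    refine ⟨(algebraMap F (OO F K ⧸ v.asIdeal)).injective, fun w => ?_⟩
    obtain ⟨c, hc⟩ := (finrank_eq_one_iff_of_nonzero' (1 : OO F K ⧸ v.asIdeal) one_ne_zero).1 hv w
    exact ⟨c, by rw [Algebra.algebraMap_eq_smul_one, hc]⟩
  let e := RingEquiv.ofBijective _ hbij
  let ψ : OO F K →+* F := e.symm.toRingHom.comp (Ideal.Quotient.mk v.asIdeal)
  have hψF : ∀ c : F, ψ (algebraMap F (OO F K) c) = c := fun c => e.symm_apply_apply c
  have hψ0 : ∀ o, ψ o = 0 → o ∈ v.asIdeal := by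
    intro o ho
    have : Ideal.Quotient.mk v.asIdeal o = 0 := e.symm.injective (ho.trans (map_zero _).symm)
    exact Ideal.Quotient.eq_zero_iff_mem.1 this
  refine ⟨ψ (algebraMap F[X] (OO F K) X), ψ ⟨y, hy⟩, hψ0 _ ?_, ?_⟩
  · rw [map_sub, map_sub, sub_eq_zero]
    have : algebraMap F[X] (OO F K) (C (ψ (algebraMap F[X] (OO F K) X))) =
      algebraMap F (OO F K) (ψ (algebraMap F[X] (OO F K) X)) := by
      rw [IsScalarTower.algebraMap_apply F F[X] (OO F K)]; rfl
    rw [this, hψF]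
  · have h1 : aeval (⟨y, hy⟩ : OO F K) H0 = 0 := by
      apply Subtype.ext
      have := aeval_algebraMap_apply K (⟨y, hy⟩ : OO F K) H0
      exact this.symm.trans hroot
    have h2 : ev F (ψ (algebraMap F[X] (OO F K) X)) (ψ ⟨y, hy⟩) =
        ψ.comp (aeval (⟨y, hy⟩ : OO F K)).toRingHom := by
      refine Polynomial.ringHom_ext (fun p => ?_) ?_
      · have h3 : (aeval (ψ (algebraMap F[X] (OO F K) X)) : F[X] →ₐ[F] F).toRingHom =
            ψ.comp (algebraMap F[X] (OO F K)) := by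
          refine Polynomial.ringHom_ext (fun c => ?_) ?_
          · have := hψF c
            rw [IsScalarTower.algebraMap_apply F F[X] (OO F K)] at this
            simpa using this.symm
          · simp
        have := congrArg (fun f => f p) h3
        simpa using this
      · simp
    rw [h2]
    show ψ (aeval (⟨y, hy⟩ : OO F K) H0) = 0
    rw [h1, map_zero]
end
end Scat

/-! ### Existence of rational points -/

namespace Scat
open WithZero IsDedekindDomain Polynomial
set_option linter.unusedSectionVars false

section
variable {F : Type*} [Field F] {K : Type*} [Field K]
  [Algebra F K] [Algebra F[X] K] [Algebra (RatFunc F) K] [IsScalarTower F F[X] K]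
  [IsScalarTower F[X] (RatFunc F) K] [IsScalarTower F (RatFunc F) K]

lemma integral_at_infty {y : K} {H0 : F[X][X]} (hmonic : H0.Monic) (hroot : aeval y H0 = 0)
    (htd : ∀ j, H0.coeff j ≠ 0 → (H0.coeff j).natDegree + j ≤ H0.natDegree) :
    IsIntegral (AInf F) (algebraMap (RatFunc F) K RatFunc.X⁻¹ * y) := by
  let H1 : (RatFunc F)[X] := H0.map (algebraMap F[X] (RatFunc F))
  have hm1 : H1.Monic := hmonic.map _
  have hr1 : aeval y H1 = 0 := by rw [aeval_map_algebraMap, hroot]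
  have hN1 : H1.natDegree = H0.natDegree := hmonic.natDegree_map _
  let q := H1.scaleRoots RatFunc.X⁻¹
  have hq : aeval (algebraMap (RatFunc F) K RatFunc.X⁻¹ * y) q = 0 := scaleRoots_aeval_eq_zero hr1
  have hqm : q.Monic := (monic_scaleRoots_iff _).2 hm1
  have hl : q ∈ lifts (algebraMap (AInf F) (RatFunc F)) := by
    rw [lifts_iff_coeff_lifts]
    intro j
    have : q.coeff j ∈ AInf F := by
      rw [coeff_scaleRoots, hN1, coeff_map, mem_AInf]
      by_cases h0 : H0.coeff j = 0
      · simp [h0]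
      have := htd j h0
      rw [map_mul, vpoly, if_neg h0, map_pow, map_inv₀, RatFunc.inftyValuation.X, ← exp_neg,
        ← exp_nsmul, ← exp_add, ← exp_zero, exp_le_exp]
      simp only [nsmul_eq_mul]
      have h2 : ((H0.natDegree - j : ℕ) : ℤ) = H0.natDegree - j := by
        rw [Nat.cast_sub (by omega)]
      rw [h2]
      have : ((H0.coeff j).natDegree : ℤ) + j ≤ H0.natDegree := by exact_mod_cast this
      linarith
    exact ⟨⟨_, this⟩, rfl⟩
  obtain ⟨p, hp, -, hpm⟩ := lifts_and_natDegree_eq_and_monic hl hqm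
  refine ⟨p, hpm, ?_⟩
  rw [← hp, aeval_map_algebraMap] at hq
  exact hq

end

/-- Hasse-Weil lower bound for a plane curve monic in `Y` of total degree `N`, with `N (N - 1) / 2` for
the genus, in the form of the existence of a rational point avoiding the fibres over a finite set `B`.
The hypothesis `hSt` is Stepanov's bound; at most `N` places lie over each element of `B` and over
infinity. -/
theorem exists_point {F : Type*} [Field F] [Finite F] {Ω : Type*} [Field Ω] [Algebra F Ω]
    (H0 : F[X][X]) (hmonic : H0.Monic) (hirr : Irreducible H0)
    (hsep : (H0.map (algebraMap F[X] (RatFunc F))).Separable)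
    (htd : ∀ j, H0.coeff j ≠ 0 → (H0.coeff j).natDegree + j ≤ H0.natDegree)
    (hSt : ∀ D : F[X], D ≠ 0 → ∃ C : ℝ, ∀ r, 1 ≤ r → ∃ Z : Finset (Ω × Ω),
      (∀ z ∈ Z, ev F z.1 z.2 H0 = 0 ∧ aeval z.1 D ≠ 0 ∧
        z.1 ^ Nat.card F ^ r = z.1 ∧ z.2 ^ Nat.card F ^ r = z.2) ∧
      (Nat.card F : ℝ) ^ r - C * √(Nat.card F : ℝ) ^ r ≤ Z.card)
    (B : Finset F)
    (hineq : ((B.card : ℝ) + 1) * H0.natDegree <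
      Nat.card F + 1 - (2 * (H0.natDegree * (H0.natDegree - 1) / 2) + 1 : ℕ) * √(Nat.card F : ℝ)) :
    ∃ x0 y0 : F, x0 ∉ B ∧ ev F x0 y0 H0 = 0 := by
  set H1 : (RatFunc F)[X] := H0.map (algebraMap F[X] (RatFunc F)) with hH1
  have hirr1 : Irreducible H1 := (hmonic.irreducible_iff_irreducible_map_fraction_map).1 hirr
  have hm1 : H1.Monic := hmonic.map _
  have hN1 : H1.natDegree = H0.natDegree := hmonic.natDegree_map _
  have : Fact (Irreducible H1) := ⟨hirr1⟩
  let K := AdjoinRoot H1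
  let y : K := AdjoinRoot.root H1
  let pb : PowerBasis (RatFunc F) K := AdjoinRoot.powerBasis hirr1.ne_zero
  have hpbgen : pb.gen = y := AdjoinRoot.powerBasis_gen _
  have hpbdim : pb.dim = H0.natDegree := by rw [← hN1]; exact AdjoinRoot.powerBasis_dim _
  have hfd : FiniteDimensional (RatFunc F) K := pb.finite
  have hfr : Module.finrank (RatFunc F) K = H0.natDegree := by rw [pb.finrank, hpbdim]
  have hminL : minpoly (RatFunc F) y = H1 := by
    rw [AdjoinRoot.minpoly_root hirr1.ne_zero, hm1.leadingCoeff, inv_one, C_1, mul_one]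
  have hr1 : aeval y H1 = 0 := by
    have := minpoly.aeval (RatFunc F) y
    rwa [hminL] at this
  have hroot : aeval y H0 = 0 := by rw [← hr1, aeval_map_algebraMap]
  have hy : IsIntegral F[X] y := ⟨H0, hmonic, hroot⟩
  have hmin : ∀ g : F[X][X], aeval y g = 0 → H0 ∣ g := by
    intro g hg
    have h1 : H1 ∣ g.map (algebraMap F[X] (RatFunc F)) := by
      have := minpoly.dvd (RatFunc F) y (p := g.map (algebraMap F[X] (RatFunc F)))
        (by rw [aeval_map_algebraMap, hg])
      rwa [hminL] at this
    exact (Polynomial.map_dvd_map _ (IsFractionRing.injective _ _) hmonic).1 h1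
  have hsepK : Algebra.IsSeparable (RatFunc F) K := by
    have hys : IsSeparable (RatFunc F) y := by
      rw [IsSeparable, hminL]; exact hsep
    have htop : IntermediateField.adjoin (RatFunc F) {y} = ⊤ := by
      exact IntermediateField.adjoin_root_eq_top H1
    have h1 := (IntermediateField.isSeparable_adjoin_simple_iff_isSeparable (RatFunc F) K).2 hys
    rw [htop] at h1
    exact (AlgEquiv.Algebra.isSeparable_iff IntermediateField.topEquiv).1 h1
  have hy' := integral_at_infty (K := K) hmonic hroot htd
  obtain ⟨hidx, hidx2⟩ := TT_index hy hy' H0.natDegree (fun z => by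
    refine ⟨fun j => if h : j < pb.dim then pb.basis.repr z ⟨j, h⟩ else 0, ?_⟩
    conv_lhs => rw [← pb.basis.sum_repr z]
    rw [← hpbdim, ← Fin.sum_univ_eq_sum_range (fun j => algebraMap (RatFunc F) K
      (if h : j < pb.dim then pb.basis.repr z ⟨j, h⟩ else 0) * y ^ j)]
    refine Finset.sum_congr rfl fun j _ => ?_
    rw [dif_pos j.2, Algebra.smul_def, pb.basis_eq_pow, hpbgen])
  obtain ⟨D, hD0, hD⟩ : ∃ D : F[X], D ≠ 0 ∧ ∀ o : K, IsIntegral F[X] o →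
      ∃ g : F[X][X], algebraMap F[X] K D * o = aeval y g := by
    have hd0 : Algebra.discr (RatFunc F) pb.basis ≠ 0 := Algebra.discr_not_zero_of_basis _ _
    set dd := Algebra.discr (RatFunc F) pb.basis with hdd
    refine ⟨dd.num, RatFunc.num_ne_zero hd0, fun o ho => ?_⟩
    have h1 := Algebra.discr_mul_isIntegral_mem_adjoin (RatFunc F) (B := pb) (by rw [hpbgen]; exact hy) ho
    rw [hpbgen, Algebra.adjoin_singleton_eq_range_aeval] at h1
    obtain ⟨g, hg⟩ := h1
    refine ⟨C dd.denom * g, ?_⟩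
    have e : algebraMap F[X] (RatFunc F) dd.num = algebraMap F[X] (RatFunc F) dd.denom * dd := by
      have h2 := RatFunc.num_div_denom dd
      have h3 : algebraMap F[X] (RatFunc F) dd.denom ≠ 0 := by simpa using RatFunc.denom_ne_zero dd
      rw [div_eq_iff h3] at h2
      rw [h2, mul_comm]
    rw [map_mul, aeval_C]
    have hg' : aeval y g = dd • o := hg
    rw [hg', Algebra.smul_def, ← mul_assoc, IsScalarTower.algebraMap_apply F[X] (RatFunc F) K, e, map_mul,
      ← IsScalarTower.algebraMap_apply]
  obtain ⟨C, hC⟩ := hSt D hD0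
  have hweil := weil_dedekind (K := K) (OO F K) (PP F K) F (OO_finite F K) (PP_finite F K) (OO_bdd F K)
    (PP_places F K) (hell_finite F K) hidx _ hidx2 C (fun r hr => by
      obtain ⟨Z, hZ, hZc⟩ := hC r hr
      refine hZc.trans ?_
      exact_mod_cast points_le_ptCount hroot hmin hD hy r hr Z hZ)
  by_contra! hcon
  have hsub : {v | plDeg (OO F K) (PP F K) F v = 1} ⊆
      (Sum.inl '' (⋃ b ∈ B, {v : HeightOneSpectrum (OO F K) |
        algebraMap F[X] (OO F K) (X - Polynomial.C b) ∈ v.asIdeal})) ∪ Set.range Sum.inr := by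
    rintro (v | v) hv
    · left
      obtain ⟨x0, y0, h1, h2⟩ := point_of_place hroot hy v hv
      refine ⟨v, ?_, rfl⟩
      simp only [Set.mem_iUnion]
      refine ⟨x0, ?_, h1⟩
      by_contra hx
      exact hcon x0 y0 hx h2
    · exact Or.inr ⟨v, rfl⟩
  have := PP_places F K
  have hfinB : (⋃ b ∈ B, {v : HeightOneSpectrum (OO F K) |
        algebraMap F[X] (OO F K) (X - Polynomial.C b) ∈ v.asIdeal}).Finite :=
    B.finite_toSet.biUnion fun b _ => (OO_count F K b).1
  have hle : {v | plDeg (OO F K) (PP F K) F v = 1}.ncard ≤ (B.card + 1) * H0.natDegree := by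
    refine (Set.ncard_le_ncard hsub ((hfinB.image _).union (Set.finite_range _))).trans ?_
    refine (Set.ncard_union_le _ _).trans ?_
    rw [add_mul, one_mul]
    refine add_le_add ?_ ?_
    · refine (Set.ncard_image_le hfinB).trans ?_
      refine (Finset.set_ncard_biUnion_le _ _).trans ?_
      rw [← smul_eq_mul]
      exact Finset.sum_le_card_nsmul _ _ _ fun b _ => hfr ▸ (OO_count F K b).2
    · rw [← Set.image_univ, Set.ncard_image_of_injective _ Sum.inr_injective, Set.ncard_univ]
      exact hfr ▸ PP_count F K
  have hle' : ({v | plDeg (OO F K) (PP F K) F v = 1}.ncard : ℝ) ≤ (B.card + 1) * H0.natDegree := by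
    exact_mod_cast hle
  linarith
end Scat

/-! ### Boxes in the coordinate ring of a plane curve -/

namespace Scat
open Polynomial
set_option linter.unusedSectionVars false

section Box
variable {k : Type*} [Field k] (H : k[X][X])

/-- The `k`-space of elements `∑ p_j y^j`, `j < deg_Y H`, of `k[x,y]/(H)` with `deg p_j < m`. -/
noncomputable def boxMap (m : ℕ) : (Fin H.natDegree → degreeLT k m) →ₗ[k] AdjoinRoot H where
  toFun p := ∑ j, algebraMap k[X] (AdjoinRoot H) (p j : k[X]) * AdjoinRoot.root H ^ (j : ℕ)
  map_add' p q := by simp [add_mul, Finset.sum_add_distrib]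
  map_smul' c p := by
    simp only [Pi.smul_apply, Submodule.coe_smul, RingHom.id_apply, Finset.smul_sum]
    refine Finset.sum_congr rfl fun j _ => ?_
    rw [← smul_mul_assoc]
    congr 1
    exact map_smul (IsScalarTower.toAlgHom k k[X] (AdjoinRoot H)) c (p j : k[X])

/-- The range of `boxMap`: the elements of `k[x,y]/(H)` of `x`-degree less than `m` in reduced form. -/
noncomputable def box (m : ℕ) : Submodule k (AdjoinRoot H) := LinearMap.range (boxMap H m)

variable {H}
lemma boxMap_injective (hH : H.Monic) (m : ℕ) : Function.Injective (boxMap H m) := by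
  rw [injective_iff_map_eq_zero]
  intro p hp
  have hb := (AdjoinRoot.powerBasis' hH).basis.linearIndependent
  rw [Fintype.linearIndependent_iff] at hb
  have := hb (fun j => (p j : k[X])) (by
    rw [← hp]
    show _ = ∑ j, algebraMap k[X] (AdjoinRoot H) (p j : k[X]) * AdjoinRoot.root H ^ (j : ℕ)
    refine Finset.sum_congr rfl fun j _ => ?_
    rw [PowerBasis.basis_eq_pow, Algebra.smul_def, AdjoinRoot.powerBasis'_gen])
  funext j
  exact Subtype.ext (this j)

lemma finrank_box (hH : H.Monic) (m : ℕ) : Module.finrank k (box H m) = H.natDegree * m := by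
  rw [box, LinearMap.finrank_range_of_inj (boxMap_injective hH m)]
  rw [Module.finrank_pi_fintype]
  simp [(degreeLTEquiv k m).finrank_eq]

lemma mem_box {m : ℕ} {s : AdjoinRoot H} : s ∈ box H m ↔ ∃ p : Fin H.natDegree → k[X],
    (∀ j, p j ∈ degreeLT k m) ∧
      s = ∑ j, algebraMap k[X] (AdjoinRoot H) (p j) * AdjoinRoot.root H ^ (j : ℕ) := by
  constructor
  · rintro ⟨p, rfl⟩
    exact ⟨fun j => p j, fun j => (p j).2, rfl⟩
  · rintro ⟨p, hp, rfl⟩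
    exact ⟨fun j => ⟨p j, hp j⟩, rfl⟩

lemma box_mono : Monotone (box H) := by
  intro a b hab s hs
  obtain ⟨p, hp, rfl⟩ := mem_box.1 hs
  exact mem_box.2 ⟨p, fun j => degreeLT_mono hab (hp j), rfl⟩

lemma mul_mem_degreeLT {p q : k[X]} {a b : ℕ} (hp : p ∈ degreeLT k (a+1)) (hq : q ∈ degreeLT k b) :
    p * q ∈ degreeLT k (a + b) := by
  by_cases hp0 : p = 0
  · simp [hp0]
  by_cases hq0 : q = 0
  · simp [hq0]
  rw [mem_degreeLT] at *
  rw [← natDegree_lt_iff_degree_lt hp0] at hp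
  rw [← natDegree_lt_iff_degree_lt hq0] at hq
  rw [← natDegree_lt_iff_degree_lt (mul_ne_zero hp0 hq0), natDegree_mul hp0 hq0]
  omega

lemma smul_mem_box {a b : ℕ} {p : k[X]} (hp : p ∈ degreeLT k (a+1)) {s : AdjoinRoot H}
    (hs : s ∈ box H b) : algebraMap k[X] (AdjoinRoot H) p * s ∈ box H (a + b) := by
  obtain ⟨q, hq, rfl⟩ := mem_box.1 hs
  refine mem_box.2 ⟨fun j => p * q j, fun j => mul_mem_degreeLT hp (hq j), ?_⟩
  rw [Finset.mul_sum]
  exact Finset.sum_congr rfl fun j _ => by rw [map_mul, mul_assoc]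

lemma pow_mem_box {j : ℕ} (hj : j < H.natDegree) : AdjoinRoot.root H ^ j ∈ box H 1 := by
  refine mem_box.2 ⟨Pi.single ⟨j, hj⟩ 1, fun i => ?_, ?_⟩
  · by_cases h : i = ⟨j, hj⟩
    · subst h; simp [mem_degreeLT]
    · simp [h]
  · rw [Finset.sum_eq_single ⟨j, hj⟩]
    · simp
    · intro b _ hb; simp [hb]
    · simp

lemma exists_root_mul (hH : H.Monic) : ∃ c : ℕ, ∀ m, ∀ s ∈ box H m, AdjoinRoot.root H * s ∈ box H (m + c) := by
  obtain ⟨c, hc⟩ : ∃ c : ℕ, ∀ j ∈ Finset.range H.natDegree, H.coeff j ∈ degreeLT k c := by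
    refine ⟨(Finset.range H.natDegree).sup (fun j => (H.coeff j).natDegree + 1), fun j hj => ?_⟩
    refine degreeLT_mono (Finset.le_sup (f := fun j => (H.coeff j).natDegree + 1) hj) ?_
    rw [mem_degreeLT]
    exact lt_of_le_of_lt degree_le_natDegree (by exact_mod_cast Nat.lt_succ_self _)
  have hN : AdjoinRoot.root H ^ H.natDegree ∈ box H c := by
    have h0 : aeval (AdjoinRoot.root H) H = 0 := by simp [aeval_def]
    have h0 := (congrArg (aeval (AdjoinRoot.root H)) hH.as_sum).symm.trans h0
    simp only [map_add, map_pow, aeval_X, map_sum, map_mul, aeval_C] at h0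
    rw [eq_neg_of_add_eq_zero_left h0]
    refine Submodule.neg_mem _ (mem_box.2 ⟨fun j => H.coeff j, fun j => hc j (by simp), ?_⟩)
    rw [Fin.sum_univ_eq_sum_range
      (fun j => algebraMap k[X] (AdjoinRoot H) (H.coeff j) * AdjoinRoot.root H ^ j)]
  refine ⟨c, fun m s hs => ?_⟩
  obtain ⟨p, hp, rfl⟩ := mem_box.1 hs
  rw [Finset.mul_sum]
  refine Submodule.sum_mem _ fun j _ => ?_
  rw [mul_left_comm, ← pow_succ']
  obtain _ | m := m
  · have : p j = 0 := by simpa [mem_degreeLT] using hp j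
    simp [this]
  by_cases hj : (j : ℕ) + 1 < H.natDegree
  · exact box_mono (by omega) (smul_mem_box (hp j) (pow_mem_box hj))
  · have : (j : ℕ) + 1 = H.natDegree := by omega
    rw [this]
    exact box_mono (by omega) (smul_mem_box (hp j) hN)

/-- Up to a constant, the `x`-degree is subadditive. -/
lemma exists_box_mul (hH : H.Monic) : ∃ c : ℕ,
    (∀ a b, ∀ s ∈ box H a, ∀ t ∈ box H b, s * t ∈ box H (a + b + c)) ∧
    (∀ s, AdjoinRoot.root H ^ s ∈ box H (c * s + 1)) ∧ (∀ s : AdjoinRoot H, ∃ m, s ∈ box H m) := by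
  obtain ⟨c, hc⟩ := exists_root_mul hH
  have h1 : ∀ j m, ∀ s ∈ box H m, AdjoinRoot.root H ^ j * s ∈ box H (m + c * j) := by
    intro j
    induction j with
    | zero => intro m s hs; simpa using hs
    | succ j ih =>
      intro m s hs
      rw [pow_succ', mul_assoc, mul_add, ← add_assoc, mul_one]
      exact hc _ _ (ih _ _ hs)
  refine ⟨c * H.natDegree, fun a b s hs t ht => ?_, fun j => ?_, fun s => ?_⟩
  · obtain ⟨p, hp, rfl⟩ := mem_box.1 hs
    rw [Finset.sum_mul]
    refine Submodule.sum_mem _ fun j _ => ?_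
    obtain _ | a := a
    · have : p j = 0 := by simpa [mem_degreeLT] using hp j
      simp [this]
    rw [mul_assoc]
    refine box_mono ?_ (smul_mem_box (hp j) (h1 j _ _ ht))
    have := Nat.mul_le_mul_left c j.2.le
    omega
  · obtain hN | hN := Nat.eq_zero_or_pos H.natDegree
    · have : H = 1 := hH.natDegree_eq_zero.1 hN
      have : Subsingleton (AdjoinRoot H) := by
        refine subsingleton_of_zero_eq_one ?_
        rw [← map_one (AdjoinRoot.mk H), eq_comm, AdjoinRoot.mk_eq_zero, this]
      rw [Subsingleton.elim (AdjoinRoot.root H ^ j) 0]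
      exact Submodule.zero_mem _
    · have := h1 j 1 _ (pow_mem_box (H := H) (j := 0) hN)
      rw [pow_zero, mul_one] at this
      refine box_mono ?_ this
      have := Nat.mul_le_mul_right (c * j) hN
      nlinarith
  · refine ⟨Finset.univ.sup fun j => ((AdjoinRoot.powerBasis' hH).basis.repr s j).natDegree + 1, ?_⟩
    refine mem_box.2 ⟨fun j => (AdjoinRoot.powerBasis' hH).basis.repr s j, fun j => ?_, ?_⟩
    · refine degreeLT_mono (Finset.le_sup
        (f := fun j => ((AdjoinRoot.powerBasis' hH).basis.repr s j).natDegree + 1) (Finset.mem_univ j)) ?_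
      rw [mem_degreeLT]
      exact lt_of_le_of_lt degree_le_natDegree (by exact_mod_cast Nat.lt_succ_self _)
    · conv_lhs => rw [← (AdjoinRoot.powerBasis' hH).basis.sum_repr s]
      refine Finset.sum_congr rfl fun j _ => ?_
      rw [PowerBasis.basis_eq_pow, Algebra.smul_def, AdjoinRoot.powerBasis'_gen]

/-- Dimension count behind the bounds for the zeros: a space on which the ideal of `s` acts by zero
has dimension at most about `deg_Y H` times the `x`-degree of `s`. -/
lemma finrank_le_of_annihilate [IsDomain (AdjoinRoot H)] (hH : H.Monic) {c : ℕ}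
    (hc : ∀ a b, ∀ s ∈ box H a, ∀ t ∈ box H b, s * t ∈ box H (a + b + c))
    {V : Type*} [AddCommGroup V] [Module k V] [FiniteDimensional k V]
    (L : AdjoinRoot H →ₗ[k] V) (hL : Function.Surjective L) {δ : ℕ} {s : AdjoinRoot H}
    (hs : s ∈ box H δ) (hs0 : s ≠ 0) (hLs : ∀ t, L (s * t) = 0) :
    Module.finrank k V ≤ H.natDegree * (δ + c) := by
  have hfd : ∀ m, FiniteDimensional k (box H m) := fun m => by
    unfold box
    have : FiniteDimensional k (degreeLT k m) := (degreeLTEquiv k m).symm.finiteDimensional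
    infer_instance
  obtain ⟨c', -, -, hex⟩ := exists_box_mul hH
  let bV := Module.finBasis k V
  choose g hg using fun i => hL (bV i)
  choose mm hmm using fun i => hex (g i)
  let m := Finset.univ.sup mm
  let M := m + δ + c
  let L' : box H M →ₗ[k] V := L ∘ₗ (box H M).subtype
  have hL' : Function.Surjective L' := by
    rw [← LinearMap.range_eq_top, eq_top_iff, ← bV.span_eq, Submodule.span_le]
    rintro _ ⟨i, rfl⟩
    exact ⟨⟨g i, box_mono ((Finset.le_sup (Finset.mem_univ i)).trans (by omega)) (hmm i)⟩, hg i⟩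
  let μ : box H m →ₗ[k] LinearMap.ker L' :=
    { toFun := fun t => ⟨⟨s * t, box_mono (by omega) (hc _ _ _ hs _ t.2)⟩, hLs _⟩
      map_add' := fun a b => by ext; simp [mul_add]
      map_smul' := fun a b => by ext; simp }
  have hμ : Function.Injective μ := fun a b h => by
    have : s * (a : AdjoinRoot H) = s * b := congrArg (fun z : LinearMap.ker L' => ((z : box H M) : AdjoinRoot H)) h
    exact Subtype.ext (mul_left_cancel₀ hs0 this)
  have h1 := LinearMap.finrank_le_finrank_of_injective hμ
  have h2 := L'.finrank_range_add_finrank_ker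
  rw [LinearMap.range_eq_top.2 hL', finrank_top, finrank_box hH] at h2
  rw [finrank_box hH] at h1
  have : H.natDegree * M = H.natDegree * (δ + c) + H.natDegree * m := by ring
  omega

end Box
end Scat

/-! ### Zeros and orders of vanishing -/

namespace Scat
open Polynomial
set_option linter.unusedSectionVars false

section
variable {k : Type*} [Field k] {H : k[X][X]}

/-- An element of `k[x,y]/(H)` of small `x`-degree has few zeros; points of the curve are encoded
as algebra homomorphisms to `k`. -/
lemma card_zeros_le [IsDomain (AdjoinRoot H)] (hH : H.Monic) {c : ℕ}
    (hc : ∀ a b, ∀ s ∈ box H a, ∀ t ∈ box H b, s * t ∈ box H (a + b + c))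
    {δ : ℕ} {s : AdjoinRoot H} (hs : s ∈ box H δ) (hs0 : s ≠ 0)
    (Z : Finset (AdjoinRoot H →ₐ[k] k)) (hZ : ∀ φ ∈ Z, φ s = 0) :
    Z.card ≤ H.natDegree * (δ + c) := by
  let L : AdjoinRoot H →ₗ[k] (Z → k) := LinearMap.pi fun φ => φ.1.toLinearMap
  have hsep : ∀ φ φ' : Z, φ ≠ φ' → ∃ u, φ.1 u = 1 ∧ φ'.1 u = 0 := by
    intro φ φ' hne
    obtain ⟨a, ha⟩ : ∃ a, φ.1 a ≠ φ'.1 a := by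
      by_contra! h
      exact hne (Subtype.ext (AlgHom.ext h))
    refine ⟨(φ.1 a - φ'.1 a)⁻¹ • (a - algebraMap k _ (φ'.1 a)), ?_, ?_⟩
    · rw [map_smul, map_sub, AlgHom.commutes, smul_eq_mul]
      exact inv_mul_cancel₀ (sub_ne_zero.2 ha)
    · rw [map_smul, map_sub, AlgHom.commutes]
      simp
  choose! u hu using hsep
  have hL : Function.Surjective L := by
    rw [← LinearMap.range_eq_top, eq_top_iff, ← (Pi.basisFun k Z).span_eq, Submodule.span_le]
    rintro _ ⟨φ, rfl⟩
    refine ⟨∏ φ' ∈ Finset.univ.erase φ, u φ φ', ?_⟩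
    funext φ''
    show φ''.1 _ = _
    rw [map_prod, Pi.basisFun_apply]
    by_cases h : φ'' = φ
    · subst h
      rw [Pi.single_eq_same]
      exact Finset.prod_eq_one fun φ' h => (hu _ _ (Finset.ne_of_mem_erase h).symm).1
    · rw [Pi.single_eq_of_ne h]
      exact Finset.prod_eq_zero (Finset.mem_erase.2 ⟨h, Finset.mem_univ _⟩) (hu _ _ (Ne.symm h)).2
  have := finrank_le_of_annihilate hH hc L hL hs hs0 (fun t => by
    funext φ
    show φ.1 _ = _
    rw [map_mul, hZ _ φ.2, zero_mul]; rfl)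
  simpa using this

/-- Expansion at a smooth point with local parameter `x - x₀` (Hensel's lemma). -/
lemma exists_expansion [IsDomain (AdjoinRoot H)] (hH : H.Monic) {x0 y0 : k}
    (h : ev k x0 y0 H = 0) (h' : ev k x0 y0 (derivative H) ≠ 0) :
    ∃ ψ : AdjoinRoot H →ₐ[k] PowerSeries k, Function.Injective ψ ∧
      ∀ p : k[X], ψ (algebraMap k[X] (AdjoinRoot H) p) = (p.comp (X + C x0) : k[X]) := by
  let ι : k[X] →ₐ[k] PowerSeries k := (Polynomial.coeToPowerSeries.algHom k).comp (aeval (X + C x0))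
  have hι : ∀ p : k[X], ι p = (p.comp (X + C x0) : k[X]) := by
    intro p
    simp [ι, coeToPowerSeries.algHom_apply, comp, aeval_def]
  have hconst : (PowerSeries.constantCoeff (R := k)).comp (ι : k[X] →+* PowerSeries k) =
      (aeval x0 : k[X] →ₐ[k] k) := by
    refine Polynomial.ringHom_ext (fun a => ?_) ?_
    · simp [hι]
    · simp [hι]
  have hev : ∀ G : k[X][X], PowerSeries.constantCoeff ((G.map (ι : k[X] →+* PowerSeries k)).eval
      (PowerSeries.C y0)) = ev k x0 y0 G := by
    intro G
    rw [eval_map, hom_eval₂, hconst]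
    simp [ev]
    rfl
  obtain ⟨Y, hY, -⟩ := HenselianRing.is_henselian (I := Ideal.span {(PowerSeries.X : PowerSeries k)})
    (H.map (ι : k[X] →+* PowerSeries k)) (hH.map _) (PowerSeries.C y0)
    (by rw [Ideal.mem_span_singleton, PowerSeries.X_dvd_iff, hev, h])
    (by
      refine IsUnit.map _ (PowerSeries.isUnit_iff_constantCoeff.2 ?_)
      rw [derivative_map, hev]
      exact h'.isUnit)
  let ψ : AdjoinRoot H →ₐ[k] PowerSeries k := AdjoinRoot.liftAlgHom H ι Y (by
    rw [← eval_map]; exact hY)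
  have hψ : ∀ p : k[X], ψ (algebraMap k[X] (AdjoinRoot H) p) = (p.comp (X + C x0) : k[X]) := by
    intro p
    rw [← hι]
    exact AdjoinRoot.liftAlgHom_of _ _ _ _ _
  refine ⟨ψ, ?_, hψ⟩
  have : Module.Finite k[X] (AdjoinRoot H) := hH.finite_adjoinRoot
  have h0 : RingHom.ker (ψ : AdjoinRoot H →+* PowerSeries k) = ⊥ := by
    refine Ideal.eq_bot_of_comap_eq_bot (R := k[X]) ?_
    rw [eq_bot_iff]
    intro p hp
    have hp : ψ (algebraMap k[X] (AdjoinRoot H) p) = 0 := hp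
    rw [hψ, ← Polynomial.coe_zero, Polynomial.coe_inj] at hp
    have := congrArg (fun g : k[X] => g.comp (X - C x0)) hp
    simpa [comp_assoc] using this
  exact (RingHom.injective_iff_ker_eq_bot _).2 h0

/-- An element of small `x`-degree has small order of vanishing at a smooth point. -/
lemma exists_order_le [IsDomain (AdjoinRoot H)] (hH : H.Monic) {c : ℕ}
    (hc : ∀ a b, ∀ s ∈ box H a, ∀ t ∈ box H b, s * t ∈ box H (a + b + c))
    {ψ : AdjoinRoot H →ₐ[k] PowerSeries k} {x0 : k}
    (hψ : ∀ p : k[X], ψ (algebraMap k[X] (AdjoinRoot H) p) = (p.comp (X + C x0) : k[X]))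
    {δ : ℕ} {s : AdjoinRoot H} (hs : s ∈ box H δ) (hs0 : s ≠ 0) {v : ℕ}
    (hv : ∀ i < v, PowerSeries.coeff i (ψ s) = 0) : v ≤ H.natDegree * (δ + c) := by
  let L : AdjoinRoot H →ₗ[k] (Fin v → k) :=
    LinearMap.pi fun i => (PowerSeries.coeff (R := k) (i : ℕ)) ∘ₗ ψ.toLinearMap
  have hL : Function.Surjective L := by
    rw [← LinearMap.range_eq_top, eq_top_iff, ← (Pi.basisFun k (Fin v)).span_eq, Submodule.span_le]
    rintro _ ⟨i, rfl⟩
    refine ⟨algebraMap k[X] (AdjoinRoot H) ((X - C x0) ^ (i : ℕ)), ?_⟩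
    funext j
    show PowerSeries.coeff (j : ℕ) (ψ _) = _
    rw [hψ]
    simp [Pi.single_apply, Fin.ext_iff]
  have := finrank_le_of_annihilate hH hc L hL hs hs0 (fun t => by
    funext j
    show PowerSeries.coeff (j : ℕ) (ψ _) = 0
    rw [map_mul, PowerSeries.coeff_mul]
    refine Finset.sum_eq_zero fun a ha => ?_
    rw [hv _ (lt_of_le_of_lt (by have := Finset.HasAntidiagonal.mem_antidiagonal.1 ha; omega) j.2), zero_mul])
  simpa using this

/-- The elements of a box attain at least as many orders at a smooth point as the dimension, and all
these orders are bounded. -/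
lemma exists_orders [IsDomain (AdjoinRoot H)] (hH : H.Monic) {c : ℕ}
    (hc : ∀ a b, ∀ s ∈ box H a, ∀ t ∈ box H b, s * t ∈ box H (a + b + c))
    {ψ : AdjoinRoot H →ₐ[k] PowerSeries k} {x0 : k} (hinj : Function.Injective ψ)
    (hψ : ∀ p : k[X], ψ (algebraMap k[X] (AdjoinRoot H) p) = (p.comp (X + C x0) : k[X])) (δ : ℕ) :
    ∃ (O : Finset ℕ) (a : ℕ → AdjoinRoot H), H.natDegree * δ ≤ O.card ∧
      ∀ o ∈ O, a o ∈ box H δ ∧ (ψ (a o)).order = o ∧ o ≤ H.natDegree * (δ + c) := by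
  let O : Finset ℕ := (Finset.range (H.natDegree * (δ + c) + 1)).filter
    fun o : ℕ => ∃ s ∈ box H δ, (ψ s).order = o
  have hO : ∀ o ∈ O, ∃ s ∈ box H δ, (ψ s).order = o := fun o ho => (Finset.mem_filter.1 ho).2
  choose! a ha using hO
  refine ⟨O, a, ?_, fun o ho => ⟨(ha o ho).1, (ha o ho).2, ?_⟩⟩
  · let L : box H δ →ₗ[k] (O → k) :=
      LinearMap.pi fun i => (PowerSeries.coeff (R := k) (i : ℕ)) ∘ₗ ψ.toLinearMap ∘ₗ (box H δ).subtype
    have hL : Function.Injective L := by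
      rw [injective_iff_map_eq_zero]
      intro s hs
      by_contra hne
      have hs0 : (s : AdjoinRoot H) ≠ 0 := fun h => hne (Subtype.ext h)
      have hψ0 : ψ s ≠ 0 := fun h => hs0 (hinj (h.trans (map_zero _).symm))
      set v := (ψ s).order.toNat with hv
      have hv' : (ψ s).order = v := (PowerSeries.coe_toNat_order hψ0).symm
      have h1 : v ≤ H.natDegree * (δ + c) := exists_order_le hH hc hψ s.2 hs0 fun i hi =>
        PowerSeries.coeff_of_lt_order _ (by rw [hv']; exact_mod_cast hi)
      have h2 : v ∈ O := Finset.mem_filter.2 ⟨Finset.mem_range.2 (by omega), _, s.2, hv'⟩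
      have h3 : PowerSeries.coeff v (ψ s) = 0 := congrFun hs ⟨v, h2⟩
      exact PowerSeries.coeff_order hψ0 h3
    have := LinearMap.finrank_le_finrank_of_injective hL
    rw [finrank_box hH] at this
    simpa using this
  · have := Finset.mem_range.1 (Finset.mem_filter.1 ho).1
    omega

/-- `∑ a_o g_o ^ e ≠ 0` if the `a_o` have distinct orders smaller than `e` and not all `g_o` vanish. -/
lemma sum_ne_zero_of_orders {O : Finset ℕ} {e : ℕ} (hO : ∀ o ∈ O, o < e)
    {a g : ℕ → PowerSeries k} (ha : ∀ o ∈ O, (a o).order = o) (hg : ∃ o ∈ O, g o ≠ 0) :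
    ∑ o ∈ O, a o * g o ^ e ≠ 0 := by
  let O' := O.filter fun o => g o ≠ 0
  let w : ℕ → ℕ := fun o => o + e * (g o).order.toNat
  obtain ⟨o0, ho0, hmin⟩ := O'.exists_min_image w (by
    obtain ⟨o, h1, h2⟩ := hg; exact ⟨o, Finset.mem_filter.2 ⟨h1, h2⟩⟩)
  obtain ⟨h1, h2⟩ := Finset.mem_filter.1 ho0
  have hord : ∀ o ∈ O, g o ≠ 0 → (a o * g o ^ e).order = w o := by
    intro o ho hgo
    rw [PowerSeries.order_mul, PowerSeries.order_pow, ha o ho, ← PowerSeries.coe_toNat_order hgo]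
    simp [w]
  intro h
  have h3 := congrArg (PowerSeries.coeff (w o0)) h
  rw [map_sum, map_zero, Finset.sum_eq_single_of_mem o0 h1] at h3
  · have h4 := hord o0 h1 h2
    have h5 : a o0 * g o0 ^ e ≠ 0 := by
      intro h0; rw [h0, PowerSeries.order_zero] at h4; exact ENat.top_ne_natCast _ h4
    refine PowerSeries.coeff_order h5 ?_
    rwa [h4, ENat.toNat_natCast]
  · intro o ho hne
    have he : 0 < e := (Nat.zero_le _).trans_lt (hO o ho)
    by_cases hgo : g o = 0
    · simp [hgo, he.ne']
    refine PowerSeries.coeff_of_lt_order _ ?_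
    rw [hord o ho hgo]
    have h6 := hmin o (Finset.mem_filter.2 ⟨ho, hgo⟩)
    have h7 : w o0 ≠ w o := fun hw => by
      have := congrArg (· % e) hw
      simp only [w, Nat.add_mul_mod_self_left, Nat.mod_eq_of_lt (hO o ho), Nat.mod_eq_of_lt (hO o0 h1)] at this
      exact hne this.symm
    exact_mod_cast lt_of_le_of_ne h6 h7
end
end Scat

/-! ### Stepanov's auxiliary element -/

namespace Scat
open Polynomial
set_option linter.unusedSectionVars false

section
variable {k : Type*} [Field k] {H : k[X][X]}

/-- Raising to a power of the characteristic multiplies the `x`-degree, up to a constant. -/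
lemma pow_char_mem_box [IsDomain (AdjoinRoot H)] {p : ℕ} [ExpChar k p] {c : ℕ}
    (hpow : ∀ s, AdjoinRoot.root H ^ s ∈ box H (c * s + 1))
    {m : ℕ} {s : AdjoinRoot H} (hs : s ∈ box H m) (a : ℕ) :
    s ^ p ^ a ∈ box H (m * p ^ a + c * H.natDegree * p ^ a) := by
  obtain ⟨q, hq, rfl⟩ := mem_box.1 hs
  have : ExpChar (AdjoinRoot H) p :=
    expChar_of_injective_algebraMap (algebraMap k (AdjoinRoot H)).injective p
  rw [sum_pow_char_pow]
  refine Submodule.sum_mem _ fun j _ => ?_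
  obtain _ | m := m
  · have : q j = 0 := by simpa [mem_degreeLT] using hq j
    have hp : p ^ a ≠ 0 := pow_ne_zero _ (expChar_pos k p).ne'
    rw [this, map_zero, zero_mul (AdjoinRoot.root H ^ (j : ℕ)), zero_pow hp]
    exact Submodule.zero_mem _
  have hp : 1 ≤ p ^ a := Nat.one_le_iff_ne_zero.2 (pow_ne_zero _ (expChar_pos k p).ne')
  rw [mul_pow, ← map_pow, ← pow_mul]
  have h1 : q j ^ p ^ a ∈ degreeLT k (m * p ^ a + 1) := by
    rw [mem_degreeLT]
    have : (q j).natDegree ≤ m := by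
      by_cases h0 : q j = 0
      · simp [h0]
      · exact Nat.lt_succ_iff.1 ((natDegree_lt_iff_degree_lt h0).2 (mem_degreeLT.1 (hq j)))
    refine lt_of_le_of_lt degree_le_natDegree ?_
    have h2 : (q j ^ p ^ a).natDegree ≤ m * p ^ a := by
      rw [natDegree_pow, mul_comm]; exact Nat.mul_le_mul_right _ this
    exact_mod_cast Nat.lt_succ_of_le h2
  refine box_mono ?_ (smul_mem_box h1 (hpow _))
  have h3 : c * (j * p ^ a) ≤ c * H.natDegree * p ^ a := by
    rw [mul_assoc]; exact Nat.mul_le_mul_left _ (Nat.mul_le_mul_right _ j.2.le)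
  nlinarith

/-- Constants for the box estimates, together with the reduction of `y' ^ (N - 1)` for a second point
`y'` of the fibre: such a `y'` is a zero of the polynomial `H(x, Y') / (Y' - y)` of degree `N - 1`. -/
lemma exists_constants [IsDomain (AdjoinRoot H)] (hH : H.Monic) : ∃ (c : ℕ) (G : ℕ → AdjoinRoot H),
    (∀ a b, ∀ s ∈ box H a, ∀ t ∈ box H b, s * t ∈ box H (a + b + c)) ∧
    (∀ s, AdjoinRoot.root H ^ s ∈ box H (c * s + 1)) ∧
    (∀ i < H.natDegree - 1, G i ∈ box H c) ∧
    ∀ (φ : AdjoinRoot H →ₐ[k] k) (y : k),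
      ev k (φ (algebraMap k[X] (AdjoinRoot H) X)) y H = 0 → y ≠ φ (AdjoinRoot.root H) →
      y ^ (H.natDegree - 1) = ∑ i ∈ Finset.range (H.natDegree - 1), φ (G i) * y ^ i := by
  obtain ⟨c, hc1, hc2, hc3⟩ := exists_box_mul hH
  let H' : (AdjoinRoot H)[X] := H.map (algebraMap k[X] (AdjoinRoot H))
  have hH' : H'.Monic := hH.map _
  let G := H' /ₘ (X - C (AdjoinRoot.root H))
  have hfac : (X - C (AdjoinRoot.root H)) * G = H' :=
    mul_divByMonic_eq_iff_isRoot.2 (AdjoinRoot.isRoot_root H)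
  have hGm : G.Monic := (monic_X_sub_C _).of_mul_monic_left (hfac ▸ hH')
  have hGd : G.natDegree = H.natDegree - 1 := by
    rw [natDegree_divByMonic _ (monic_X_sub_C _), natDegree_X_sub_C, hH.natDegree_map]
  choose m hm using fun i => hc3 (-G.coeff i)
  refine ⟨c + (Finset.range (H.natDegree - 1)).sup m, fun i => -G.coeff i, ?_, ?_, ?_, ?_⟩
  · intro a b s hs t ht
    exact box_mono (by omega) (hc1 a b s hs t ht)
  · intro s
    refine box_mono ?_ (hc2 s)
    gcongr; omega
  · intro i hi
    refine box_mono ?_ (hm i)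
    exact (Finset.le_sup (f := m) (Finset.mem_range.2 hi)).trans (by omega)
  · intro φ y hy hne
    have h1 : (H'.map (φ : AdjoinRoot H →+* k)).eval y = 0 := by
      rw [← hy, map_map, eval_map, ev]
      show _ = eval₂ _ _ _
      congr 1
      refine Polynomial.ringHom_ext (fun a => ?_) (by simp)
      simp only [RingHom.comp_apply, coe_eval₂RingHom, eval₂_C]
      exact φ.commutes a
    rw [← hfac, Polynomial.map_mul, eval_mul] at h1
    have h2 : (G.map (φ : AdjoinRoot H →+* k)).eval y = 0 := by
      refine (mul_eq_zero.1 h1).resolve_left ?_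
      simpa using sub_ne_zero.2 hne
    rw [eval_map, eval₂_eq_sum_range, hGd, Finset.sum_range_succ] at h2
    have h3 : G.coeff (H.natDegree - 1) = 1 := by rw [← hGd]; exact hGm
    rw [h3, map_one, one_mul] at h2
    rw [eq_neg_of_add_eq_zero_right h2, ← Finset.sum_neg_distrib]
    refine Finset.sum_congr rfl fun i _ => ?_
    simp

/-- Stepanov's method, for the `p ^ (a + b)`-power Frobenius. Let `Z` be a set of points that Frobenius
moves to a different point of the same fibre. Elements `∑ a_o g_o ^ p ^ b`, where the `a_o` are from a
small box and have distinct orders at a fixed smooth point, are never zero, and at a point of `Z` the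
`p ^ a`-th power of such an element is a polynomial in `x`, `y` and the Frobenius image `y'` of `y`.
Since `y'` satisfies an equation of degree `N - 1` instead of `N`, there are more unknown coefficients
than conditions for its vanishing at `Z`; the zeros of the resulting element bound `Z`. -/
lemma stepanov_aux [IsAlgClosed k] [IsDomain (AdjoinRoot H)] {p : ℕ} [ExpChar k p] (hH : H.Monic)
    (hN : 1 ≤ H.natDegree) {c : ℕ} {G : ℕ → AdjoinRoot H}
    (hc : ∀ a b, ∀ s ∈ box H a, ∀ t ∈ box H b, s * t ∈ box H (a + b + c))
    (hpow : ∀ s, AdjoinRoot.root H ^ s ∈ box H (c * s + 1))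
    (hG : ∀ i < H.natDegree - 1, G i ∈ box H c)
    (hG' : ∀ (φ : AdjoinRoot H →ₐ[k] k) (y : k),
      ev k (φ (algebraMap k[X] (AdjoinRoot H) X)) y H = 0 → y ≠ φ (AdjoinRoot.root H) →
      y ^ (H.natDegree - 1) = ∑ i ∈ Finset.range (H.natDegree - 1), φ (G i) * y ^ i)
    {x0 y0 : k} (h0 : ev k x0 y0 H = 0) (h0' : ev k x0 y0 (derivative H) ≠ 0)
    (a b α β : ℕ) (hα : H.natDegree * (α + c) < p ^ b)
    (hcount : (H.natDegree - 1) * (α * p ^ a + c * H.natDegree * p ^ a + β + 2 * c)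
      < α * β * H.natDegree)
    (Z : Finset (AdjoinRoot H →ₐ[k] k))
    (hZ : ∀ φ ∈ Z, φ (algebraMap k[X] (AdjoinRoot H) X) ^ p ^ (a + b) =
        φ (algebraMap k[X] (AdjoinRoot H) X) ∧
      φ (AdjoinRoot.root H) ^ p ^ (a + b) ≠ φ (AdjoinRoot.root H) ∧
      ev k (φ (algebraMap k[X] (AdjoinRoot H) X)) (φ (AdjoinRoot.root H) ^ p ^ (a + b)) H = 0) :
    Z.card ≤ H.natDegree * (α + β * p ^ b + c * H.natDegree * p ^ b + 2 * c) := by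
  set N := H.natDegree with hNdef
  set x : AdjoinRoot H := algebraMap k[X] (AdjoinRoot H) X with hx
  set y : AdjoinRoot H := AdjoinRoot.root H with hy
  obtain ⟨ψ, hinj, hψ⟩ := exists_expansion hH h0 h0'
  obtain ⟨O, A, hOc, hO⟩ := exists_orders hH hc hinj hψ α
  have : ExpChar (AdjoinRoot H) p :=
    expChar_of_injective_algebraMap (algebraMap k (AdjoinRoot H)).injective p
  -- Pairs of distinct points of the same fibre.
  let T := {t : (AdjoinRoot H →ₐ[k] k) × k // ev k (t.1 x) t.2 H = 0 ∧ t.2 ≠ t.1 y}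
  set M := α * p ^ a + c * N * p ^ a + β + 2 * c with hM
  -- Functions on `T` of degree less than `N - 1` in the second point.
  let U : (Fin (N - 1) → box H M) →ₗ[k] (T → k) :=
    { toFun := fun s t => ∑ e, t.1.1 (s e) * t.1.2 ^ (e : ℕ)
      map_add' := fun s s' => by
        funext t; simp [add_mul, Finset.sum_add_distrib]
      map_smul' := fun s s' => by
        funext t; simp [Finset.mul_sum, mul_assoc] }
  have hU : ∀ s ∈ box H (α * p ^ a + c * N * p ^ a + β), ∀ e < N,
      (fun t : T => t.1.1 s * t.1.2 ^ e) ∈ LinearMap.range U := by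
    intro s hs e he
    by_cases he' : e < N - 1
    · refine ⟨Pi.single ⟨e, he'⟩ ⟨s, box_mono (by omega) hs⟩, ?_⟩
      funext t
      show ∑ e' : Fin (N - 1), t.1.1 ((Pi.single ⟨e, he'⟩ ⟨s, _⟩ : Fin (N - 1) → box H M) e') *
        t.1.2 ^ (e' : ℕ) = _
      rw [Finset.sum_eq_single ⟨e, he'⟩]
      · simp
      · intro e' _ hne; simp [hne]
      · simp
    · obtain rfl : e = N - 1 := by omega
      refine ⟨fun e => ⟨s * G e, box_mono (by omega) (hc _ _ _ hs _ (hG e e.2))⟩, ?_⟩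
      funext t
      show ∑ e' : Fin (N - 1), t.1.1 (s * G e') * t.1.2 ^ (e' : ℕ) = _
      rw [hG' _ _ t.2.1 t.2.2, Finset.mul_sum,
        Fin.sum_univ_eq_sum_range (fun e' => t.1.1 (s * G e') * t.1.2 ^ e')]
      refine Finset.sum_congr rfl fun i _ => ?_
      rw [map_mul, mul_assoc]
  -- The `p ^ a`-th power of the auxiliary element as a function on `T`, depending linearly on the
  -- `p ^ (a + b)`-th powers `d` of its coefficients.
  let Φ : (O × Fin β × Fin N → k) →ₗ[k] (T → k) :=
    { toFun := fun d t => ∑ i, d i * (t.1.1 (A i.1 ^ p ^ a * x ^ (i.2.1 : ℕ)) * t.1.2 ^ (i.2.2 : ℕ))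
      map_add' := fun s s' => by
        funext t; simp only [Pi.add_apply, add_mul, Finset.sum_add_distrib]
      map_smul' := fun s s' => by
        funext t; simp only [Pi.smul_apply, smul_eq_mul, Finset.mul_sum, mul_assoc, RingHom.id_apply] }
  have hΦ : ∀ d, Φ d ∈ LinearMap.range U := by
    intro d
    have : Φ d = ∑ i, d i • fun t : T => t.1.1 (A i.1 ^ p ^ a * x ^ (i.2.1 : ℕ)) * t.1.2 ^ (i.2.2 : ℕ) := by
      funext t; simp [Φ]
    rw [this]
    refine Submodule.sum_mem _ fun i _ => Submodule.smul_mem _ _ (hU _ ?_ _ i.2.2.2)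
    rw [mul_comm (A _ ^ _), hx, ← map_pow]
    have h1 := pow_char_mem_box (p := p) hpow (hO i.1 i.1.2).1 a
    have h2 : (X ^ (i.2.1 : ℕ) : k[X]) ∈ degreeLT k (i.2.1 + 1) := by
      rw [mem_degreeLT, degree_X_pow]; exact_mod_cast Nat.lt_succ_self _
    exact box_mono (by have := i.2.1.2; rw [← hNdef]; omega) (smul_mem_box h2 h1)
  obtain ⟨d, hd0, hd⟩ : ∃ d, d ≠ 0 ∧ Φ d = 0 := by
    by_contra! hcon
    have hfd : FiniteDimensional k (box H M) := by
      unfold box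
      have : FiniteDimensional k (degreeLT k M) := (degreeLTEquiv k M).symm.finiteDimensional
      infer_instance
    let Φ' : (O × Fin β × Fin N → k) →ₗ[k] LinearMap.range U := Φ.codRestrict _ hΦ
    have hinj' : Function.Injective Φ' := by
      rw [injective_iff_map_eq_zero]
      intro d hd
      by_contra h
      exact hcon d h (congrArg Subtype.val hd)
    have h1 := LinearMap.finrank_le_finrank_of_injective hinj'
    have h2 := LinearMap.finrank_range_le U
    rw [Module.finrank_pi_fintype] at h2
    simp only [finrank_box hH, Finset.sum_const, Finset.card_univ, Fintype.card_fin, smul_eq_mul] at h2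
    rw [Module.finrank_fintype_fun_eq_card] at h1
    simp only [Fintype.card_prod, Fintype.card_fin, Fintype.card_coe] at h1
    have h3 : N * α * (β * N) ≤ (N - 1) * (N * M) :=
      (Nat.mul_le_mul_right _ hOc).trans (h1.trans h2)
    have h4 : N * ((N - 1) * M) < N * (α * β * N) := Nat.mul_lt_mul_of_pos_left hcount hN
    have e1 : N * α * (β * N) = N * (α * β * N) := by ring
    have e2 : (N - 1) * (N * M) = N * ((N - 1) * M) := by ring
    omega
  have hp0 : 0 < p ^ (a + b) := pow_pos (expChar_pos k p) _
  -- `k` is perfect: the coefficients are recovered as `p ^ (a + b)`-th roots.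
  choose w hw using fun i => IsAlgClosed.exists_pow_nat_eq (d i) hp0
  let g : ℕ → AdjoinRoot H := fun o => if h : o ∈ O then
    ∑ j : Fin N, algebraMap k[X] (AdjoinRoot H) (∑ l : Fin β, C (w (⟨o, h⟩, l, j)) * X ^ (l : ℕ)) * y ^ (j : ℕ)
    else 0
  have hgbox : ∀ o, g o ∈ box H β := by
    intro o
    by_cases h : o ∈ O
    · simp only [g, dif_pos h]
      refine mem_box.2 ⟨fun j => ∑ l : Fin β, C (w (⟨o, h⟩, l, j)) * X ^ (l : ℕ), fun j => ?_, rfl⟩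
      refine Submodule.sum_mem _ fun l _ => ?_
      rw [mem_degreeLT]
      exact (degree_C_mul_X_pow_le _ _).trans_lt (by exact_mod_cast l.2)
    · simp [g, h]
  have hg0 : ∃ o ∈ O, g o ≠ 0 := by
    by_contra! hcon
    refine hd0 (funext fun ⟨⟨o, ho⟩, l, j⟩ => ?_)
    have h1 := hcon o ho
    simp only [g, dif_pos ho] at h1
    have hb := (AdjoinRoot.powerBasis' hH).basis.linearIndependent
    rw [Fintype.linearIndependent_iff] at hb
    have h2 := hb (fun j => ∑ l : Fin β, C (w (⟨o, ho⟩, l, j)) * X ^ (l : ℕ)) (by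
      rw [← h1]
      refine Finset.sum_congr rfl fun j _ => ?_
      rw [PowerBasis.basis_eq_pow, Algebra.smul_def, AdjoinRoot.powerBasis'_gen]) j
    have h3 := congrArg (fun P : k[X] => P.coeff l) h2
    simp only [finsetSum_coeff, coeff_C_mul, coeff_X_pow, coeff_zero] at h3
    rw [Finset.sum_eq_single l (fun l' _ hne => by
      rw [if_neg (fun h => hne (Fin.ext h.symm)), mul_zero]) (by simp)] at h3
    rw [if_pos rfl, mul_one] at h3
    rw [← hw, h3, zero_pow hp0.ne']; rfl
  let Ψ : AdjoinRoot H := ∑ o ∈ O, A o * g o ^ p ^ b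
  have hΨ0 : Ψ ≠ 0 := by
    intro h
    refine sum_ne_zero_of_orders (e := p ^ b) (O := O) (a := fun o => ψ (A o)) (g := fun o => ψ (g o))
      (fun o ho => (hO o ho).2.2.trans_lt hα) (fun o ho => (hO o ho).2.1) ?_ ?_
    · obtain ⟨o, ho, hgo⟩ := hg0
      exact ⟨o, ho, fun h => hgo (hinj (h.trans (map_zero _).symm))⟩
    · simpa [Ψ] using congrArg ψ h
  have hΨbox : Ψ ∈ box H (α + (β * p ^ b + c * N * p ^ b) + c) := Submodule.sum_mem _ fun o ho =>
    hc _ _ _ (hO o ho).1 _ (pow_char_mem_box hpow (hgbox o) b)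
  have hΨZ : ∀ φ ∈ Z, φ Ψ = 0 := by
    intro φ hφ
    obtain ⟨h1, h2, h3⟩ := hZ φ hφ
    refine pow_eq_zero_iff (pow_pos (expChar_pos k p) a).ne' |>.1 ?_
    have h4 := congrFun hd ⟨(φ, φ y ^ p ^ (a + b)), h3, h2⟩
    rw [Pi.zero_apply] at h4
    rw [← h4]
    simp only [Ψ, map_sum]
    rw [sum_pow_char_pow, ← Finset.sum_coe_sort O]
    show _ = ∑ i : O × Fin β × Fin N, _
    rw [Fintype.sum_prod_type]
    refine Finset.sum_congr rfl fun o _ => ?_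
    rw [map_mul, mul_pow, map_pow, ← pow_mul, mul_comm (p ^ b), ← pow_add]
    rw [Fintype.sum_prod_type_right]
    simp only [g, dif_pos o.2, map_sum, sum_pow_char_pow]
    rw [Finset.mul_sum]
    refine Finset.sum_congr rfl fun j _ => ?_
    rw [map_mul, mul_pow, map_sum, sum_pow_char_pow, Finset.sum_mul, Finset.mul_sum]
    refine Finset.sum_congr rfl fun l _ => ?_
    rw [map_mul, map_mul, mul_pow, ← algebraMap_eq, ← IsScalarTower.algebraMap_apply, AlgHom.commutes]
    simp only [map_mul, map_pow]
    rw [← hw, ← pow_mul, mul_comm (l : ℕ), pow_mul, h1, ← pow_mul (φ y), mul_comm (j : ℕ), pow_mul]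
    simp only [Algebra.algebraMap_self, RingHom.id_apply]
    ring
  refine (card_zeros_le hH hc hΨbox hΨ0 Z hΨZ).trans (Nat.mul_le_mul_left _ (by omega))
end
end Scat

/-! ### Choice of parameters -/

namespace Scat
open Polynomial
set_option linter.unusedSectionVars false

/-- Choice of the box sizes `α`, `β` in Stepanov's method, with `E ≤ E'` the two powers of `p`
whose product is the number of elements of the field. -/
lemma stepanov_params (N c : ℕ) (hN : 1 ≤ N) : ∃ C0 E1 : ℕ, ∀ E E' : ℕ, E ≤ E' → 1 ≤ E → E1 ≤ E' →
    ∃ α β : ℕ, N * (α + c) < E' ∧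
      (N - 1) * (α * E + c * N * E + β + 2 * c) < α * β * N ∧
      N * (α + β * E' + c * N * E' + 2 * c) ≤ (N - 1) * (E * E') + C0 * E' := by
  let s := 2 * (N * (2 * c * N * N + 2 * N + 1 + 2 * c) + 1)
  refine ⟨N + (s + N) + N * (c * N) + N * (2 * c), 2 * N * (c + 1) + 4 * N * N + 1, fun E E' hE hE1 hE' => ?_⟩
  let α := (E' - 1) / N - c
  let β := ((N - 1) * E + s) / N + 1
  have hα1 : N * ((E' - 1) / N) ≤ E' - 1 := Nat.mul_div_le _ _
  have hα2 : E' - 1 < N * ((E' - 1) / N) + N := by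
    have := Nat.lt_mul_div_succ (E' - 1) hN
    rwa [mul_add, mul_one] at this
  have hβ1 : N * (((N - 1) * E + s) / N) ≤ (N - 1) * E + s := Nat.mul_div_le _ _
  have hβ2 : (N - 1) * E + s < N * β := Nat.lt_mul_div_succ _ hN
  have hβ3 : N * β = N * (((N - 1) * E + s) / N) + N := by ring
  obtain ⟨n, rfl⟩ : ∃ n, N = n + 1 := ⟨N - 1, by omega⟩
  simp only [Nat.add_sub_cancel] at *
  set N := n + 1 with hNn
  have hc : c ≤ (E' - 1) / N := by
    rw [Nat.le_div_iff_mul_le hN]; nlinarith [Nat.le_sub_one_of_lt (lt_of_lt_of_le (Nat.lt_succ_self _) hE')]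
  have hαdef : α + c = (E' - 1) / N := Nat.sub_add_cancel hc
  have hαeq : N * α + N * c = N * ((E' - 1) / N) := by
    rw [← mul_add, hαdef]
  have h2α : E' ≤ 2 * (N * α) := by
    have : 2 * N * (c + 1) = 2 * (N * c) + 2 * N := by ring
    omega
  have hαN : 2 * N ≤ α := by
    have : 4 * N * N ≤ 2 * (N * α) := by
      refine le_trans ?_ h2α; omega
    nlinarith
  have hβle : β ≤ E + s + 1 := by
    have : N * β ≤ N * (E + s + 1) := by
      have e1 : N * (E + s + 1) = n * E + E + (n * s + s) + N := by rw [hNn]; ring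
      have : s ≤ n * s + s := by omega
      omega
    exact Nat.le_of_mul_le_mul_left this hN
  refine ⟨α, β, ?_, ?_, ?_⟩
  · rw [mul_add]; omega
  · -- `α * (N * β) ≥ α * (n * E + s)`, and `α * s` dominates the error terms
    have h1 : α * (n * E + s) < α * (N * β) := Nat.mul_lt_mul_of_pos_left hβ2 (by omega)
    have hE2 : E ≤ 2 * (N * α) := hE.trans h2α
    have h3 : n * (c * N * E + β + 2 * c) ≤ α * s := by
      have a1 : c * N * E + β + 2 * c ≤ α * (2 * c * N * N + 2 * N + 1 + 2 * c) + s := by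
        have : c * N * E ≤ c * N * (2 * (N * α)) := Nat.mul_le_mul_left _ hE2
        nlinarith
      have a2 : n * (c * N * E + β + 2 * c) ≤ N * (α * (2 * c * N * N + 2 * N + 1 + 2 * c) + s) :=
        Nat.mul_le_mul (by omega) a1
      have a3 : α * s = α * (N * (2 * c * N * N + 2 * N + 1 + 2 * c) + 1) +
        α * (N * (2 * c * N * N + 2 * N + 1 + 2 * c) + 1) := by simp only [s]; ring
      have a4 : N * s ≤ α * (N * (2 * c * N * N + 2 * N + 1 + 2 * c) + 1) := by
        have : N * s = 2 * N * (N * (2 * c * N * N + 2 * N + 1 + 2 * c) + 1) := by simp only [s]; ring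
        rw [this]; exact Nat.mul_le_mul_right _ hαN
      nlinarith
    calc n * (α * E + c * N * E + β + 2 * c) = α * (n * E) + n * (c * N * E + β + 2 * c) := by ring
      _ ≤ α * (n * E) + α * s := by omega
      _ = α * (n * E + s) := by ring
      _ < α * (N * β) := h1
      _ = α * β * N := by ring
  · have h1 : N * β * E' ≤ (n * E + s + N) * E' := Nat.mul_le_mul_right _ (by omega)
    have h2 : N * α ≤ N * E' := by
      refine Nat.mul_le_mul_left _ ?_
      have : (E' - 1) / N ≤ E' - 1 := Nat.div_le_self _ _
      omega
    have h3 : N * (2 * c) ≤ N * (2 * c) * E' := Nat.le_mul_of_pos_right _ (by omega)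
    nlinarith

section
variable {k : Type*} [Field k] {H : k[X][X]}

/-- At most `(N - 1) q + C0 p ^ b` of the points with `x` in the field of `q = p ^ (a + b)` elements are
moved by Frobenius. -/
lemma exists_bad_bound [IsAlgClosed k] [IsDomain (AdjoinRoot H)] {p : ℕ} [ExpChar k p] (hH : H.Monic)
    (hN : 1 ≤ H.natDegree) {x0 y0 : k} (h0 : ev k x0 y0 H = 0) (h0' : ev k x0 y0 (derivative H) ≠ 0) :
    ∃ C0 E1 : ℕ, ∀ a b : ℕ, p ^ a ≤ p ^ b → E1 ≤ p ^ b → ∀ Z : Finset (AdjoinRoot H →ₐ[k] k),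
    (∀ φ ∈ Z, φ (algebraMap k[X] (AdjoinRoot H) X) ^ p ^ (a + b) =
        φ (algebraMap k[X] (AdjoinRoot H) X) ∧
      φ (AdjoinRoot.root H) ^ p ^ (a + b) ≠ φ (AdjoinRoot.root H) ∧
      ev k (φ (algebraMap k[X] (AdjoinRoot H) X)) (φ (AdjoinRoot.root H) ^ p ^ (a + b)) H = 0) →
    Z.card ≤ (H.natDegree - 1) * p ^ (a + b) + C0 * p ^ b := by
  obtain ⟨c, G, hc, hpow, hG, hG'⟩ := exists_constants hH
  obtain ⟨C0, E1, h⟩ := stepanov_params H.natDegree c hN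
  refine ⟨C0, E1, fun a b hab hb Z hZ => ?_⟩
  obtain ⟨α, β, h1, h2, h3⟩ := h _ _ hab (Nat.one_le_iff_ne_zero.2 (pow_ne_zero _ (expChar_pos k p).ne')) hb
  have := stepanov_aux hH hN hc hpow hG hG' h0 h0' a b α β h1 h2 Z hZ
  rw [pow_add]
  exact this.trans h3
end

/-- Bezout identity over `F(x)` for `H0` and its derivative, with denominators cleared. -/
lemma exists_bezout {F : Type*} [Field F] {H0 : F[X][X]}
    (hsep : (H0.map (algebraMap F[X] (RatFunc F))).Separable) :
    ∃ (D : F[X]) (U V : F[X][X]), D ≠ 0 ∧ U * H0 + V * derivative H0 = C D := by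
  obtain ⟨u, v, huv⟩ := hsep
  have hclear : ∀ w : (RatFunc F)[X], ∃ (d : F[X]) (W : F[X][X]), d ≠ 0 ∧
      C (algebraMap F[X] (RatFunc F) d) * w = W.map (algebraMap F[X] (RatFunc F)) := by
    intro w
    obtain ⟨b, hb0, hb⟩ := IsLocalization.integerNormalization_spec (nonZeroDivisors F[X]) w
    refine ⟨b, IsLocalization.integerNormalization (nonZeroDivisors F[X]) w, nonZeroDivisors.ne_zero hb0, ?_⟩
    rw [hb]
    ext i
    rw [coeff_C_mul, coeff_smul, Algebra.smul_def]
  obtain ⟨d1, U, hd1, hU⟩ := hclear u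
  obtain ⟨d2, V, hd2, hV⟩ := hclear v
  refine ⟨d1 * d2, C d2 * U, C d1 * V, mul_ne_zero hd1 hd2, ?_⟩
  apply Polynomial.map_injective _ (IsFractionRing.injective F[X] (RatFunc F))
  rw [derivative_map] at huv
  simp only [Polynomial.map_add, Polynomial.map_mul, map_C, ← hU, ← hV, map_mul]
  linear_combination (C (algebraMap F[X] (RatFunc F) d1) * C (algebraMap F[X] (RatFunc F) d2)) * huv
end Scat

/-! ### Stepanov's bound -/

namespace Scat
open Polynomial

section
variable {F L : Type*} [Field F] [Field L] [Algebra F L]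

lemma ev_map (x y : L) (H0 : F[X][X]) :
    ev L x y (H0.map (mapRingHom (algebraMap F L))) = ev F x y H0 := by
  have : (ev L x y).comp (mapRingHom (mapRingHom (algebraMap F L))) = ev F x y := by
    ext <;> simp [ev]
  exact congrArg (fun f => f H0) this

lemma ev_eq_eval (x y : L) (H : L[X][X]) : ev L x y H = (H.map (evalRingHom x)).eval y := by
  have : (ev L x y) = (evalRingHom y).comp (mapRingHom (evalRingHom x)) := by
    ext <;> simp [ev]
  rw [this]; rfl

lemma ev_frob [Finite F] {r : ℕ} {x : L} (hx : x ^ Nat.card F ^ r = x) (y : L) (g : F[X][X]) :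
    ev F x (y ^ Nat.card F ^ r) g = ev F x y g ^ Nat.card F ^ r := by
  have := Fintype.ofFinite F
  let fr : L →ₐ[F] L := FiniteField.frobeniusAlgHom F L ^ r
  have hfr : ∀ z : L, fr z = z ^ Nat.card F ^ r := fun z => by
    rw [Nat.card_eq_fintype_card]
    simp only [fr, AlgHom.coe_pow, FiniteField.coe_frobeniusAlgHom, pow_iterate]
  have h2 : (fr : L →+* L).comp (ev F x y) = ev F x (y ^ Nat.card F ^ r) := by
    apply Polynomial.ringHom_ext
    · intro p
      simp only [RingHom.comp_apply, ev_C]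
      show fr (aeval x p) = _
      rw [← aeval_algHom_apply, hfr, hx]
    · simp only [RingHom.comp_apply, ev_X]
      exact hfr _
  rw [← h2, ← hfr]; rfl

lemma exists_point_hom {H : L[X][X]} {x y : L} (h : ev L x y H = 0) :
    ∃ φ : AdjoinRoot H →ₐ[L] L, φ (algebraMap L[X] (AdjoinRoot H) X) = x ∧
      φ (AdjoinRoot.root H) = y := by
  refine ⟨AdjoinRoot.liftAlgHom H (aeval x) y ?_, ?_, ?_⟩
  · rw [← h]; simp only [ev, coe_eval₂RingHom]; congr 1

  · rw [AdjoinRoot.algebraMap_eq]; simp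
  · simp

/-- Where the resultant-like polynomial `D` does not vanish, the fibre of the curve `H = 0` over
`x` consists of `deg H` distinct points. -/
lemma card_fibre [IsAlgClosed L] {H : L[X][X]} (hH : H.Monic) {D : L[X]} {U V : L[X][X]}
    (hD : U * H + V * derivative H = C D) {x : L} (hx : D.eval x ≠ 0) :
    (H.map (evalRingHom x)).roots.toFinset.card = H.natDegree := by
  have hs : (H.map (evalRingHom x)).Separable := by
    refine ⟨C (D.eval x)⁻¹ * U.map (evalRingHom x), C (D.eval x)⁻¹ * V.map (evalRingHom x), ?_⟩
    have := congrArg (Polynomial.map (evalRingHom x)) hD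
    simp only [Polynomial.map_add, Polynomial.map_mul, map_C, ← derivative_map, coe_evalRingHom] at this
    rw [mul_assoc, mul_assoc, ← mul_add, this, ← C_mul, inv_mul_cancel₀ hx, C_1]
  rw [Multiset.toFinset_card_of_nodup (nodup_roots hs),
    ← (IsAlgClosed.splits (H.map (evalRingHom x))).natDegree_eq_card_roots, hH.natDegree_map]

lemma card_roots_frob [Finite F] [IsAlgClosed L] (r : ℕ) (hr : 1 ≤ r) {D : F[X]} (hD : D ≠ 0) :
    ∃ S : Finset L, (∀ x ∈ S, x ^ Nat.card F ^ r = x ∧ aeval x D ≠ 0) ∧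
      Nat.card F ^ r ≤ S.card + D.natDegree := by
  have := Fintype.ofFinite F
  obtain ⟨p, hp⟩ := CharP.exists F
  have hc : CharP L p := charP_of_injective_algebraMap (algebraMap F L).injective p
  obtain ⟨e, hpp, hq⟩ := FiniteField.card F p
  have h1 : 1 < Nat.card F ^ r := Nat.one_lt_pow (by omega) Finite.one_lt_card
  have hdvd : p ∣ Nat.card F ^ r := by
    rw [Nat.card_eq_fintype_card, hq, ← pow_mul]
    exact dvd_pow_self _ (Nat.mul_ne_zero e.ne_zero (by omega))
  let A := (X ^ (Nat.card F ^ r) - X : L[X]).roots.toFinset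
  have hA : A.card = Nat.card F ^ r := by
    rw [Multiset.toFinset_card_of_nodup (nodup_roots (galois_poly_separable p _ hdvd)),
      ← (IsAlgClosed.splits _).natDegree_eq_card_roots, FiniteField.X_pow_card_sub_X_natDegree_eq _ h1]
  have hD' : D.map (algebraMap F L) ≠ 0 := (Polynomial.map_ne_zero_iff (algebraMap F L).injective).2 hD
  let B := (D.map (algebraMap F L)).roots.toFinset
  have hB : B.card ≤ D.natDegree := by
    refine (Multiset.toFinset_card_le _).trans ((card_roots' _).trans ?_)
    exact natDegree_map_le
  refine ⟨A \ B, fun x hx => ?_, ?_⟩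
  · rw [Finset.mem_sdiff, Multiset.mem_toFinset, Multiset.mem_toFinset,
      mem_roots (FiniteField.X_pow_card_sub_X_ne_zero _ h1), mem_roots hD'] at hx
    refine ⟨?_, fun h => hx.2 ?_⟩
    · have := hx.1
      simpa [IsRoot, sub_eq_zero] using this
    · rw [IsRoot, eval_map_algebraMap, h]
  · have := Finset.le_card_sdiff B A
    omega

/-- **Stepanov's bound.** A curve over `F` that is irreducible over the algebraically closed field
`L` has at least `q ^ r - C √q ^ r` points with coordinates in the field of `q ^ r` elements, even
after the zeros of a given polynomial `D` in the first coordinate are discarded. There are about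
`N q ^ r` points with `x` in that field, and Stepanov's method bounds those not fixed by Frobenius by
about `(N - 1) q ^ r`. -/
theorem stepanov [Finite F] [IsAlgClosed L] (H0 : F[X][X]) (hmonic : H0.Monic)
    (hN : 1 ≤ H0.natDegree) (hirr : Irreducible (H0.map (mapRingHom (algebraMap F L))))
    (hsep : (H0.map (algebraMap F[X] (RatFunc F))).Separable) :
    ∀ D : F[X], D ≠ 0 → ∃ C : ℝ, ∀ r, 1 ≤ r → ∃ Z : Finset (L × L),
      (∀ z ∈ Z, ev F z.1 z.2 H0 = 0 ∧ aeval z.1 D ≠ 0 ∧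
        z.1 ^ Nat.card F ^ r = z.1 ∧ z.2 ^ Nat.card F ^ r = z.2) ∧
      (Nat.card F : ℝ) ^ r - C * √(Nat.card F : ℝ) ^ r ≤ Z.card := by
  intro D hD
  have := Fintype.ofFinite F
  set H := H0.map (mapRingHom (algebraMap F L)) with hHdef
  have hH : H.Monic := hmonic.map _
  have hNH : H.natDegree = H0.natDegree := hmonic.natDegree_map _
  have hdom : IsDomain (AdjoinRoot H) := AdjoinRoot.isDomain_of_prime hirr.prime
  obtain ⟨D1, U, V, hD1, hUV⟩ := exists_bezout hsep
  have hUV' : U.map (mapRingHom (algebraMap F L)) * H + V.map (mapRingHom (algebraMap F L)) *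
      derivative H = C (D1.map (algebraMap F L)) := by
    have := congrArg (Polynomial.map (mapRingHom (algebraMap F L))) hUV
    simpa only [Polynomial.map_add, Polynomial.map_mul, map_C, ← derivative_map, coe_mapRingHom] using this
  have hfib : ∀ x : L, aeval x D1 ≠ 0 → (H.map (evalRingHom x)).roots.toFinset.card = H.natDegree :=
    fun x hx => card_fibre hH hUV' (by rwa [eval_map_algebraMap])
  have hmem : ∀ x y : L, y ∈ (H.map (evalRingHom x)).roots.toFinset ↔ ev L x y H = 0 := by
    intro x y
    rw [Multiset.mem_toFinset, mem_roots (hH.map _).ne_zero, ev_eq_eval, IsRoot]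
  obtain ⟨p, hp⟩ := CharP.exists F
  have hc : CharP L p := charP_of_injective_algebraMap (algebraMap F L).injective p
  obtain ⟨e, hpp, hq⟩ := FiniteField.card F p
  have hexp : ExpChar L p := ExpChar.prime hpp
  -- a point at which the curve is smooth over the line
  obtain ⟨x0, y0, h0, h0'⟩ : ∃ x0 y0 : L, ev L x0 y0 H = 0 ∧ ev L x0 y0 (derivative H) ≠ 0 := by
    obtain ⟨S, hS, hcard⟩ := card_roots_frob (L := L) (D1.natDegree + 1) (by omega) hD1
    have : D1.natDegree + 1 < Nat.card F ^ (D1.natDegree + 1) := Nat.lt_pow_self Finite.one_lt_card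
    obtain ⟨x0, hx0⟩ := Finset.card_pos.1 (show 0 < S.card by omega)
    have h1 := hfib x0 (hS x0 hx0).2
    obtain ⟨y0, hy0⟩ := Finset.card_pos.1 (show 0 < (H.map (evalRingHom x0)).roots.toFinset.card by omega)
    have h2 := (hmem _ _).1 hy0
    refine ⟨x0, y0, h2, fun h3 => (hS x0 hx0).2 ?_⟩
    have := congrArg (ev L x0 y0) hUV'
    rw [map_add, map_mul, map_mul, h2, h3, mul_zero, mul_zero, add_zero, ev_C] at this
    rw [← aeval_map_algebraMap L, ← this]
  obtain ⟨C0, E1, hbad⟩ := exists_bad_bound (p := p) hH (by omega) h0 h0'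
  set D2 := D * D1
  have hD2 : D2 ≠ 0 := mul_ne_zero hD hD1
  set q := Nat.card F with hqdef
  have hq2 : 1 < q := Finite.one_lt_card
  have hqp : q = p ^ (e : ℕ) := by rw [hqdef, Nat.card_eq_fintype_card, hq]
  refine ⟨H.natDegree * D2.natDegree + C0 * q + E1, fun r hr => ?_⟩
  -- `q ^ r` is split into two nearly equal powers of `p`, so that `p ^ b ≤ q √q ^ r`.
  let a := e * (r / 2)
  let b := e * (r - r / 2)
  have hR : q ^ r = p ^ (a + b) := by
    rw [hqp, ← pow_mul]; congr 1; rw [← mul_add]; congr 1; omega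
  have hab : p ^ a ≤ p ^ b := Nat.pow_le_pow_right hpp.pos (Nat.mul_le_mul_left _ (by omega))
  have hba : p ^ b ≤ q * p ^ a := by
    rw [hqp, ← pow_add]
    refine Nat.pow_le_pow_right hpp.pos ?_
    have : (e : ℕ) * (r - r / 2) ≤ e * (1 + r / 2) := Nat.mul_le_mul_left _ (by omega)
    calc b ≤ _ := this
      _ = _ := by ring
  set s : ℝ := √(q : ℝ) ^ r with hs
  have hs1 : 1 ≤ s := one_le_pow₀ (by rw [Real.one_le_sqrt]; exact_mod_cast hq2.le)
  have hs2 : s * s = (q : ℝ) ^ r := by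
    rw [hs, ← mul_pow, Real.mul_self_sqrt (Nat.cast_nonneg _)]
  have hs3 : (q : ℝ) ^ r = (p ^ a : ℕ) * (p ^ b : ℕ) := by
    rw [pow_add] at hR; exact_mod_cast hR
  have hC0 : (0 : ℝ) ≤ C0 * q := by positivity
  have hND : (0 : ℝ) ≤ H.natDegree * D2.natDegree := by positivity
  by_cases hE : E1 ≤ p ^ b
  swap
  · refine ⟨∅, by simp, ?_⟩
    have h1 : s ≤ E1 := by
      have h2 : ((p ^ b : ℕ) : ℝ) ≤ E1 := by exact_mod_cast (not_le.1 hE).le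
      have h3 : ((p ^ a : ℕ) : ℝ) ≤ (p ^ b : ℕ) := by exact_mod_cast hab
      have h4 : s ≤ (p ^ b : ℕ) := by
        apply le_of_sq_le_sq _ (Nat.cast_nonneg _)
        rw [sq, sq, hs2, hs3]
        exact mul_le_mul_of_nonneg_right h3 (Nat.cast_nonneg _)
      exact h4.trans h2
    rw [← hs2, Finset.card_empty, Nat.cast_zero]
    nlinarith
  obtain ⟨S, hS, hcard⟩ := card_roots_frob (L := L) r hr hD2
  have hS' : ∀ x ∈ S, x ^ q ^ r = x ∧ aeval x D ≠ 0 ∧ aeval x D1 ≠ 0 := fun x hx => by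
    have := hS x hx
    rw [map_mul, mul_ne_zero_iff] at this
    exact this
  -- All points of the curve over `S`, exactly `N` over each element.
  let P : Finset (Σ _ : L, L) := S.sigma fun x => (H.map (evalRingHom x)).roots.toFinset
  have hP : P.card = S.card * H.natDegree := by
    rw [Finset.card_sigma, Finset.sum_congr rfl (fun x hx => hfib x (hS' x hx).2.2), Finset.sum_const,
      smul_eq_mul]
  have hPmem : ∀ z ∈ P, z.1 ∈ S ∧ ev L z.1 z.2 H = 0 := fun z hz => by
    rw [Finset.mem_sigma, hmem] at hz; exact hz
  have hsplit := Finset.card_filter_add_card_filter_not (s := P) (fun z => z.2 ^ q ^ r = z.2)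
  set good := P.filter (fun z => z.2 ^ q ^ r = z.2)
  set bad := P.filter (fun z => ¬ z.2 ^ q ^ r = z.2)
  have hbadcard : bad.card ≤ (H.natDegree - 1) * p ^ (a + b) + C0 * p ^ b := by
    have hφ : ∀ z : bad, ∃ φ : AdjoinRoot H →ₐ[L] L, φ (algebraMap L[X] (AdjoinRoot H) X) = z.1.1 ∧
        φ (AdjoinRoot.root H) = z.1.2 := fun z =>
      exists_point_hom (hPmem z.1 (Finset.mem_filter.1 z.2).1).2
    choose φ hφ1 hφ2 using hφ
    have hinj : Function.Injective φ := fun z w h => by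
      apply Subtype.ext
      apply Sigma.ext
      · rw [← hφ1, ← hφ1, h]
      · rw [← hφ2, ← hφ2, h]
    have := hbad a b hab hE (bad.attach.image φ) ?_
    · rwa [Finset.card_image_of_injective _ hinj, Finset.card_attach] at this
    · intro ψ hψ
      obtain ⟨z, -, rfl⟩ := Finset.mem_image.1 hψ
      obtain ⟨hzP, hz⟩ := Finset.mem_filter.1 z.2
      have hx := (hS' _ (hPmem _ hzP).1).1
      rw [hφ1, hφ2, ← hR]
      refine ⟨hx, hz, ?_⟩
      rw [hHdef, ev_map, ev_frob hx, ← ev_map, ← hHdef, (hPmem _ hzP).2, zero_pow (by positivity)]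
  refine ⟨good.map (Equiv.sigmaEquivProd L L).toEmbedding, fun z hz => ?_, ?_⟩
  · obtain ⟨w, hw, rfl⟩ := Finset.mem_map.1 hz
    obtain ⟨hwP, hw2⟩ := Finset.mem_filter.1 hw
    obtain ⟨hwS, hw3⟩ := hPmem _ hwP
    refine ⟨?_, (hS' _ hwS).2.1, (hS' _ hwS).1, hw2⟩
    rw [← ev_map]; exact hw3
  · rw [Finset.card_map]
    obtain ⟨n, hn⟩ : ∃ n, H.natDegree = n + 1 := ⟨H.natDegree - 1, by omega⟩
    rw [hn] at hbadcard hP ⊢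
    rw [← hR, Nat.add_sub_cancel] at hbadcard
    have k1 : (q ^ r) * (n + 1) ≤ (S.card + D2.natDegree) * (n + 1) := Nat.mul_le_mul_right _ hcard
    have k2 : q ^ r ≤ good.card + C0 * p ^ b + (n + 1) * D2.natDegree := by
      have : (n + 1) * q ^ r = n * q ^ r + q ^ r := by ring
      nlinarith
    have k3 : (q : ℝ) ^ r ≤ good.card + C0 * (p ^ b : ℕ) + (n + 1 : ℕ) * D2.natDegree := by
      exact_mod_cast k2
    have k4 : ((p ^ b : ℕ) : ℝ) ≤ q * s := by
      apply le_of_sq_le_sq _ (by positivity)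
      have h5 : ((p ^ b : ℕ) : ℝ) ≤ q * (p ^ a : ℕ) := by exact_mod_cast hba
      have h6 : (1 : ℝ) ≤ q := by exact_mod_cast hq2.le
      calc ((p ^ b : ℕ) : ℝ) ^ 2 = (p ^ b : ℕ) * (p ^ b : ℕ) := sq _
        _ ≤ (q * (p ^ a : ℕ)) * (p ^ b : ℕ) := mul_le_mul_of_nonneg_right h5 (Nat.cast_nonneg _)
        _ = q * (s * s) := by rw [hs2, hs3]; ring
        _ ≤ q * (q * (s * s)) := by
          refine mul_le_mul_of_nonneg_left ?_ (by positivity)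
          nlinarith [mul_self_nonneg s]
        _ = (q * s) ^ 2 := by ring
    have k5 : (C0 : ℝ) * (p ^ b : ℕ) ≤ C0 * (q * s) := mul_le_mul_of_nonneg_left k4 (Nat.cast_nonneg _)
    rw [hn] at hND
    have k6 : ((n + 1 : ℕ) : ℝ) * D2.natDegree ≤ (n + 1 : ℕ) * D2.natDegree * s :=
      le_mul_of_one_le_right hND hs1
    have k7 : (0 : ℝ) ≤ E1 * s := by positivity
    nlinarith
end
end Scat

/-! ### Total degree and the top form -/

namespace Scat
open Polynomial

section
variable {K : Type*} [Field K]

/-- The substitution `(x, y) = (x, x t)`: the outer variable `Y` of `K[X][Y]` goes to `X * T`, and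
the result is a polynomial in the outer variable `X` with coefficients in `K[T]`. Its degree in `X`
is the total degree. -/
noncomputable def homog : K[X][X] →+* K[X][X] :=
  eval₂RingHom (mapRingHom C) (X * C X)

lemma homog_C (p : K[X]) : homog (C p) = p.map C := by simp [homog]
lemma homog_X : homog (X : K[X][X]) = X * C X := by simp [homog]

lemma coeff_homog (P : K[X][X]) (d j : ℕ) :
    ((homog P).coeff d).coeff j = if j ≤ d then (P.coeff j).coeff (d - j) else 0 := by
  induction P using Polynomial.induction_on' with
  | add P Q hP hQ =>
    rw [map_add, coeff_add, coeff_add, hP, hQ]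
    split_ifs <;> simp
  | monomial m p =>
    have : homog (monomial m p) = p.map C * C (X ^ m) * X ^ m := by
      rw [← C_mul_X_pow_eq_monomial, map_mul, map_pow, homog_C, homog_X, mul_pow, C_pow]; ring
    rw [this, coeff_mul_X_pow', coeff_monomial]
    by_cases hmd : m ≤ d
    · rw [if_pos hmd, coeff_mul_C, coeff_map, coeff_C_mul, coeff_X_pow]
      by_cases hj : j = m
      · subst hj; simp [hmd]
      · rw [if_neg hj, if_neg (Ne.symm hj)]; simp
    · rw [if_neg hmd]
      by_cases hj : m = j
      · subst hj; simp [hmd]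
      · rw [if_neg hj]; simp

lemma coeff_homog' (P : K[X][X]) (m j : ℕ) :
    ((homog P).coeff (m + j)).coeff j = (P.coeff j).coeff m := by
  rw [coeff_homog, if_pos (Nat.le_add_left _ _), Nat.add_sub_cancel]

lemma homog_injective : Function.Injective (homog : K[X][X] →+* K[X][X]) := by
  intro P Q h
  ext j m
  rw [← coeff_homog' P, h, coeff_homog']

lemma natDegree_coeff_add_le (P : K[X][X]) {j : ℕ} (hj : P.coeff j ≠ 0) :
    (P.coeff j).natDegree + j ≤ (homog P).natDegree := by
  apply le_natDegree_of_ne_zero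
  intro h
  have := coeff_homog' P (P.coeff j).natDegree j
  rw [h, coeff_zero] at this
  exact hj (leadingCoeff_eq_zero.1 this.symm)

lemma natDegree_le_homog (P : K[X][X]) : P.natDegree ≤ (homog P).natDegree := by
  by_cases h : P = 0
  · simp [h]
  · exact (Nat.le_add_left _ _).trans (natDegree_coeff_add_le P (j := P.natDegree)
      (leadingCoeff_ne_zero.2 h))

/-- A curve of positive degree with separable top form is separable over the line. -/
lemma derivative_ne_zero_of_homog {H : K[X][X]} (hH : H.Monic) (hN : 1 ≤ H.natDegree)
    (htd : (homog H).natDegree = H.natDegree) (hs : (homog H).leadingCoeff.Separable) :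
    derivative H ≠ 0 := by
  intro h
  have h1 : derivative (homog H).leadingCoeff = 0 := by
    ext j
    rw [coeff_derivative, leadingCoeff, coeff_homog, coeff_zero]
    split_ifs
    · have : (derivative H).coeff j = 0 := by rw [h, coeff_zero]
      rw [coeff_derivative] at this
      have h2 := congrArg (fun p => Polynomial.coeff p ((homog H).natDegree - (j + 1))) this
      simp only [coeff_zero] at h2
      rw [← h2, show ((j : K[X]) + 1) = C ((j : K) + 1) by simp, coeff_mul_C]
    · simp
  obtain ⟨u, v, huv⟩ := hs
  rw [h1, mul_zero, add_zero] at huv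
  have h2 := natDegree_eq_zero_of_isUnit (IsUnit.of_mul_eq_one_right _ huv)
  have h3 : (homog H).leadingCoeff.coeff H.natDegree = 1 := by
    have := coeff_homog' H 0 H.natDegree
    rw [zero_add] at this
    rw [leadingCoeff, htd, this, ← leadingCoeff, hH.leadingCoeff, coeff_one_zero]
  have := le_natDegree_of_ne_zero (n := H.natDegree) (h3 ▸ one_ne_zero)
  omega

/-- A zero `θ` of the top form of `G`, i.e. a point of `G` at infinity, lies on some irreducible
component `H`. -/
lemma exists_factor {G : K[X][X]} (hG : G ≠ 0) {θ : K} (h : (homog G).leadingCoeff.eval θ = 0) :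
    ∃ H M : K[X][X], G = H * M ∧ Irreducible H ∧ (homog H).leadingCoeff.eval θ = 0 := by
  revert hG h
  induction G using WfDvdMonoid.induction_on_irreducible with
  | zero => intro h; exact absurd rfl h
  | unit u hu =>
    intro _ h
    have h1 : IsUnit ((homog u).leadingCoeff.eval θ) := by
      have := ((hu.map homog).map leadingCoeffHom).map (evalRingHom θ)
      simpa using this
    exact absurd h h1.ne_zero
  | mul a i ha hi ih =>
    intro _ h
    rw [map_mul, leadingCoeff_mul, eval_mul, mul_eq_zero] at h
    rcases h with h | h
    · exact ⟨i, a, rfl, hi, h⟩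
    · obtain ⟨H, M, rfl, hH, h'⟩ := ih ha h
      exact ⟨H, i * M, by ring, hH, h'⟩
end
end Scat

/-! ### The curve of pairs with equal quotients -/

namespace Scat
open Polynomial

section
variable {K : Type*} [Field K] (p r : ℕ) [Fact p.Prime] [CharP K p]

/-- The polynomial `(T ^ q ^ j - T) / (T ^ q - T)`, where `q = p ^ r`. -/
noncomputable def brk (K : Type*) [Field K] (q j : ℕ) : K[X] :=
  ∑ h ∈ Finset.range j, (X ^ q - X) ^ (q ^ h - 1)

lemma brk_mul (j : ℕ) : brk K (p ^ r) j * (X ^ p ^ r - X) = X ^ (p ^ r) ^ j - X := by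
  have hp : 0 < p := (Fact.out : p.Prime).pos
  rw [brk, Finset.sum_mul]
  have : ∀ h ∈ Finset.range j, (X ^ p ^ r - X : K[X]) ^ ((p ^ r) ^ h - 1) * (X ^ p ^ r - X) =
      X ^ (p ^ r) ^ (h + 1) - X ^ (p ^ r) ^ h := fun h _ => by
    rw [← pow_succ, Nat.sub_add_cancel (Nat.one_le_pow _ _ (by positivity)), ← pow_mul, sub_pow_char_pow,
      ← pow_mul, ← pow_mul, ← pow_add, mul_add, mul_one, add_comm r]
  rw [Finset.sum_congr rfl this, Finset.sum_range_sub fun h => (X : K[X]) ^ (p ^ r) ^ h]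
  simp

variable (hr : r ≠ 0)
include hr

lemma brk_natDegree_monic {j : ℕ} (hj : 1 ≤ j) : (brk K (p ^ r) j).Monic ∧
    (brk K (p ^ r) j).natDegree = (p ^ r) ^ j - p ^ r := by
  have hp : 1 < p := (Fact.out : p.Prime).one_lt
  have hq : 1 < p ^ r := Nat.one_lt_pow hr hp
  have hqj : 1 < (p ^ r) ^ j := Nat.one_lt_pow (by omega) hq
  have h1 : (X ^ p ^ r - X : K[X]).Monic := monic_X_pow_sub (by rw [degree_X]; exact_mod_cast hq)
  have h2 : (X ^ (p ^ r) ^ j - X : K[X]).Monic := monic_X_pow_sub (by rw [degree_X]; exact_mod_cast hqj)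
  have h3 : (brk K (p ^ r) j).Monic := h1.of_mul_monic_right (by rw [brk_mul]; exact h2)
  refine ⟨h3, ?_⟩
  have := congrArg natDegree (brk_mul (K := K) p r j)
  rw [h3.natDegree_mul h1, FiniteField.X_pow_card_sub_X_natDegree_eq _ hq,
    FiniteField.X_pow_card_sub_X_natDegree_eq _ hqj] at this
  omega

lemma brk_separable {j : ℕ} (hj : 1 ≤ j) : (brk K (p ^ r) j).Separable := by
  have : (X ^ (p ^ r) ^ j - X : K[X]).Separable := by
    refine galois_poly_separable p _ ?_
    rw [← pow_mul]
    exact dvd_pow_self _ (Nat.mul_ne_zero hr (by omega))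
  rw [← brk_mul] at this
  exact this.of_mul_left

end

section
variable {K : Type*} [Field K]

/-- The plane curve `(f(x) y - f(y) x) / (x (x ^ (q - 1) y - y ^ q)) = 0` attached to
`f = ∑ c_j X ^ q ^ j`, `i ≤ j ≤ k`; its points off the lines through the origin with `𝔽_q`-rational
slope are the pairs `x, y` with `f(x) y = f(y) x`. -/
noncomputable def curve (q : ℕ) (c : ℕ → K) (i k : ℕ) : K[X][X] :=
  ∑ j ∈ Finset.Icc i k, C (C (c j)) * ∑ h ∈ Finset.range j,
    C (X ^ (q ^ j - q ^ (h + 1))) * (X ^ q - C (X ^ (q - 1)) * X) ^ (q ^ h - 1)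

lemma curve_map {L : Type*} [Field L] (φ : K →+* L) (q : ℕ) (c : ℕ → K) (i k : ℕ) :
    (curve q c i k).map (mapRingHom φ) = curve q (φ ∘ c) i k := by
  simp [curve, Polynomial.map_sum]

/-- In the coordinates `(x, t)` with `y = x t` the curve has only the monomials `x ^ (q ^ j - q)`. -/
lemma homog_curve {q : ℕ} (hq : 1 ≤ q) (c : ℕ → K) (i k : ℕ) :
    homog (curve q c i k) = ∑ j ∈ Finset.Icc i k, C (C (c j) * brk K q j) * X ^ (q ^ j - q) := by
  rw [curve, map_sum]
  refine Finset.sum_congr rfl fun j _ => ?_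
  rw [map_mul, homog_C, map_C, C_mul, mul_assoc]
  congr 1
  rw [map_sum, brk, map_sum, Finset.sum_mul]
  refine Finset.sum_congr rfl fun h hh => ?_
  have e1 : homog (X ^ q - C (X ^ (q - 1)) * X : K[X][X]) = X ^ q * C (X ^ q - X) := by
    obtain ⟨m, rfl⟩ : ∃ m, q = m + 1 := ⟨q - 1, by omega⟩
    simp only [map_sub, map_mul, map_pow, homog_C, homog_X, map_X, Nat.add_sub_cancel]
    ring
  have e2 : q ^ j - q = (q ^ j - q ^ (h + 1)) + q * (q ^ h - 1) := by
    have h1 : q ^ (h + 1) ≤ q ^ j := Nat.pow_le_pow_right hq (Finset.mem_range.1 hh)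
    have h2 : q * (q ^ h - 1) = q ^ (h + 1) - q := by rw [Nat.mul_sub, mul_one, pow_succ']
    have h3 : q ≤ q ^ (h + 1) := Nat.le_self_pow (by omega) q
    omega
  rw [map_mul, map_pow homog, e1, homog_C, Polynomial.map_pow, map_X, mul_pow, ← pow_mul, e2, pow_add,
    C_pow]
  ring

variable {q : ℕ} (hq : 2 ≤ q) (c : ℕ → K) {i k : ℕ}
include hq

lemma coeff_homog_curve (m : ℕ) : (homog (curve q c i k)).coeff m =
    ∑ j ∈ Finset.Icc i k, if m = q ^ j - q then C (c j) * brk K q j else 0 := by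
  rw [homog_curve (by omega), finsetSum_coeff]
  refine Finset.sum_congr rfl fun j _ => ?_
  rw [coeff_C_mul, coeff_X_pow]
  split_ifs <;> simp

lemma pow_sub_inj {j j' : ℕ} (hj : 1 ≤ j) (hj' : 1 ≤ j') (h : q ^ j - q = q ^ j' - q) : j = j' := by
  have h1 : q ≤ q ^ j := Nat.le_self_pow (by omega) q
  have h2 : q ≤ q ^ j' := Nat.le_self_pow (by omega) q
  exact Nat.pow_right_injective hq (by show q ^ j = q ^ j'; omega)

lemma coeff_homog_curve' (hi : 1 ≤ i) {j : ℕ} (hj : j ∈ Finset.Icc i k) :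
    (homog (curve q c i k)).coeff (q ^ j - q) = C (c j) * brk K q j := by
  rw [coeff_homog_curve hq c, Finset.sum_eq_single j]
  · simp
  · intro j' hj' hne
    rw [if_neg]
    intro h
    rw [Finset.mem_Icc] at hj hj'
    exact hne (pow_sub_inj hq (by omega) (by omega) h.symm)
  · intro h; exact absurd hj h

lemma natDegree_homog_curve_le : (homog (curve q c i k)).natDegree ≤ q ^ k - q := by
  rw [homog_curve (by omega)]
  refine natDegree_sum_le_of_forall_le _ _ fun j hj => ?_
  refine (natDegree_C_mul_X_pow_le _ _).trans ?_
  have := Nat.pow_le_pow_right (show 0 < q by omega) (Finset.mem_Icc.1 hj).2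
  omega

end
end Scat

/-! ### A large component -/

namespace Scat
open Polynomial

section
variable {L : Type*} [Field L] [IsAlgClosed L] (p r : ℕ) [Fact p.Prime] [CharP L p] (hr : r ≠ 0)
include hr

lemma card_roots_X_pow_sub {j : ℕ} (hj : 1 ≤ j) :
    (X ^ (p ^ r) ^ j - X : L[X]).roots.toFinset.card = (p ^ r) ^ j := by
  have hq : 1 < p ^ r := Nat.one_lt_pow hr (Fact.out : p.Prime).one_lt
  have hdvd : p ∣ (p ^ r) ^ j := by
    rw [← pow_mul]
    exact dvd_pow_self _ (Nat.mul_ne_zero hr (by omega))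
  rw [Multiset.toFinset_card_of_nodup (nodup_roots (galois_poly_separable p _ hdvd)),
    ← (IsAlgClosed.splits _).natDegree_eq_card_roots,
    FiniteField.X_pow_card_sub_X_natDegree_eq _ (Nat.one_lt_pow (by omega) hq)]

/-- The slope `θ` is an element of `𝔽_{q^k}` outside `𝔽_{q^i}`. -/
lemma exists_slope {i k : ℕ} (hi : 1 ≤ i) (hik : i < k) :
    ∃ θ : L, (brk L (p ^ r) k).eval θ = 0 ∧ (brk L (p ^ r) i).eval θ ≠ 0 := by
  have hq : 1 < p ^ r := Nat.one_lt_pow hr (Fact.out : p.Prime).one_lt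
  have hlt : (X ^ (p ^ r) ^ i - X : L[X]).roots.toFinset.card <
      (X ^ (p ^ r) ^ k - X : L[X]).roots.toFinset.card := by
    rw [card_roots_X_pow_sub p r hr hi, card_roots_X_pow_sub p r hr (by omega)]
    exact Nat.pow_lt_pow_right hq hik
  obtain ⟨θ, h1, h2⟩ := Finset.exists_mem_notMem_of_card_lt_card hlt
  have hmem : ∀ j, 1 ≤ j → (θ ∈ (X ^ (p ^ r) ^ j - X : L[X]).roots.toFinset ↔ θ ^ (p ^ r) ^ j = θ) := by
    intro j hj
    rw [Multiset.mem_toFinset, mem_roots (FiniteField.X_pow_card_sub_X_ne_zero _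
      (Nat.one_lt_pow (by omega) hq)), IsRoot, eval_sub, eval_pow, eval_X, sub_eq_zero]
  rw [hmem _ (by omega)] at h1
  rw [hmem _ hi] at h2
  have hev : ∀ j, (brk L (p ^ r) j).eval θ * (θ ^ p ^ r - θ) = θ ^ (p ^ r) ^ j - θ := by
    intro j
    have := congrArg (eval θ) (brk_mul (K := L) p r j)
    simpa using this
  refine ⟨θ, ?_, fun h => ?_⟩
  · have h3 := hev k
    rw [h1, sub_self, mul_eq_zero] at h3
    refine h3.resolve_right fun h => h2 ?_
    have h4 := hev i
    rw [h, mul_zero] at h4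
    exact (sub_eq_zero.1 h4.symm)
  · have h4 := hev i
    rw [h, zero_mul] at h4
    exact h2 (sub_eq_zero.1 h4.symm)

/-- The curve has a component of degree more than half of the total degree. It is the component
meeting the line at infinity at a slope `θ ∈ 𝔽_{q^k} \ 𝔽_{q^i}`: setting the slope equal to `θ` kills
the top coefficient but not the bottom one, so the cofactor has total degree at most
`q ^ (k - 1) - q`. -/
theorem exists_big_factor (c : ℕ → L) {i k : ℕ} (hi : 1 ≤ i) (hik : i < k) (hci : c i ≠ 0)
    (hck : c k ≠ 0) :
    ∃ H M : L[X][X], curve (p ^ r) c i k = H * M ∧ H.Monic ∧ Irreducible H ∧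
      (homog H).natDegree = H.natDegree ∧ (homog H).leadingCoeff.Separable ∧
      H.natDegree + M.natDegree = (p ^ r) ^ k - p ^ r ∧ M.natDegree < H.natDegree := by
  have hq : 1 < p ^ r := Nat.one_lt_pow hr (Fact.out : p.Prime).one_lt
  set G := curve (p ^ r) c i k with hG
  have hcoeff := coeff_homog_curve' hq c hi (j := k) (Finset.mem_Icc.2 ⟨hik.le, le_rfl⟩)
  have hcoeffi := coeff_homog_curve' hq c hi (j := i) (Finset.mem_Icc.2 ⟨le_rfl, hik.le⟩)
  have hle := natDegree_homog_curve_le hq c (i := i) (k := k)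
  rw [← hG] at hcoeff hcoeffi hle
  obtain ⟨hbm, hbd⟩ := brk_natDegree_monic (K := L) p r hr (j := k) (by omega)
  have hbs := brk_separable (K := L) p r hr (j := k) (by omega)
  set q := p ^ r with hqdef
  have hne : (homog G).coeff (q ^ k - q) ≠ 0 := by
    rw [hcoeff]; exact mul_ne_zero (C_ne_zero.2 hck) hbm.ne_zero
  have hdeg : (homog G).natDegree = q ^ k - q := le_antisymm hle (le_natDegree_of_ne_zero hne)
  have hlc : (homog G).leadingCoeff = C (c k) * brk L q k := by rw [leadingCoeff, hdeg, hcoeff]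
  have hlcs : (homog G).leadingCoeff.Separable := by
    rw [hlc]
    exact Separable.unit_mul (isUnit_C.2 hck.isUnit) hbs
  have hG0 : G ≠ 0 := by rintro h; rw [h, map_zero, coeff_zero] at hne; exact hne rfl
  have hGc : G.coeff (q ^ k - q) ≠ 0 := by
    intro h
    have := coeff_homog' G 0 (q ^ k - q)
    rw [zero_add, hcoeff, coeff_C_mul, ← hbd, ← leadingCoeff, hbm, hbd, h, coeff_zero, mul_one] at this
    exact hck this
  have hGd : G.natDegree = q ^ k - q :=
    le_antisymm ((natDegree_le_homog G).trans hle) (le_natDegree_of_ne_zero hGc)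
  have hGu : IsUnit G.leadingCoeff := by
    have h1 := natDegree_coeff_add_le G hGc
    rw [leadingCoeff, hGd]
    refine Polynomial.isUnit_iff_degree_eq_zero.2 ?_
    rw [degree_eq_natDegree hGc, show (G.coeff (q ^ k - q)).natDegree = 0 by omega]; rfl
  obtain ⟨θ, hθk, hθi⟩ := exists_slope (L := L) p r hr hi hik
  obtain ⟨H, M, hHM, hirr, hHθ⟩ := exists_factor hG0 (θ := θ) (by rw [hlc, eval_mul, hθk, mul_zero])
  have hH0 : H ≠ 0 := left_ne_zero_of_mul (hHM ▸ hG0)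
  have hM0 : M ≠ 0 := right_ne_zero_of_mul (hHM ▸ hG0)
  have hhom0 : ∀ P : L[X][X], P ≠ 0 → homog P ≠ 0 := fun P hP =>
    (map_ne_zero_iff homog homog_injective).2 hP
  have hlcHM : (homog G).leadingCoeff = (homog H).leadingCoeff * (homog M).leadingCoeff := by
    rw [hHM, map_mul, leadingCoeff_mul]
  -- `θ` is a simple zero of the top form, so it is not a zero of the top form of the cofactor.
  have hMθ : (homog M).leadingCoeff.eval θ ≠ 0 := by
    intro h
    have h1 : (derivative (homog G).leadingCoeff).eval θ = 0 := by
      rw [hlcHM, derivative_mul, eval_add, eval_mul, eval_mul, h, hHθ, mul_zero, zero_mul, add_zero]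
    have h2 := hlcs.aeval_derivative_ne_zero (x := θ) (by
      rw [coe_aeval_eq_eval, hlcHM, eval_mul, h, mul_zero])
    exact h2 (by rw [coe_aeval_eq_eval, h1])
  have hsum : (homog H).natDegree + (homog M).natDegree = q ^ k - q := by
    rw [← hdeg, hHM, map_mul, natDegree_mul (hhom0 _ hH0) (hhom0 _ hM0)]
  have hsum' : H.natDegree + M.natDegree = q ^ k - q := by
    rw [← hGd, hHM, natDegree_mul hH0 hM0]
  have hHl := natDegree_le_homog H
  have hMl := natDegree_le_homog M
  -- With the slope set to `θ`, what is left of the curve has degree at most `q ^ (k - 1) - q`.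
  have hMdeg : (homog M).natDegree ≤ q ^ (k - 1) - q := by
    rw [← natDegree_map_of_leadingCoeff_ne_zero (evalRingHom θ) hMθ]
    have h0 : (homog G).map (evalRingHom θ) ≠ 0 := by
      intro h
      have := congrArg (fun P => coeff P (q ^ i - q)) h
      simp only [coeff_map, hcoeffi, coeff_zero, coe_evalRingHom, eval_mul, eval_C] at this
      exact mul_ne_zero hci hθi this
    refine (natDegree_le_of_dvd ⟨(homog H).map (evalRingHom θ), ?_⟩ h0).trans ?_
    · rw [← Polynomial.map_mul, hHM, map_mul, mul_comm]
    · rw [natDegree_le_iff_coeff_eq_zero]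
      intro m hm
      rw [coeff_map, coeff_homog_curve hq, coe_evalRingHom, eval_finsetSum]
      refine Finset.sum_eq_zero fun j hj => ?_
      split_ifs with hmj
      · rw [Finset.mem_Icc] at hj
        have : j = k := by
          by_contra hjk
          have := Nat.pow_le_pow_right (show 0 < q by omega) (show j ≤ k - 1 by omega)
          omega
        rw [this, eval_mul, hθk, mul_zero]
      · simp
  have hMH : M.natDegree < H.natDegree := by
    have h1 : q ^ k = q * q ^ (k - 1) := by rw [← pow_succ']; congr 1; omega
    have h2 : 2 * q ^ (k - 1) ≤ q * q ^ (k - 1) := Nat.mul_le_mul_right _ hq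
    have h3 : q ≤ q ^ (k - 1) := Nat.le_self_pow (by omega) q
    omega
  -- Rescaling makes `H` monic.
  have hHu : IsUnit H.leadingCoeff := by
    rw [hHM, leadingCoeff_mul] at hGu
    exact isUnit_of_mul_isUnit_left hGu
  obtain ⟨u, hu⟩ := hHu
  have hCu : IsUnit (C (↑u⁻¹ : L[X])) := isUnit_C.2 u⁻¹.isUnit
  have hdegu : ∀ P : L[X][X], (C (↑u⁻¹ : L[X]) * P).natDegree = P.natDegree := fun P =>
    natDegree_C_mul u⁻¹.ne_zero
  have hassoc : Associated H (C (↑u⁻¹ : L[X]) * H) :=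
    (associated_unit_mul_right H _ hCu)
  have hhomu : (homog (C (↑u⁻¹ : L[X]) * H)).natDegree = (homog H).natDegree := by
    have h1 : IsUnit (homog (C (↑u⁻¹ : L[X]))) := hCu.map homog
    rw [map_mul, natDegree_mul h1.ne_zero (hhom0 _ hH0), natDegree_eq_zero_of_isUnit h1, zero_add]
  refine ⟨C (↑u⁻¹ : L[X]) * H, C (u : L[X]) * M, ?_, ?_, hassoc.irreducible hirr, ?_, ?_, ?_, ?_⟩
  · rw [mul_mul_mul_comm, ← C_mul, Units.inv_mul, C_1, one_mul, hHM]
  · rw [Monic, leadingCoeff_mul, leadingCoeff_C, ← hu, Units.inv_mul]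
  · rw [hdegu, hhomu]; omega
  · rw [map_mul, leadingCoeff_mul]
    refine Separable.unit_mul ?_ ?_
    · exact ((hCu.map homog).map leadingCoeffHom)
    · rw [hlcHM] at hlcs; exact hlcs.of_mul_left
  · rw [hdegu, natDegree_C_mul u.ne_zero]; omega
  · rw [hdegu, natDegree_C_mul u.ne_zero]; exact hMH
end
end Scat

/-! ### Descent to the ground field -/

namespace Scat
open Polynomial

section
variable {F L : Type*} [Field F] [Finite F] [Field L] [Algebra F L]

lemma mem_range_of_pow_card {z : L} (hz : z ^ Nat.card F = z) : z ∈ Set.range (algebraMap F L) := by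
  have := Fintype.ofFinite F
  have h1 : 1 < Nat.card F := Finite.one_lt_card
  have h0 := FiniteField.X_pow_card_sub_X_ne_zero L h1
  have hsub : (Finset.univ : Finset F).map ⟨algebraMap F L, (algebraMap F L).injective⟩ ⊆
      (X ^ Nat.card F - X : L[X]).roots.toFinset := by
    intro w hw
    obtain ⟨v, -, rfl⟩ := Finset.mem_map.1 hw
    rw [Multiset.mem_toFinset, mem_roots h0, IsRoot, eval_sub, eval_pow, eval_X, sub_eq_zero]
    show algebraMap F L v ^ _ = algebraMap F L v
    rw [← map_pow, Nat.card_eq_fintype_card, FiniteField.pow_card]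
  have heq := Finset.eq_of_subset_of_card_le hsub (by
    rw [Finset.card_map, Finset.card_univ, ← Nat.card_eq_fintype_card]
    refine (Multiset.toFinset_card_le _).trans ((card_roots' _).trans ?_)
    rw [FiniteField.X_pow_card_sub_X_natDegree_eq L h1])
  have hz' : z ∈ (X ^ Nat.card F - X : L[X]).roots.toFinset := by
    rw [Multiset.mem_toFinset, mem_roots h0, IsRoot, eval_sub, eval_pow, eval_X, sub_eq_zero, hz]
  rw [← heq] at hz'
  obtain ⟨v, -, hv⟩ := Finset.mem_map.1 hz'
  exact ⟨v, hv⟩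

/-- A component of more than half the degree of a curve defined over `F` is its own Frobenius
conjugate, and so is defined over `F`. -/
theorem descend {G0 : F[X][X]} {H M : L[X][X]} (hH : H.Monic) (hirr : Irreducible H)
    (hG : G0.map (mapRingHom (algebraMap F L)) = H * M) (hM0 : M ≠ 0) (hM : M.natDegree < H.natDegree) :
    ∃ H0 : F[X][X], H0.map (mapRingHom (algebraMap F L)) = H := by
  have := Fintype.ofFinite F
  let σ : L →+* L := (FiniteField.frobeniusAlgHom F L : L →ₐ[F] L)
  have hσ : ∀ z, σ z = z ^ Nat.card F := fun z => by
    rw [Nat.card_eq_fintype_card]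
    simp only [σ, RingHom.coe_coe, FiniteField.coe_frobeniusAlgHom]
  have hσF : σ.comp (algebraMap F L) = algebraMap F L := AlgHom.comp_algebraMap _
  have hGσ : (H * M).map (mapRingHom σ) = H * M := by
    rw [← hG, Polynomial.map_map, mapRingHom_comp, hσF]
  have hinj : Function.Injective (mapRingHom σ) := map_injective _ σ.injective
  have hHσ : H.map (mapRingHom σ) = H := by
    have h1 : H ∣ H.map (mapRingHom σ) * M.map (mapRingHom σ) := by
      rw [← Polynomial.map_mul, hGσ]; exact dvd_mul_right _ _
    rcases hirr.prime.dvd_or_dvd h1 with h | h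
    · exact (eq_of_monic_of_dvd_of_natDegree_le hH (hH.map _) h (hH.natDegree_map _).le)
    · have h2 := natDegree_le_of_dvd h ((Polynomial.map_ne_zero_iff hinj).2 hM0)
      have h3 : (M.map (mapRingHom σ)).natDegree ≤ M.natDegree := natDegree_map_le
      omega
  have hlift : H ∈ lifts (mapRingHom (algebraMap F L)) := by
    rw [lifts_iff_coeff_lifts]
    intro j
    have : H.coeff j ∈ lifts (algebraMap F L) := by
      rw [lifts_iff_coeff_lifts]
      intro m
      apply mem_range_of_pow_card
      rw [← hσ]
      have := congrArg (fun P => (coeff P j).coeff m) hHσ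
      simpa using this
    obtain ⟨P, hP⟩ := (mem_lifts _).1 this
    exact ⟨P, hP⟩
  exact (mem_lifts _).1 hlift
end
end Scat

/-! ### A rational point off the bad slopes -/

namespace Scat
open Polynomial

section
variable {K : Type*} [Field K]

lemma ev_curve (q : ℕ) (c : ℕ → K) (i k : ℕ) (x y : K) : ev K x y (curve q c i k) =
    ∑ j ∈ Finset.Icc i k, c j * ∑ h ∈ Finset.range j,
      x ^ (q ^ j - q ^ (h + 1)) * (y ^ q - x ^ (q - 1) * y) ^ (q ^ h - 1) := by
  simp [curve, map_sum]

/-- The defining identity of the curve. -/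
lemma mul_ev_curve (p r : ℕ) [Fact p.Prime] [CharP K p] (c : ℕ → K) (i k : ℕ) (x y : K) :
    x * (y ^ p ^ r - x ^ (p ^ r - 1) * y) * ev K x y (curve (p ^ r) c i k) =
      x * (∑ j ∈ Finset.Icc i k, c j * y ^ (p ^ r) ^ j) -
        (∑ j ∈ Finset.Icc i k, c j * x ^ (p ^ r) ^ j) * y := by
  have hp : 0 < p := (Fact.out : p.Prime).pos
  have hq : 0 < p ^ r := by positivity
  rw [ev_curve, Finset.mul_sum, Finset.mul_sum, Finset.sum_mul, ← Finset.sum_sub_distrib]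
  refine Finset.sum_congr rfl fun j _ => ?_
  set w := y ^ p ^ r - x ^ (p ^ r - 1) * y with hw
  have key : ∀ h ∈ Finset.range j, x * (w * (x ^ ((p ^ r) ^ j - (p ^ r) ^ (h + 1)) * w ^ ((p ^ r) ^ h - 1))) =
      x ^ ((p ^ r) ^ j - (p ^ r) ^ (h + 1) + 1) * y ^ (p ^ r) ^ (h + 1) -
        x ^ ((p ^ r) ^ j - (p ^ r) ^ h + 1) * y ^ (p ^ r) ^ h := by
    intro h hh
    have h1 : w * w ^ ((p ^ r) ^ h - 1) = y ^ (p ^ r) ^ (h + 1) -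
        x ^ ((p ^ r) ^ (h + 1) - (p ^ r) ^ h) * y ^ (p ^ r) ^ h := by
      rw [← pow_succ', Nat.sub_add_cancel (Nat.one_le_pow _ _ hq), hw, ← pow_mul, sub_pow_char_pow, mul_pow,
        ← pow_mul, ← pow_mul]
      have e1 : p ^ r * p ^ (r * h) = (p ^ r) ^ (h + 1) := by rw [pow_succ', ← pow_mul]
      have e2 : (p ^ r - 1) * p ^ (r * h) = (p ^ r) ^ (h + 1) - (p ^ r) ^ h := by
        rw [Nat.sub_mul, e1, one_mul, pow_mul]
      rw [e1, e2, pow_mul]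
    have h2 : (p ^ r) ^ h ≤ (p ^ r) ^ (h + 1) := Nat.pow_le_pow_right hq (by omega)
    have h3 : (p ^ r) ^ (h + 1) ≤ (p ^ r) ^ j := Nat.pow_le_pow_right hq (Finset.mem_range.1 hh)
    have h4 : (p ^ r) ^ j - (p ^ r) ^ h + 1 = ((p ^ r) ^ j - (p ^ r) ^ (h + 1)) +
      ((p ^ r) ^ (h + 1) - (p ^ r) ^ h) + 1 := by omega
    rw [mul_left_comm w, h1, h4, pow_succ, pow_succ, pow_add]
    ring
  have tel := Finset.sum_range_sub (fun h => x ^ ((p ^ r) ^ j - (p ^ r) ^ h + 1) * y ^ (p ^ r) ^ h) j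
  rw [← Finset.sum_congr rfl key, ← Finset.mul_sum, ← Finset.mul_sum, Nat.sub_self, zero_add, pow_one,
    pow_zero, pow_one, Nat.sub_add_cancel (Nat.one_le_pow _ _ hq)] at tel
  linear_combination c j * tel

/-- On the lines through the origin with `𝔽_q`-rational slope the curve only meets the zeros of `f`. -/
lemma ev_curve_of_slope {q : ℕ} (hq : 2 ≤ q) (c : ℕ → K) {i k : ℕ} (hi : 1 ≤ i) {x y : K}
    (h : y ^ q = x ^ (q - 1) * y) :
    x ^ q * ev K x y (curve q c i k) = ∑ j ∈ Finset.Icc i k, c j * x ^ q ^ j := by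
  rw [ev_curve, Finset.mul_sum]
  refine Finset.sum_congr rfl fun j hj => ?_
  have hj : 1 ≤ j := hi.trans (Finset.mem_Icc.1 hj).1
  rw [Finset.sum_eq_single 0]
  · have h1 : q ≤ q ^ j := Nat.le_self_pow (by omega) q
    rw [zero_add, pow_one, pow_zero, Nat.sub_self, pow_zero, mul_one, mul_left_comm, ← pow_add,
      Nat.add_sub_cancel' h1]
  · intro m _ hm
    have : 1 < q ^ m := Nat.one_lt_pow hm (by omega)
    rw [h, sub_self, zero_pow (by omega), mul_zero]
  · intro h0; exact absurd (Finset.mem_range.2 (by omega)) h0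
end

/-- The Hasse-Weil bound for a curve of degree `N ≤ a - 2`, with `g ≤ N (N - 1) / 2` for the
genus, leaves points over a field of `Q ≥ a ^ 4` elements outside any `a` fibres. In the application
`a = q ^ k`. -/
lemma numerics {a N B g Q : ℕ} (ha : 4 ≤ a) (hN : N + 2 ≤ a) (hN1 : 1 ≤ N) (hB : B ≤ a)
    (hg : 2 * g ≤ N * (N - 1)) (hQ : a ^ 4 ≤ Q) :
    ((B : ℝ) + 1) * N < Q + 1 - (2 * g + 1 : ℕ) * √(Q : ℝ) := by
  obtain ⟨n, rfl⟩ : ∃ n, N = n + 1 := ⟨N - 1, by omega⟩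
  obtain ⟨t, rfl⟩ : ∃ t, a = n + t + 3 := ⟨a - n - 3, by omega⟩
  have hs : (√(Q : ℝ)) * √(Q : ℝ) = Q := Real.mul_self_sqrt (Nat.cast_nonneg _)
  set s := √(Q : ℝ)
  set A : ℝ := ((n + t + 3 : ℕ) : ℝ) with hA
  have hA4 : 4 ≤ A := by rw [hA]; exact_mod_cast ha
  have hsA : A ^ 2 ≤ s := by
    apply Real.le_sqrt_of_sq_le
    rw [← pow_mul, hA]
    exact_mod_cast hQ
  have hn : (n : ℝ) ≤ A - 3 := by rw [hA]; push_cast; linarith [(Nat.cast_nonneg t : (0 : ℝ) ≤ t)]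
  have hn0 : (0 : ℝ) ≤ n := Nat.cast_nonneg _
  have hB' : (B : ℝ) ≤ A := by rw [hA]; exact_mod_cast hB
  have hg' : ((2 * g + 1 : ℕ) : ℝ) ≤ (n + 1) * n + 1 := by
    rw [Nat.add_sub_cancel] at hg
    exact_mod_cast Nat.succ_le_succ hg
  have h1 : ((2 * g + 1 : ℕ) : ℝ) ≤ A ^ 2 - 5 * A + 7 := by nlinarith
  have h2 : ((B : ℝ) + 1) * ((n + 1 : ℕ) : ℝ) ≤ (A + 1) * (A - 2) := by
    apply mul_le_mul (by linarith) _ (Nat.cast_nonneg _) (by linarith)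
    push_cast; linarith
  have h3 : 0 ≤ s := Real.sqrt_nonneg _
  have h4 : ((2 * g + 1 : ℕ) : ℝ) * s ≤ (A ^ 2 - 5 * A + 7) * s := mul_le_mul_of_nonneg_right h1 h3
  have h5 : A ^ 2 ≤ s * (s - (A ^ 2 - 5 * A + 7)) := by
    have : 1 ≤ s - (A ^ 2 - 5 * A + 7) := by nlinarith
    nlinarith
  nlinarith

/-- The theorem for `f = ∑ c_j X ^ q ^ j`, `i ≤ j ≤ k`, with arbitrary nonzero outer coefficients. -/
theorem main_aux {F : Type*} [Field F] [Finite F] (p r n : ℕ) [Fact p.Prime] [CharP F p] (hr : r ≠ 0)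
    (hF : Nat.card F = (p ^ r) ^ n) (c : ℕ → F) {i k : ℕ} (hi : 1 ≤ i) (hik : i < k) (hkn : 4 * k ≤ n)
    (hci : c i ≠ 0) (hck : c k ≠ 0) :
    ∃ x y : F, x ≠ 0 ∧ y ≠ 0 ∧ (y / x) ^ p ^ r ≠ y / x ∧
      (∑ j ∈ Finset.Icc i k, c j * x ^ (p ^ r) ^ j) * y = (∑ j ∈ Finset.Icc i k, c j * y ^ (p ^ r) ^ j) * x := by
  let L := AlgebraicClosure F
  have hL : CharP L p := charP_of_injective_algebraMap (algebraMap F L).injective p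
  have hinj : Function.Injective (algebraMap F L) := (algebraMap F L).injective
  have hinj' : Function.Injective (mapRingHom (algebraMap F L)) := map_injective _ hinj
  obtain ⟨H, M, hHM, hH, hirr, htd, hs, hsum, hlt⟩ := exists_big_factor (L := L) p r hr (algebraMap F L ∘ c)
    hi hik ((_root_.map_ne_zero _).2 hci) ((_root_.map_ne_zero _).2 hck)
  have hM0 : M ≠ 0 := by
    rintro rfl
    rw [mul_zero] at hHM
    rw [natDegree_zero, add_zero] at hsum
    have h1 := coeff_homog_curve' (Nat.one_lt_pow hr (Fact.out : p.Prime).one_lt) (algebraMap F L ∘ c) hi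
      (j := k) (Finset.mem_Icc.2 ⟨hik.le, le_rfl⟩)
    rw [hHM, map_zero, coeff_zero] at h1
    exact mul_ne_zero (C_ne_zero.2 ((_root_.map_ne_zero (algebraMap F L)).2 hck))
      (brk_natDegree_monic (K := L) p r hr (by omega)).1.ne_zero h1.symm
  rw [← curve_map] at hHM
  -- The large component is defined over `F`, and is absolutely irreducible.
  obtain ⟨H0, rfl⟩ := descend hH hirr hHM hM0 hlt
  have hH0 : H0.Monic := monic_of_injective hinj' hH
  have hN : (H0.map (mapRingHom (algebraMap F L))).natDegree = H0.natDegree := natDegree_map_eq_of_injective hinj' _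
  have hirr0 : Irreducible H0 := hH0.irreducible_of_irreducible_map _ _ hirr
  have hN1 : 1 ≤ H0.natDegree := by omega
  have hsep : (H0.map (algebraMap F[X] (RatFunc F))).Separable := by
    rw [separable_iff_derivative_ne_zero
      ((hH0.irreducible_iff_irreducible_map_fraction_map).1 hirr0), derivative_map,
      Polynomial.map_ne_zero_iff (IsFractionRing.injective F[X] (RatFunc F))]
    intro h
    refine derivative_ne_zero_of_homog hH (by omega) htd hs ?_
    rw [derivative_map, h, Polynomial.map_zero]
  have htd0 : ∀ j, H0.coeff j ≠ 0 → (H0.coeff j).natDegree + j ≤ H0.natDegree := by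
    intro j hj
    have h1 := natDegree_coeff_add_le (H0.map (mapRingHom (algebraMap F L))) (j := j) (by
      rw [coeff_map]; exact (map_ne_zero_iff _ hinj').2 hj)
    rwa [coeff_map, coe_mapRingHom, natDegree_map, htd, hN] at h1
  have hq : 2 ≤ p ^ r := Nat.one_lt_pow hr (Fact.out : p.Prime).one_lt
  -- the points above the zeros of `f` are to be avoided
  let f : F[X] := ∑ j ∈ Finset.Icc i k, C (c j) * X ^ (p ^ r) ^ j
  have hfe : ∀ x, f.eval x = ∑ j ∈ Finset.Icc i k, c j * x ^ (p ^ r) ^ j := fun x => by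
    simp [f, eval_finsetSum]
  have hfd : f.natDegree ≤ (p ^ r) ^ k := by
    refine natDegree_sum_le_of_forall_le _ _ fun j hj => (natDegree_C_mul_X_pow_le _ _).trans ?_
    exact Nat.pow_le_pow_right (by omega) (Finset.mem_Icc.1 hj).2
  have hf0 : f ≠ 0 := by
    intro h
    have h1 : f.coeff ((p ^ r) ^ k) = c k := by
      simp only [f, finsetSum_coeff, coeff_C_mul, coeff_X_pow]
      rw [Finset.sum_eq_single k]
      · simp
      · intro j _ hj
        rw [if_neg, mul_zero]
        intro h; exact hj (Nat.pow_right_injective hq h).symm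
      · intro h; exact absurd (Finset.mem_Icc.2 ⟨hik.le, le_rfl⟩) h
    rw [h, coeff_zero] at h1
    exact hck h1.symm
  have ha : 4 ≤ (p ^ r) ^ k := by
    calc 4 = 2 ^ 2 := rfl
      _ ≤ (p ^ r) ^ 2 := Nat.pow_le_pow_left hq 2
      _ ≤ (p ^ r) ^ k := Nat.pow_le_pow_right (by omega) (by omega)
  have hQ : ((p ^ r) ^ k) ^ 4 ≤ Nat.card F := by
    rw [hF, ← pow_mul]; exact Nat.pow_le_pow_right (by omega) (by omega)
  obtain ⟨x, y, hx, hxy⟩ := exists_point (Ω := L) H0 hH0 hirr0 hsep htd0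
    (stepanov H0 hH0 hN1 hirr hsep) f.roots.toFinset
    (numerics ha (by omega) hN1 ((Multiset.toFinset_card_le _).trans ((card_roots' _).trans hfd))
      (Nat.mul_div_le _ _) hQ)
  rw [Multiset.mem_toFinset, mem_roots hf0, IsRoot, hfe] at hx
  have hcurve : ev F x y (curve (p ^ r) c i k) = 0 := by
    have h1 : H0 ∣ curve (p ^ r) c i k := by
      rw [← Polynomial.map_dvd_map _ hinj' hH0, hHM]; exact dvd_mul_right _ _
    obtain ⟨T, hT⟩ := h1
    rw [hT, map_mul, hxy, zero_mul]
  have hx0 : x ≠ 0 := by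
    rintro rfl
    refine hx (Finset.sum_eq_zero fun j _ => ?_)
    rw [zero_pow (by positivity), mul_zero]
  have hslope : y ^ p ^ r ≠ x ^ (p ^ r - 1) * y := by
    intro h
    rw [← ev_curve_of_slope hq c hi h, hcurve, mul_zero] at hx
    exact hx rfl
  have hxq : x ^ p ^ r = x ^ (p ^ r - 1) * x := by
    rw [← pow_succ, Nat.sub_add_cancel (by omega)]
  refine ⟨x, y, hx0, ?_, ?_, ?_⟩
  · rintro rfl
    rw [zero_pow (by omega), mul_zero] at hslope
    exact hslope rfl
  · intro h
    apply hslope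
    rw [div_pow, div_eq_div_iff (pow_ne_zero _ hx0) hx0, hxq] at h
    exact mul_right_cancel₀ hx0 (by rw [h]; ring)
  · have h1 := mul_ev_curve p r c i k x y
    rw [hcurve, mul_zero] at h1
    linear_combination h1
end Scat

/-- under the hypotheses of Theorem 3.2 (index 0) with 4k ≤ n, there exist
nonzero x, y ∈ 𝔽_{q^n} with y/x ∉ 𝔽_q and f(x)·y = f(y)·x; in particular f is not
scattered of index 0. Membership of z in 𝔽_q is expressed as z^q = z. -/
theorem stmt_6 (p r q n i k ℓ : ℕ) (hp : p.Prime) (hr : 0 < r) (hq : q = p ^ r)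
    (hn : 0 < n) (hi : 1 ≤ i) (hik : i < k) (hiℓ : i ≤ ℓ) (hkn : 4 * k ≤ n)
    (F : Type) [Field F] [Fintype F] (hF : Fintype.card F = q ^ n)
    (α : ℕ → F) (b : F) (hb : b ≠ 0)
    (f : Polynomial F)
    (hfdef : f = Polynomial.X ^ q ^ i +
        (∑ j ∈ Finset.Ico (i + 1) k, Polynomial.C (α j) * Polynomial.X ^ q ^ j) +
        Polynomial.C b * Polynomial.X ^ q ^ k)
    (hroots : (f.map (algebraMap F (AlgebraicClosure F))).roots.toFinset.card = q ^ (ℓ - i))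
    (hcond : 1 < Nat.gcd k n ∨
        (q : ℝ) ^ (ℓ + i) + (q : ℝ) ^ ℓ - (q : ℝ) ^ (2 * i) - (q : ℝ) ^ i +
          ((q : ℝ) ^ i - (q : ℝ)) ^ 2 / 4 < 2 / 9 * ((q : ℝ) ^ k - (q : ℝ)) ^ 2) :
    (∃ x y : F, x ≠ 0 ∧ y ≠ 0 ∧ (y / x) ^ q ≠ y / x ∧
        Polynomial.eval x f * y = Polynomial.eval y f * x) ∧
      ¬ (∀ x y : F, x ≠ 0 → y ≠ 0 →
          Polynomial.eval x f * y = Polynomial.eval y f * x → (y / x) ^ q = y / x) := by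
  suffices h : ∃ x y : F, x ≠ 0 ∧ y ≠ 0 ∧ (y / x) ^ q ≠ y / x ∧
      Polynomial.eval x f * y = Polynomial.eval y f * x by
    refine ⟨h, fun h' => ?_⟩
    obtain ⟨x, y, hx, hy, hxy, he⟩ := h
    exact hxy (h' x y hx hy he)
  have : Fact p.Prime := ⟨hp⟩
  have hchar : CharP F p := by
    obtain ⟨p', hp'⟩ := CharP.exists F
    obtain ⟨e, hpp, he⟩ := FiniteField.card F p'
    have h1 : p' ∣ p ^ (r * n) := by
      rw [pow_mul, ← hq, ← hF, he]; exact dvd_pow_self _ e.ne_zero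
    rwa [← (Nat.prime_dvd_prime_iff_eq hpp hp).1 (hpp.dvd_of_dvd_pow h1)]
  let c : ℕ → F := fun j => if j = i then 1 else if j = k then b else α j
  have hfe : ∀ x, Polynomial.eval x f = ∑ j ∈ Finset.Icc i k, c j * x ^ (p ^ r) ^ j := by
    intro x
    have h1 : Finset.Icc i k = insert i (insert k (Finset.Ico (i + 1) k)) := by
      ext j; simp only [Finset.mem_Icc, Finset.mem_insert, Finset.mem_Ico]; omega
    rw [h1, Finset.sum_insert (by simp; omega), Finset.sum_insert (by simp), hfdef, ← hq]
    have h2 : ∀ j ∈ Finset.Ico (i + 1) k, c j * x ^ q ^ j = α j * x ^ q ^ j := by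
      intro j hj
      rw [Finset.mem_Ico] at hj
      simp only [c]
      rw [if_neg (by omega), if_neg (by omega)]
    rw [Finset.sum_congr rfl h2]
    simp only [Polynomial.eval_add, Polynomial.eval_pow, Polynomial.eval_X, Polynomial.eval_mul,
      Polynomial.eval_C, Polynomial.eval_finsetSum, c, if_true, if_neg hik.ne']
    ring
  obtain ⟨x, y, hx, hy, hxy, he⟩ := Scat.main_aux p r n hr.ne'
    (by rw [Nat.card_eq_fintype_card, hF, hq]) c hi hik hkn (by simp [c])
    (by simp only [c, if_neg hik.ne', if_true]; exact hb)
  exact ⟨x, y, hx, hy, by rwa [hq], by rw [hfe, hfe]; exact he⟩
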